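/- arXiv:2410.11170 — 2 statements merged into one kernel-verified Lean document; each statement's English description precedes it below -/
import Mathlib

section
/- Let R > 0, a < b with ab > 0, and let g be a smooth matrix-valued function on Ω_{a,b,R} \ {x' = 0}. Suppose (v,q) is a C^∞ solution of −Δv + ∇q = div g, div v = 0 on Ω_{a,b,R} \ {x' = 0}, satisfying v ∈ L²(Ω_{a,b,R}), ∇v, g ∈ L¹(Ω_{a,b,R}), and ( ‖∇v‖_{L²(Ω_{a,b,R} \ Ω_{a,b,ε})} + ‖q‖_{L²(Ω_{a,b,R} \ Ω_{a,b,ε})} + ‖g‖_{L²(Ω_{a,b,R} \ Ω_{a,b,ε})} ) / √|ln ε| → 0 as ε → 0⁺. Then for every φ ∈ C_c^∞(Ω_{a,b,R}; ℝ³) with div φ = 0, one has ∫_{Ω_{a,b,R}} ( ∇v·∇φ + g·∇φ ) dx = 0, and div v = 0 holds in the distributional sense on all of Ω_{a,b,R}, i.e. ∫_{Ω_{a,b,R}} v·∇ψ dx = 0 for every ψ ∈ C_c^∞(Ω_{a,b,R}). -/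
noncomputable section

open Real Filter MeasureTheory Metric Topology
open scoped ENNReal InnerProductSpace

abbrev V3 := EuclideanSpace ℝ (Fin 3)
abbrev V2 := EuclideanSpace ℝ (Fin 2)

/-- standard basis vector in `ℝ³` -/
def e3 (j : Fin 3) : V3 := EuclideanSpace.single j 1

/-- partial derivative `∂_j f` -/
def pd (j : Fin 3) (f : V3 → ℝ) (x : V3) : ℝ := fderiv ℝ f x (e3 j)

/-- Laplacian on `ℝ³` -/
def lap3 (f : V3 → ℝ) (x : V3) : ℝ := ∑ j, pd j (fun y => pd j f y) x

/-- stationary Navier–Stokes equations `-Δu + (u·∇)u + ∇p = 0`, `div u = 0` at `x` -/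
def NSEq (u : V3 → V3) (p : V3 → ℝ) (x : V3) : Prop :=
  (∀ i, - lap3 (fun z => u z i) x + (∑ j, u x j * pd j (fun z => u z i) x) + pd i p x = 0)
  ∧ (∑ j, pd j (fun z => u z j) x) = 0

/-- stationary Euler equations `(u·∇)u + ∇p = 0`, `div u = 0` at `x` -/
def EulerEq (u : V3 → V3) (p : V3 → ℝ) (x : V3) : Prop :=
  (∀ i, (∑ j, u x j * pd j (fun z => u z i) x) + pd i p x = 0)
  ∧ (∑ j, pd j (fun z => u z j) x) = 0

/-- south pole -/
def S3 : V3 := EuclideanSpace.single 2 (-1)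
/-- north pole -/
def N3 : V3 := EuclideanSpace.single 2 1

/-- the unit sphere `S²` -/
def sphere2 : Set V3 := Metric.sphere (0 : V3) 1

/-- the open cone over a subset of the unit sphere -/
def cone3 (Ω : Set V3) : Set V3 := {x : V3 | x ≠ 0 ∧ (‖x‖⁻¹ • x) ∈ Ω}

/-- `|x'| = √(x₁² + x₂²)` -/
def rho (x : V3) : ℝ := Real.sqrt ((x 0) ^ 2 + (x 1) ^ 2)

/-- the `x₃`-axis `{x' = 0}` -/
def axis3 : Set V3 := {x : V3 | x 0 = 0 ∧ x 1 = 0}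

/-- `Ω_{a,b,R} = {a < x₃ < b, |x'| < R}` -/
def OmegaR (a b R : ℝ) : Set V3 := {x : V3 | a < x 2 ∧ x 2 < b ∧ rho x < R}

/-- build a point of `ℝ³` from `x' ∈ ℝ²` and `x₃ ∈ ℝ` -/
def emb (y : V2) (t : ℝ) : V3 := (EuclideanSpace.equiv (Fin 3) ℝ).symm ![y 0, y 1, t]

/-- spherical component `u_r = u · e_r` -/
def uRc (u : V3 → V3) (x : V3) : ℝ := (u x 0 * x 0 + u x 1 * x 1 + u x 2 * x 2) / ‖x‖

/-- spherical component `u_θ = u · e_θ` -/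
def uTc (u : V3 → V3) (x : V3) : ℝ :=
  (u x 0 * x 0 * x 2 + u x 1 * x 1 * x 2) / (‖x‖ * rho x) - u x 2 * rho x / ‖x‖

/-- spherical component `u_φ = u · e_φ` -/
def uPc (u : V3 → V3) (x : V3) : ℝ := (-(u x 0) * x 1 + u x 1 * x 0) / rho x

/-- axisymmetry on a set: the spherical components are independent of the meridian angle -/
def AxisymOn (u : V3 → V3) (Ω : Set V3) : Prop :=
  ∀ x ∈ Ω, ∀ y ∈ Ω, ‖x‖ = ‖y‖ → x 2 = y 2 →
    uRc u x = uRc u y ∧ uTc u x = uTc u y ∧ uPc u x = uPc u y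

/-- spherical frame vector `e_r` -/
def eRv (x : V3) : V3 := ‖x‖⁻¹ • x

/-- spherical frame vector `e_θ` -/
def eThv (x : V3) : V3 := (EuclideanSpace.equiv (Fin 3) ℝ).symm
  ![x 2 * x 0 / (‖x‖ * rho x), x 2 * x 1 / (‖x‖ * rho x), -(rho x) / ‖x‖]

/-- spherical frame vector `e_φ` -/
def ePhv (x : V3) : V3 := (EuclideanSpace.equiv (Fin 3) ℝ).symm ![-(x 1) / rho x, x 0 / rho x, 0]

/-- the spherical cap `S² ∩ B_δ(S) \ {S}` -/
def NSCap (δ : ℝ) : Set V3 := (sphere2 ∩ Metric.ball S3 δ) \ {S3}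

/-- the spherical cap `S² ∩ B_δ(S)` -/
def NSCapFull (δ : ℝ) : Set V3 := sphere2 ∩ Metric.ball S3 δ


lemma aux_isOpen_Omega (a b R : ℝ) : IsOpen (OmegaR a b R) := by
  have h : Continuous rho := by unfold rho; fun_prop
  have h2 : Continuous (fun x : V3 => x 2) := by fun_prop
  exact (isOpen_lt continuous_const h2).inter
    ((isOpen_lt h2 continuous_const).inter (isOpen_lt h continuous_const))

lemma aux_isClosed_axis : IsClosed axis3 := by
  have h2 : ∀ i, Continuous (fun x : V3 => x i) := fun i => by fun_prop
  exact (isClosed_eq (h2 0) continuous_const).inter (isClosed_eq (h2 1) continuous_const)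

lemma aux_vol_box (s a b : ℝ) (hs : 0 ≤ s) :
    volume {x : V3 | |x 0| < s ∧ |x 1| < s ∧ a < x 2 ∧ x 2 < b}
      ≤ ENNReal.ofReal (4 * s ^ 2 * (b - a)) := by
  have hset : {x : V3 | |x 0| < s ∧ |x 1| < s ∧ a < x 2 ∧ x 2 < b}
      = (@WithLp.ofLp 2 (Fin 3 → ℝ)) ⁻¹'
        (Set.pi Set.univ fun i => Set.Ioo ((![-s, -s, a] : Fin 3 → ℝ) i) ((![s, s, b] : Fin 3 → ℝ) i)) := by
    ext x
    simp [Set.mem_pi, Fin.forall_fin_succ, abs_lt]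
  rw [hset, (PiLp.volume_preserving_ofLp (Fin 3)).measure_preimage
    (MeasurableSet.univ_pi fun i => measurableSet_Ioo).nullMeasurableSet, Real.volume_pi_Ioo]
  simp only [Fin.prod_univ_three]
  simp only [Matrix.cons_val_zero, Matrix.cons_val_one, Matrix.cons_val]
  rw [← ENNReal.ofReal_mul (by linarith), ← ENNReal.ofReal_mul (by nlinarith)]
  apply le_of_eq; congr 1; ring

lemma aux_vol_axis : volume axis3 = 0 := by
  have h : axis3 ⊆ (LinearMap.ker (EuclideanSpace.projₗ (𝕜 := ℝ) (0 : Fin 3) : V3 →ₗ[ℝ] ℝ) : Set V3) := by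
    intro x hx
    simpa using hx.1
  refine measure_mono_null h (Measure.addHaar_submodule _ _ ?_)
  intro htop
  have : (e3 0) ∈ LinearMap.ker (EuclideanSpace.projₗ (𝕜 := ℝ) (0 : Fin 3) : V3 →ₗ[ℝ] ℝ) := by
    rw [htop]; trivial
  simp [e3] at this

lemma aux_Omega_box (a b R : ℝ) :
    OmegaR a b R ⊆ {x : V3 | |x 0| < R ∧ |x 1| < R ∧ a < x 2 ∧ x 2 < b} := by
  intro x ⟨h1, h2, h3⟩
  have h0 : |x 0| ≤ rho x := by
    unfold rho; exact Real.abs_le_sqrt (by nlinarith)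
  have h1' : |x 1| ≤ rho x := by
    unfold rho; exact Real.abs_le_sqrt (by nlinarith)
  exact ⟨by linarith, by linarith, h1, h2⟩

lemma aux_lint (a b R ε : ℝ) (hR : 0 < R) (hab : a < b) (h0 : 0 < ε) (h1 : ε < 1) :
    ∫⁻ x in OmegaR a b R, ENNReal.ofReal (1 / (x 0 ^ 2 + x 1 ^ 2 + ε ^ 2))
      ≤ ENNReal.ofReal (4 * R ^ 2 * (b - a) + 8 * (b - a) * (- Real.log ε)) := by
  have hpos : ∀ x : V3, 0 < x 0 ^ 2 + x 1 ^ 2 + ε ^ 2 := fun x => by positivity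
  have hcont : Continuous (fun x : V3 => 1 / (x 0 ^ 2 + x 1 ^ 2 + ε ^ 2)) := by
    refine continuous_const.div (by fun_prop) (fun x => (hpos x).ne')
  rw [lintegral_eq_lintegral_meas_lt _ (Eventually.of_forall fun x => (by have := hpos x; positivity))
    hcont.measurable.aemeasurable]
  set T := 1 / ε ^ 2 with hT
  have hT1 : 1 ≤ T := by
    rw [hT, le_div_iff₀ (by positivity)]; nlinarith
  have hsub : Set.Ioi (0:ℝ) = Set.Ioc 0 1 ∪ (Set.Ioc 1 T ∪ Set.Ioi T) := by
    rw [Set.Ioc_union_Ioi_eq_Ioi hT1, Set.Ioc_union_Ioi_eq_Ioi zero_le_one]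
  rw [hsub]
  refine (lintegral_union_le _ _ _).trans ?_
  rw [ENNReal.ofReal_add (by nlinarith [sq_nonneg R]) (by have := Real.log_neg h0 h1; nlinarith)]
  have hmO : MeasurableSet (OmegaR a b R) := (aux_isOpen_Omega a b R).measurableSet
  gcongr
  · calc _ ≤ ∫⁻ t in Set.Ioc (0:ℝ) 1, ENNReal.ofReal (4 * R ^ 2 * (b - a)) := by
          refine lintegral_mono fun t => ?_
          refine (measure_mono (Set.subset_univ _)).trans ?_
          rw [Measure.restrict_apply_univ]
          exact (measure_mono (aux_Omega_box a b R)).trans (aux_vol_box R a b hR.le)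
      _ = _ := by simp
  · refine (lintegral_union_le _ _ _).trans ?_
    have hz : ∫⁻ t in Set.Ioi T, (volume.restrict (OmegaR a b R)) {x : V3 | t < 1 / (x 0 ^ 2 + x 1 ^ 2 + ε ^ 2)} = 0 := by
      rw [setLIntegral_congr_fun (g := fun _ => 0) measurableSet_Ioi]
      · simp
      · intro t ht
        have : {x : V3 | t < 1 / (x 0 ^ 2 + x 1 ^ 2 + ε ^ 2)} = ∅ := by
          ext x
          simp only [Set.mem_ofPred_eq, Set.mem_empty_iff_false, iff_false, not_lt]
          refine le_trans ?_ (le_of_lt ht)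
          rw [hT]
          apply one_div_le_one_div_of_le (by positivity)
          nlinarith [sq_nonneg (x 0), sq_nonneg (x 1)]
        show (volume.restrict (OmegaR a b R)) {x : V3 | t < 1 / (x 0 ^ 2 + x 1 ^ 2 + ε ^ 2)} = 0
        rw [this, measure_empty]
    rw [hz, add_zero]
    have hb : ∀ t ∈ Set.Ioc 1 T, (volume.restrict (OmegaR a b R)) {x : V3 | t < 1 / (x 0 ^ 2 + x 1 ^ 2 + ε ^ 2)}
        ≤ ENNReal.ofReal (4 * (b - a) * t⁻¹) := by
      intro t ht
      have ht0 : 0 < t := lt_trans one_pos ht.1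
      rw [Measure.restrict_apply (measurableSet_lt measurable_const hcont.measurable)]
      have := aux_vol_box (Real.sqrt t⁻¹) a b (Real.sqrt_nonneg _)
      rw [Real.sq_sqrt (by positivity)] at this
      refine (measure_mono ?_).trans (this.trans (le_of_eq (by congr 1; ring)))
      rintro x ⟨hx, hO⟩
      simp only [Set.mem_ofPred_eq] at hx
      rw [lt_div_iff₀ (hpos x)] at hx
      have h5 : x 0 ^ 2 + x 1 ^ 2 < t⁻¹ := by
        rw [← one_div, lt_div_iff₀ ht0]; nlinarith [mul_pos ht0 (pow_pos h0 2)]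
      refine ⟨?_, ?_, hO.1, hO.2.1⟩
      · rw [← Real.sqrt_sq_eq_abs]; exact Real.sqrt_lt_sqrt (sq_nonneg _) (by nlinarith [sq_nonneg (x 1)])
      · rw [← Real.sqrt_sq_eq_abs]; exact Real.sqrt_lt_sqrt (sq_nonneg _) (by nlinarith [sq_nonneg (x 0)])
    refine (setLIntegral_mono' measurableSet_Ioc hb).trans ?_
    have hcT : ContinuousOn (fun t : ℝ => 4 * (b - a) * t⁻¹) (Set.uIcc 1 T) := by
      rw [Set.uIcc_of_le hT1]
      refine continuousOn_const.mul (continuousOn_inv₀.mono ?_)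
      intro t ht; have := ht.1; simp; linarith
    rw [← ofReal_integral_eq_lintegral_ofReal]
    · apply ENNReal.ofReal_le_ofReal
      rw [← intervalIntegral.integral_of_le hT1, intervalIntegral.integral_const_mul,
        integral_inv_of_pos one_pos (by linarith)]
      rw [hT]
      simp only [div_one, one_div, Real.log_inv, Real.log_pow]
      apply le_of_eq; push_cast; ring
    · exact (hcT.intervalIntegrable).1
    · refine (ae_restrict_iff' measurableSet_Ioc).2 (Eventually.of_forall fun t ht => ?_)
      have : 0 < t := lt_trans one_pos ht.1
      have : 0 < b - a := by linarith
      simp only [Pi.zero_apply]; positivity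


def auxEta (ε : ℝ) (x : V3) : ℝ :=
  Real.smoothTransition (3 + 2 / (- Real.log ε) * Real.log (x 0 ^ 2 + x 1 ^ 2 + ε ^ 2))

lemma auxEta_contDiff (ε : ℝ) (h0 : 0 < ε) : ContDiff ℝ (⊤:ℕ∞) (auxEta ε) := by
  unfold auxEta
  refine Real.smoothTransition.contDiff.comp ?_
  refine contDiff_const.add (contDiff_const.mul (ContDiff.log ?_ fun x => ?_))
  · fun_prop
  · positivity

lemma auxEta_zero (ε : ℝ) (h0 : 0 < ε) (h1 : ε ≤ 1 / 4) (x : V3) (hx : x 0 ^ 2 + x 1 ^ 2 < ε ^ 2) :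
    auxEta ε x = 0 := by
  unfold auxEta
  apply Real.smoothTransition.zero_of_nonpos
  have hL : Real.log ε ≤ - (2 * Real.log 2) := by
    have := Real.log_le_log h0 h1
    rwa [show (1:ℝ) / 4 = (2 ^ 2)⁻¹ by norm_num, Real.log_inv, Real.log_pow] at this
  have h2 : 0 < Real.log 2 := Real.log_pos (by norm_num)
  have h3 : Real.log (x 0 ^ 2 + x 1 ^ 2 + ε ^ 2) ≤ Real.log 2 + 2 * Real.log ε := by
    have : Real.log 2 + 2 * Real.log ε = Real.log (2 * ε ^ 2) := by
      rw [Real.log_mul (by norm_num) (by positivity), Real.log_pow]; norm_num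
    rw [this]
    exact Real.log_le_log (by positivity) (by linarith)
  set L := - Real.log ε with hLdef
  have hLp : 0 < L := by linarith
  have h4 : 2 / L * Real.log (x 0 ^ 2 + x 1 ^ 2 + ε ^ 2) ≤ 2 / L * (-(3/2) * L) := by
    apply mul_le_mul_of_nonneg_left _ (by positivity)
    linarith
  have h5 : 2 / L * (-(3/2) * L) = -3 := by field_simp
  linarith

lemma auxEta_nonneg (ε : ℝ) (x : V3) : 0 ≤ auxEta ε x := Real.smoothTransition.nonneg _
lemma auxEta_le_one (ε : ℝ) (x : V3) : auxEta ε x ≤ 1 := Real.smoothTransition.le_one _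

lemma auxEta_tsupport (ε : ℝ) (h0 : 0 < ε) (h1 : ε ≤ 1 / 4) :
    tsupport (auxEta ε) ⊆ {x : V3 | ε ^ 2 ≤ x 0 ^ 2 + x 1 ^ 2} := by
  refine closure_minimal ?_ (isClosed_le continuous_const (by fun_prop))
  intro x hx
  by_contra h
  exact hx (auxEta_zero ε h0 h1 x (not_le.1 h))

lemma auxEta_pd_zero (ε : ℝ) (h0 : 0 < ε) (h1 : ε ≤ 1 / 4) (j : Fin 3) (x : V3)
    (hx : x 0 ^ 2 + x 1 ^ 2 < ε ^ 2) : pd j (auxEta ε) x = 0 := by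
  unfold pd
  rw [fderiv_of_notMem_tsupport]
  · simp
  · intro h; exact absurd (auxEta_tsupport ε h0 h1 h) (not_le.2 hx)

lemma aux_S_bound : ∃ C : ℝ, 0 ≤ C ∧ ∀ s, |deriv Real.smoothTransition s| ≤ C := by
  have hc : Continuous (deriv Real.smoothTransition) :=
    (Real.smoothTransition.contDiff (n := 1)).continuous_deriv le_rfl
  obtain ⟨C, hC⟩ := (isCompact_Icc (a := (0:ℝ)) (b := 1)).exists_bound_of_continuousOn hc.continuousOn
  refine ⟨C, (norm_nonneg _).trans (hC 0 (by simp)), fun s => ?_⟩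
  have hC0 := (norm_nonneg _).trans (hC 0 (by simp))
  rcases lt_or_ge s 0 with h | h
  · have : Real.smoothTransition =ᶠ[𝓝 s] fun _ => 0 := by
      filter_upwards [Iio_mem_nhds h] with y hy using Real.smoothTransition.zero_of_nonpos (le_of_lt hy)
    rw [this.deriv_eq]; simpa using hC0
  rcases lt_or_ge 1 s with h' | h'
  · have : Real.smoothTransition =ᶠ[𝓝 s] fun _ => 1 := by
      filter_upwards [Ioi_mem_nhds h'] with y hy using Real.smoothTransition.one_of_one_le (le_of_lt hy)
    rw [this.deriv_eq]; simpa using hC0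
  · exact hC s ⟨h, h'⟩

lemma auxEta_pd_bound : ∃ C : ℝ, 0 ≤ C ∧ ∀ ε : ℝ, 0 < ε → ε ≤ 1 / 4 → ∀ j x,
    (pd j (auxEta ε) x) ^ 2 ≤ C / (- Real.log ε) ^ 2 * (1 / (x 0 ^ 2 + x 1 ^ 2 + ε ^ 2)) := by
  obtain ⟨C, hC0, hC⟩ := aux_S_bound
  refine ⟨16 * C ^ 2, by positivity, fun ε h0 h1 j x => ?_⟩
  set s := x 0 ^ 2 + x 1 ^ 2 + ε ^ 2 with hs
  have hspos : 0 < s := by positivity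
  have hp : ∀ i : Fin 3, HasFDerivAt (fun y : V3 => y i) (EuclideanSpace.proj (𝕜 := ℝ) i : V3 →L[ℝ] ℝ) x :=
    fun i => (EuclideanSpace.proj (𝕜 := ℝ) i : V3 →L[ℝ] ℝ).hasFDerivAt
  have hd := (((hp 0).pow 2).add ((hp 1).pow 2)).add_const (ε ^ 2)
  have hlog := hd.log (by exact hspos.ne')
  have harg := (hlog.const_mul (2 / (- Real.log ε))).const_add 3
  have hS : HasDerivAt Real.smoothTransition
      (deriv Real.smoothTransition (3 + 2 / (- Real.log ε) * Real.log s)) (3 + 2 / (- Real.log ε) * Real.log s) :=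
    ((Real.smoothTransition.contDiff (n := 1)).differentiable one_ne_zero _).hasDerivAt
  have hfin := hS.comp_hasFDerivAt x harg
  have hD : pd j (auxEta ε) x = deriv Real.smoothTransition (3 + 2 / (- Real.log ε) * Real.log s) *
      (2 / (- Real.log ε) * (s⁻¹ * (2 * x 0 * (e3 j) 0 + 2 * x 1 * (e3 j) 1))) := by
    have hfin' : HasFDerivAt (auxEta ε) _ x := hfin
    unfold pd
    rw [hfin'.fderiv]
    simp [hs]
    ring
  rw [hD]
  set D := deriv Real.smoothTransition (3 + 2 / (- Real.log ε) * Real.log s) with hDd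
  have hD2 : D ^ 2 ≤ C ^ 2 := by
    rw [← sq_abs]; exact pow_le_pow_left₀ (abs_nonneg _) (hC _) 2
  have hE : (2 * x 0 * (e3 j) 0 + 2 * x 1 * (e3 j) 1) ^ 2 ≤ 4 * s := by
    have : 0 < ε ^ 2 := by positivity
    fin_cases j <;> simp [e3, hs] <;> nlinarith [sq_nonneg (x 0), sq_nonneg (x 1)]
  set E := (2 * x 0 * (e3 j) 0 + 2 * x 1 * (e3 j) 1)
  set L := - Real.log ε
  have hL2 : 0 ≤ (4 / L ^ 2) * (s⁻¹) ^ 2 := by positivity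
  calc (D * (2 / L * (s⁻¹ * E))) ^ 2 = (4 / L ^ 2) * (s⁻¹) ^ 2 * (D ^ 2 * E ^ 2) := by ring
    _ ≤ (4 / L ^ 2) * (s⁻¹) ^ 2 * (C ^ 2 * (4 * s)) := by gcongr
    _ = _ := by field_simp; ring

lemma auxEta_tendsto (x : V3) (hx : x ∉ axis3) :
    ∀ᶠ ε in 𝓝[>] (0:ℝ), auxEta ε x = 1 := by
  have hr : 0 < x 0 ^ 2 + x 1 ^ 2 := by
    by_contra h
    apply hx
    constructor <;> nlinarith [sq_nonneg (x 0), sq_nonneg (x 1)]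
  have hlog : Tendsto (fun ε => - Real.log ε) (𝓝[>] (0:ℝ)) atTop :=
    tendsto_neg_atBot_atTop.comp Real.tendsto_log_nhdsGT_zero
  filter_upwards [hlog.eventually_ge_atTop (max 1 |Real.log (x 0 ^ 2 + x 1 ^ 2)|), self_mem_nhdsWithin] with ε hε h0
  unfold auxEta
  apply Real.smoothTransition.one_of_one_le
  set L := - Real.log ε
  have hL1 : 1 ≤ L := (le_max_left _ _).trans hε
  have hL2 := (le_max_right _ _).trans hε
  have h3 : -L ≤ Real.log (x 0 ^ 2 + x 1 ^ 2 + ε ^ 2) := by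
    have : Real.log (x 0 ^ 2 + x 1 ^ 2) ≤ Real.log (x 0 ^ 2 + x 1 ^ 2 + ε ^ 2) :=
      Real.log_le_log hr (by nlinarith [sq_nonneg ε])
    have := neg_abs_le (Real.log (x 0 ^ 2 + x 1 ^ 2))
    linarith
  have h4 : 2 / L * (-L) ≤ 2 / L * Real.log (x 0 ^ 2 + x 1 ^ 2 + ε ^ 2) :=
    mul_le_mul_of_nonneg_left h3 (by positivity)
  have h5 : 2 / L * (-L) = -2 := by field_simp
  linarith


lemma aux_grad (a b R : ℝ) (hR : 0 < R) (hab : a < b) : ∃ C : ℝ, 0 ≤ C ∧ ∀ ε : ℝ, 0 < ε → ε ≤ 1 / 4 →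
    ∃ P : V3 → ℝ, Continuous P ∧ (∀ x, 0 ≤ P x) ∧ (∀ j x, |pd j (auxEta ε) x| ≤ P x) ∧
      ∫⁻ x in OmegaR a b R, ENNReal.ofReal (P x ^ 2) ≤ ENNReal.ofReal (C / (- Real.log ε)) := by
  obtain ⟨C, hC0, hC⟩ := auxEta_pd_bound
  have hba : 0 < b - a := by linarith
  refine ⟨C * (4 * R ^ 2 * (b - a) + 8 * (b - a)), by positivity, fun ε h0 h1 => ?_⟩
  have hL1 : 1 ≤ - Real.log ε := by
    have := Real.log_le_log h0 h1
    rw [show (1:ℝ) / 4 = (2 ^ 2)⁻¹ by norm_num, Real.log_inv, Real.log_pow] at this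
    have h2 := Real.log_two_gt_d9
    push_cast at this
    linarith
  set L := - Real.log ε with hL
  have hpos : ∀ x : V3, 0 < x 0 ^ 2 + x 1 ^ 2 + ε ^ 2 := fun x => by positivity
  have hcont : Continuous (fun x : V3 => 1 / (x 0 ^ 2 + x 1 ^ 2 + ε ^ 2)) :=
    continuous_const.div (by fun_prop) (fun x => (hpos x).ne')
  have hnn : ∀ x : V3, 0 ≤ C / L ^ 2 * (1 / (x 0 ^ 2 + x 1 ^ 2 + ε ^ 2)) := fun x => by
    have := hpos x; positivity
  refine ⟨fun x => Real.sqrt (C / L ^ 2 * (1 / (x 0 ^ 2 + x 1 ^ 2 + ε ^ 2))),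
    (continuous_const.mul hcont).sqrt, fun x => Real.sqrt_nonneg _,
    fun j x => Real.abs_le_sqrt (hC ε h0 h1 j x), ?_⟩
  have : ∀ x : V3, ENNReal.ofReal (Real.sqrt (C / L ^ 2 * (1 / (x 0 ^ 2 + x 1 ^ 2 + ε ^ 2))) ^ 2)
      = ENNReal.ofReal (C / L ^ 2) * ENNReal.ofReal (1 / (x 0 ^ 2 + x 1 ^ 2 + ε ^ 2)) := fun x => by
    rw [Real.sq_sqrt (hnn x), ENNReal.ofReal_mul (by positivity)]
  simp_rw [this]
  rw [lintegral_const_mul' _ _ ENNReal.ofReal_ne_top]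
  refine (mul_le_mul_right (aux_lint a b R ε hR hab h0 (by linarith)) _).trans ?_
  rw [← ENNReal.ofReal_mul (by positivity)]
  apply ENNReal.ofReal_le_ofReal
  rw [← hL]
  have hLp : 0 < L := by linarith
  calc C / L ^ 2 * (4 * R ^ 2 * (b - a) + 8 * (b - a) * L)
      ≤ C / L ^ 2 * ((4 * R ^ 2 * (b - a)) * L + 8 * (b - a) * L) := by
        have : 4 * R ^ 2 * (b - a) ≤ 4 * R ^ 2 * (b - a) * L :=
          le_mul_of_one_le_right (by positivity) hL1
        apply mul_le_mul_of_nonneg_left _ (by positivity)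
        linarith
    _ = _ := by field_simp

lemma aux_CS {E : Type*} [NormedAddCommGroup E] (μ : Measure V3) (f : V3 → E) (P : V3 → ℝ)
    (hf : AEStronglyMeasurable f μ) (hf2 : eLpNorm f 2 μ ≠ ⊤) (hP : Continuous P) (hP0 : ∀ x, 0 ≤ P x)
    (M : ℝ) (hPM : ∫⁻ x, ENNReal.ofReal (P x ^ 2) ∂μ ≤ ENNReal.ofReal M) :
    Integrable (fun x => ‖f x‖ * P x) μ ∧
    ∫ x, ‖f x‖ * P x ∂μ ≤ (eLpNorm f 2 μ).toReal * Real.sqrt M := by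
  have hh : ∫⁻ x, ‖‖f x‖ * P x‖ₑ ∂μ ≤ eLpNorm f 2 μ * ENNReal.ofReal (Real.sqrt M) := by
    have h1 := ENNReal.lintegral_mul_le_Lp_mul_Lq μ (p := 2) (q := 2) Real.HolderConjugate.two_two
      (f := fun x => ‖f x‖ₑ) (g := fun x => ‖P x‖ₑ) hf.enorm hP.measurable.enorm.aemeasurable
    have h2 : ∀ x, ‖‖f x‖ * P x‖ₑ = ((fun x => ‖f x‖ₑ) * (fun x => ‖P x‖ₑ)) x := fun x => by
      simp [enorm_mul]
    simp_rw [h2]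
    refine h1.trans ?_
    have h3 : eLpNorm f 2 μ = (∫⁻ a, ‖f a‖ₑ ^ (2:ℝ) ∂μ) ^ (1 / (2:ℝ)) := by
      rw [eLpNorm_eq_lintegral_rpow_enorm_toReal (by norm_num) (by norm_num)]; simp
    rw [h3]
    gcongr
    rw [Real.sqrt_eq_rpow]
    have h4 : ∀ x, ‖P x‖ₑ ^ (2:ℝ) = ENNReal.ofReal (P x ^ 2) := fun x => by
      rw [Real.enorm_eq_ofReal (hP0 x), ENNReal.ofReal_rpow_of_nonneg (hP0 x) (by norm_num)]
      norm_num
    simp_rw [h4]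
    rcases le_or_gt 0 M with hM | hM
    · rw [← ENNReal.ofReal_rpow_of_nonneg hM (by norm_num)]
      exact ENNReal.rpow_le_rpow hPM (by norm_num)
    · rw [ENNReal.ofReal_of_nonpos hM.le] at hPM
      rw [nonpos_iff_eq_zero.1 hPM]; simp
  have hlt : eLpNorm f 2 μ * ENNReal.ofReal (Real.sqrt M) < ⊤ :=
    ENNReal.mul_lt_top (lt_top_iff_ne_top.2 hf2) ENNReal.ofReal_lt_top
  have hm : AEStronglyMeasurable (fun x => ‖f x‖ * P x) μ := hf.norm.mul hP.aestronglyMeasurable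
  refine ⟨⟨hm, lt_of_le_of_lt hh hlt⟩, ?_⟩
  have h5 : (eLpNorm f 2 μ).toReal * Real.sqrt M = (eLpNorm f 2 μ * ENNReal.ofReal (Real.sqrt M)).toReal := by
    rw [ENNReal.toReal_mul, ENNReal.toReal_ofReal (Real.sqrt_nonneg _)]
  rw [h5, integral_eq_lintegral_of_nonneg_ae (Eventually.of_forall fun x => mul_nonneg (norm_nonneg _) (hP0 x)) hm]
  apply ENNReal.toReal_mono hlt.ne
  refine le_trans (lintegral_mono fun x => ?_) hh
  rw [Real.enorm_eq_ofReal (mul_nonneg (norm_nonneg _) (hP0 x))]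

lemma aux_integrable (K U : Set V3) (hK : IsCompact K) (hKU : K ⊆ U) (h : V3 → ℝ)
    (hh : ContinuousOn h U) (w : V3 → ℝ) (hw : Continuous w) (hwK : ∀ x ∉ K, w x = 0) :
    Integrable (fun x => w x * h x) := by
  have h1 : IntegrableOn (fun x => w x * h x) K :=
    (hw.continuousOn.mul (hh.mono hKU)).integrableOn_compact hK
  refine (integrableOn_iff_integrable_of_support_subset ?_).1 h1
  intro x hx
  by_contra hxK
  exact hx (by simp [hwK x hxK])

lemma aux_pd_zero (j : Fin 3) (w : V3 → ℝ) (x : V3) (hx : x ∉ tsupport w) : pd j w x = 0 := by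
  unfold pd; rw [fderiv_of_notMem_tsupport (𝕜 := ℝ) hx]; simp

lemma aux_pd_cont (j : Fin 3) (w : V3 → ℝ) (hw : ContDiff ℝ (⊤:ℕ∞) w) : Continuous (pd j w) := by
  unfold pd
  exact (hw.continuous_fderiv (by simp)).clm_apply continuous_const

lemma aux_pd_contDiffOn (j : Fin 3) (U : Set V3) (hU : IsOpen U) (w : V3 → ℝ)
    (hw : ContDiffOn ℝ (⊤:ℕ∞) w U) : ContDiffOn ℝ (⊤:ℕ∞) (pd j w) U := by
  unfold pd
  exact (hw.fderiv_of_isOpen hU (by simp)).clm_apply contDiffOn_const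

lemma aux_weak (U : Set V3) (hU : IsOpen U) (F : Fin 3 → V3 → ℝ)
    (hF : ∀ j, ContDiffOn ℝ (⊤:ℕ∞) (F j) U) (hdiv : ∀ x ∈ U, ∑ j, pd j (F j) x = 0)
    (w : V3 → ℝ) (hw : ContDiff ℝ (⊤:ℕ∞) w) (hwc : HasCompactSupport w) (hwU : tsupport w ⊆ U) :
    Integrable (fun x => ∑ j, F j x * pd j w x) ∧ ∫ x, ∑ j, F j x * pd j w x = 0 := by
  have i1 : ∀ j, Integrable (fun x => F j x * pd j w x) := fun j => by
    have := aux_integrable (tsupport w) U hwc hwU (F j) (hF j).continuousOn (pd j w)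
      (aux_pd_cont j w hw) (fun x hx => aux_pd_zero j w x hx)
    simpa only [mul_comm] using this
  have i2 : ∀ j, Integrable (fun x => pd j (F j) x * w x) := fun j => by
    have := aux_integrable (tsupport w) U hwc hwU (pd j (F j)) (aux_pd_contDiffOn j U hU _ (hF j)).continuousOn w
      hw.continuous (fun x hx => image_eq_zero_of_notMem_tsupport hx)
    simpa only [mul_comm] using this
  have i3 : ∀ j, Integrable (fun x => F j x * w x) := fun j => by
    have := aux_integrable (tsupport w) U hwc hwU (F j) (hF j).continuousOn w
      hw.continuous (fun x hx => image_eq_zero_of_notMem_tsupport hx)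
    simpa only [mul_comm] using this
  refine ⟨integrable_finsetSum _ fun j _ => i1 j, ?_⟩
  rw [integral_finsetSum _ fun j _ => i1 j]
  have hibp : ∀ j, ∫ x, F j x * pd j w x = - ∫ x, pd j (F j) x * w x := fun j => by
    refine integral_mul_fderiv_eq_neg_fderiv_mul_of_integrable (i2 j) (i1 j) (i3 j) ?_ ?_
    · intro x hx
      exact (((hF j) x (hwU hx)).contDiffAt (hU.mem_nhds (hwU hx))).differentiableAt (by simp)
    · intro x _
      exact hw.differentiable (by simp) x
  simp_rw [hibp]
  rw [Finset.sum_neg_distrib, ← integral_finsetSum _ fun j _ => i2 j]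
  have : ∀ x, ∑ j, pd j (F j) x * w x = 0 := fun x => by
    rw [← Finset.sum_mul]
    by_cases hx : x ∈ tsupport w
    · rw [hdiv x (hwU hx), zero_mul]
    · rw [image_eq_zero_of_notMem_tsupport hx, mul_zero]
  simp [this]

lemma aux_final (Ω : Set V3) (A : V3 → ℝ) (B : ℝ → V3 → ℝ) (N : ℝ → ℝ)
    (hA : IntegrableOn A Ω) 
    (hB : ∀ᶠ ε in 𝓝[>] (0:ℝ), IntegrableOn (B ε) Ω ∧ |∫ x in Ω, B ε x| ≤ N ε)
    (hN : Tendsto N (𝓝[>] (0:ℝ)) (𝓝 0))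
    (h : ∀ᶠ ε in 𝓝[>] (0:ℝ), ∫ x in Ω, (auxEta ε x * A x + B ε x) = 0) :
    ∫ x in Ω, A x = 0 := by
  have hmem : ∀ᶠ ε in 𝓝[>] (0:ℝ), 0 < ε := self_mem_nhdsWithin
  have hae : ∀ᵐ x ∂(volume.restrict Ω), x ∉ axis3 :=
    ae_restrict_of_ae (measure_eq_zero_iff_ae_notMem.1 aux_vol_axis)
  have hm : ∀ᶠ ε in 𝓝[>] (0:ℝ), AEStronglyMeasurable (fun x => auxEta ε x * A x) (volume.restrict Ω) := by
    filter_upwards [hmem] with ε h0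
    exact (auxEta_contDiff ε h0).continuous.aestronglyMeasurable.mul hA.aestronglyMeasurable
  have hb : ∀ ε x, ‖auxEta ε x * A x‖ ≤ ‖A x‖ := fun ε x => by
    rw [norm_mul]
    refine mul_le_of_le_one_left (norm_nonneg _) ?_
    rw [Real.norm_of_nonneg (auxEta_nonneg ε x)]; exact auxEta_le_one ε x
  have hT : Tendsto (fun ε => ∫ x in Ω, auxEta ε x * A x) (𝓝[>] (0:ℝ)) (𝓝 (∫ x in Ω, A x)) := by
    refine tendsto_integral_filter_of_dominated_convergence (fun x => ‖A x‖) hm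
      (Eventually.of_forall fun ε => Eventually.of_forall fun x => hb ε x) hA.norm ?_
    filter_upwards [hae] with x hx
    refine Tendsto.congr' ?_ tendsto_const_nhds
    filter_upwards [auxEta_tendsto x hx] with ε hε
    rw [hε, one_mul]
  have hT0 : Tendsto (fun ε => ∫ x in Ω, auxEta ε x * A x) (𝓝[>] (0:ℝ)) (𝓝 0) := by
    refine squeeze_zero_norm' ?_ hN
    filter_upwards [hB, h, hm] with ε h1 h2 h3
    have hi : Integrable (fun x => auxEta ε x * A x) (volume.restrict Ω) :=
      Integrable.mono hA h3 (Eventually.of_forall fun x => hb ε x)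
    rw [integral_add hi h1.1] at h2
    rw [eq_neg_of_add_eq_zero_left h2, norm_neg]
    exact h1.2
  exact tendsto_nhds_unique hT hT0

lemma aux_Bbound (a b R ε K N : ℝ) (hK : 0 ≤ K) (B H : V3 → ℝ)
    (hm : AEStronglyMeasurable B (volume.restrict (OmegaR a b R)))
    (hz : ∀ x ∈ OmegaR a b ε, B x = 0)
    (hle : ∀ᵐ x ∂(volume.restrict (OmegaR a b R)), |B x| ≤ K * H x)
    (hH : IntegrableOn H (OmegaR a b R \ OmegaR a b ε))
    (hN : ∫ x in OmegaR a b R \ OmegaR a b ε, H x ≤ N) :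
    IntegrableOn B (OmegaR a b R) ∧ |∫ x in OmegaR a b R, B x| ≤ K * N := by
  have hle' : ∀ᵐ x ∂(volume.restrict (OmegaR a b R \ OmegaR a b ε)), ‖B x‖ ≤ K * H x :=
    ae_restrict_of_ae_restrict_of_subset Set.sdiff_subset hle
  have hi : IntegrableOn B (OmegaR a b R \ OmegaR a b ε) :=
    Integrable.mono' (hH.const_mul K) (hm.mono_measure (Measure.restrict_mono Set.sdiff_subset le_rfl)) hle'
  have hmO : MeasurableSet (OmegaR a b R) := (aux_isOpen_Omega a b R).measurableSet
  have hmε : MeasurableSet (OmegaR a b ε) := (aux_isOpen_Omega a b ε).measurableSet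
  have hzz : ∀ x ∈ OmegaR a b R \ (OmegaR a b R \ OmegaR a b ε), B x = 0 := fun x hx => by
    apply hz; by_contra h; exact hx.2 ⟨hx.1, h⟩
  refine ⟨hi.of_forall_sdiff_eq_zero hmO hzz, ?_⟩
  rw [setIntegral_eq_of_subset_of_forall_sdiff_eq_zero hmO Set.sdiff_subset hzz]
  calc _ ≤ ∫ x in OmegaR a b R \ OmegaR a b ε, K * H x := norm_integral_le_of_norm_le (hH.const_mul K) hle'
    _ = K * ∫ x in OmegaR a b R \ OmegaR a b ε, H x := integral_const_mul _ _
    _ ≤ _ := by gcongr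


lemma aux_pd_comp (j i : Fin 3) (v : V3 → V3) (x : V3) (hv : DifferentiableAt ℝ v x) :
    pd j (fun z => v z i) x = (fderiv ℝ v x (e3 j)) i := by
  have h := (EuclideanSpace.proj (𝕜 := ℝ) i : V3 →L[ℝ] ℝ).hasFDerivAt.comp x hv.hasFDerivAt
  have h' : HasFDerivAt (fun z => v z i) _ x := h
  unfold pd
  rw [h'.fderiv]; rfl

lemma aux_coord (i : Fin 3) (y : V3) : |y i| ≤ ‖y‖ := PiLp.norm_apply_le (p := 2) y i

lemma aux_pd_le (j i : Fin 3) (v : V3 → V3) (x : V3) (hv : DifferentiableAt ℝ v x) :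
    |pd j (fun z => v z i) x| ≤ ‖fderiv ℝ v x‖ := by
  rw [aux_pd_comp j i v x hv]
  refine (aux_coord _ _).trans ((ContinuousLinearMap.le_opNorm _ _).trans ?_)
  simp [e3]

lemma aux_pd_mul (j : Fin 3) (f h : V3 → ℝ) (x : V3) (hf : DifferentiableAt ℝ f x)
    (hh : DifferentiableAt ℝ h x) : pd j (fun z => f z * h z) x = f x * pd j h x + h x * pd j f x := by
  unfold pd
  rw [fderiv_fun_mul hf hh]; simp

lemma aux_w (a b R ε : ℝ) (h0 : 0 < ε) (h1 : ε ≤ 1 / 4) (φ : V3 → ℝ) (hφ : ContDiff ℝ (⊤:ℕ∞) φ)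
    (hc : HasCompactSupport φ) (hs : tsupport φ ⊆ OmegaR a b R) :
    ContDiff ℝ (⊤:ℕ∞) (fun x => auxEta ε x * φ x) ∧ HasCompactSupport (fun x => auxEta ε x * φ x) ∧
    tsupport (fun x => auxEta ε x * φ x) ⊆ OmegaR a b R \ axis3 := by
  refine ⟨(auxEta_contDiff ε h0).mul hφ, hc.mul_left, fun x hx => ⟨hs ?_, ?_⟩⟩
  · exact tsupport_mul_subset_right hx
  · have := auxEta_tsupport ε h0 h1 (tsupport_mul_subset_left hx)
    rintro ⟨h2, h3⟩
    simp only [Set.mem_ofPred_eq] at this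
    rw [h2, h3] at this
    nlinarith [pow_pos h0 2]

lemma aux_rho_lt (a b ε : ℝ) (h0 : 0 < ε) (x : V3) (hx : x ∈ OmegaR a b ε) :
    x 0 ^ 2 + x 1 ^ 2 < ε ^ 2 := by
  have := hx.2.2
  unfold rho at this
  exact (Real.sqrt_lt' h0).1 this

lemma aux_restrict (a b R : ℝ) :
    volume.restrict (OmegaR a b R) = volume.restrict (OmegaR a b R \ axis3) :=
  (Measure.restrict_congr_set (sdiff_null_ae_eq_self aux_vol_axis)).symm

lemma aux_aesm {E : Type*} [NormedAddCommGroup E] [SecondCountableTopology E] (a b R : ℝ) (f : V3 → E)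
    (hf : ContinuousOn f (OmegaR a b R \ axis3)) :
    AEStronglyMeasurable f (volume.restrict (OmegaR a b R)) := by
  rw [aux_restrict]
  exact hf.aestronglyMeasurable ((aux_isOpen_Omega a b R).measurableSet.diff aux_isClosed_axis.measurableSet)

lemma aux_ae (a b R : ℝ) : ∀ᵐ x ∂(volume.restrict (OmegaR a b R)), x ∈ OmegaR a b R \ axis3 := by
  rw [aux_restrict]
  exact ae_restrict_mem ((aux_isOpen_Omega a b R).measurableSet.diff aux_isClosed_axis.measurableSet)

lemma aux_log : Tendsto (fun ε => - Real.log ε) (𝓝[>] (0:ℝ)) atTop :=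
  tendsto_neg_atBot_atTop.comp Real.tendsto_log_nhdsGT_zero

lemma aux_small : ∀ᶠ ε in 𝓝[>] (0:ℝ), 0 < ε ∧ ε ≤ 1 / 4 := by
  filter_upwards [Ioc_mem_nhdsGT (show (0:ℝ) < 1 / 4 by norm_num)] with ε h using h

lemma aux_bdd (φ : V3 → ℝ) (h : Continuous φ) (hc : HasCompactSupport φ) :
    ∃ K, 0 ≤ K ∧ ∀ x, |φ x| ≤ K := by
  obtain ⟨K, hK⟩ := h.bounded_above_of_compact_support hc
  exact ⟨K, (norm_nonneg _).trans (hK 0), hK⟩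

lemma aux_pd_supp (j : Fin 3) (w : V3 → ℝ) (hc : HasCompactSupport w) : HasCompactSupport (pd j w) :=
  HasCompactSupport.intro hc fun x hx => aux_pd_zero j w x hx

lemma aux_part2 (R a b : ℝ) (hR : 0 < R) (hab : a < b) (v : V3 → V3)
    (hreg_v : ContDiffOn ℝ (⊤:ℕ∞) v (OmegaR a b R \ axis3))
    (heq : ∀ x ∈ OmegaR a b R \ axis3, (∑ j, pd j (fun z => v z j) x) = 0)
    (hv2 : eLpNorm v 2 (volume.restrict (OmegaR a b R)) ≠ ⊤)
    (ψ : V3 → ℝ) (hψ : ContDiff ℝ (⊤:ℕ∞) ψ) (hψc : HasCompactSupport ψ)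
    (hψs : tsupport ψ ⊆ OmegaR a b R) :
      ∫ x in OmegaR a b R, (∑ j, v x j * pd j ψ x) = 0 := by
  have hO := aux_isOpen_Omega a b R
  have hU : IsOpen (OmegaR a b R \ axis3) := hO.sdiff aux_isClosed_axis
  obtain ⟨C, hC0, hC⟩ := aux_grad a b R hR hab
  obtain ⟨K, hK0, hK⟩ := aux_bdd ψ hψ.continuous hψc
  have hvj : ∀ j, ContDiffOn ℝ (⊤:ℕ∞) (fun z => v z j) (OmegaR a b R \ axis3) := fun j =>
    (EuclideanSpace.proj (𝕜 := ℝ) j : V3 →L[ℝ] ℝ).contDiff.comp_contDiffOn hreg_v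
  have hvm := aux_aesm a b R v hreg_v.continuousOn
  have hvj_m : ∀ j, AEStronglyMeasurable (fun z => v z j) (volume.restrict (OmegaR a b R)) := fun j =>
    aux_aesm a b R _ (hvj j).continuousOn
  haveI : IsFiniteMeasure (volume.restrict (OmegaR a b R)) := ⟨by
    rw [Measure.restrict_apply_univ]
    exact lt_of_le_of_lt ((measure_mono (aux_Omega_box a b R)).trans (aux_vol_box R a b hR.le))
      ENNReal.ofReal_lt_top⟩
  have hvint : Integrable v (volume.restrict (OmegaR a b R)) :=
    MemLp.integrable (q := 2) (by norm_num) ⟨hvm, lt_top_iff_ne_top.2 hv2⟩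
  have hAint : IntegrableOn (fun x => ∑ j, v x j * pd j ψ x) (OmegaR a b R) := by
    refine integrable_finsetSum _ fun j _ => ?_
    obtain ⟨K', hK'0, hK'⟩ := aux_bdd (pd j ψ) (aux_pd_cont j ψ hψ) (aux_pd_supp j ψ hψc)
    refine Integrable.mono' (hvint.norm.mul_const K') ((hvj_m j).mul (aux_pd_cont j ψ hψ).aestronglyMeasurable) ?_
    refine Eventually.of_forall fun x => ?_
    rw [norm_mul]
    exact mul_le_mul (aux_coord j (v x)) (hK' x) (norm_nonneg _) (norm_nonneg _)
  refine aux_final _ _ (fun ε x => ∑ j, v x j * (ψ x * pd j (auxEta ε) x))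
    (fun ε => 3 * K * ((eLpNorm v 2 (volume.restrict (OmegaR a b R))).toReal * Real.sqrt (C / (- Real.log ε))))
    hAint ?_ ?_ ?_
  · filter_upwards [aux_small] with ε hε
    obtain ⟨h0, h1⟩ := hε
    obtain ⟨P, hPc, hP0, hP, hPi⟩ := hC ε h0 h1
    have hcs := aux_CS _ v P hvm hv2 hPc hP0 _ hPi
    refine aux_Bbound a b R ε (3 * K) _ (by positivity) _ (fun x => ‖v x‖ * P x) ?_ ?_ ?_
      (hcs.1.mono_measure (Measure.restrict_mono Set.sdiff_subset le_rfl)) ?_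
    · refine Finset.aestronglyMeasurable_fun_sum _ fun j _ => ?_
      exact (hvj_m j).mul (hψ.continuous.mul (aux_pd_cont j _ (auxEta_contDiff ε h0))).aestronglyMeasurable
    · intro x hx
      refine Finset.sum_eq_zero fun j _ => ?_
      rw [auxEta_pd_zero ε h0 h1 j x (aux_rho_lt a b ε h0 x hx)]; ring
    · refine Eventually.of_forall fun x => ?_
      have ht : ∀ j, |v x j * (ψ x * pd j (auxEta ε) x)| ≤ K * (‖v x‖ * P x) := fun j => by
        rw [abs_mul, abs_mul]
        calc |v x j| * (|ψ x| * |pd j (auxEta ε) x|) ≤ ‖v x‖ * (K * P x) :=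
              mul_le_mul (aux_coord j (v x)) (mul_le_mul (hK x) (hP j x) (abs_nonneg _) hK0)
                (by positivity) (norm_nonneg _)
          _ = _ := by ring
      refine (Finset.abs_sum_le_sum_abs _ _).trans ((Finset.sum_le_sum fun j _ => ht j).trans ?_)
      simp; linarith
    · refine le_trans ?_ hcs.2
      exact integral_mono_measure (Measure.restrict_mono Set.sdiff_subset le_rfl)
        (Eventually.of_forall fun x => mul_nonneg (norm_nonneg _) (hP0 x)) hcs.1
  · have h1 : Tendsto (fun ε => C / (- Real.log ε)) (𝓝[>] (0:ℝ)) (𝓝 0) := aux_log.const_div_atTop C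
    have h2 := (Real.continuous_sqrt.tendsto 0).comp h1
    rw [Real.sqrt_zero] at h2
    have h3 := (h2.const_mul (eLpNorm v 2 (volume.restrict (OmegaR a b R))).toReal).const_mul (3 * K)
    simpa using h3
  · filter_upwards [aux_small] with ε hε
    obtain ⟨h0, h1⟩ := hε
    obtain ⟨w1, w2, w3⟩ := aux_w a b R ε h0 h1 ψ hψ hψc hψs
    have hw := (aux_weak _ hU (fun j z => v z j) hvj heq _ w1 w2 w3).2
    rw [← setIntegral_eq_integral_of_forall_compl_eq_zero (s := OmegaR a b R)] at hw
    · rw [← hw]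
      congr 1; ext x
      rw [Finset.mul_sum, ← Finset.sum_add_distrib]
      refine Finset.sum_congr rfl fun j _ => ?_
      rw [aux_pd_mul j _ _ x ((auxEta_contDiff ε h0).differentiable (by simp) x) (hψ.differentiable (by simp) x)]
      ring
    · intro x hx
      refine Finset.sum_eq_zero fun j _ => ?_
      rw [aux_pd_zero j _ x (fun h => hx (w3 h).1), mul_zero]

lemma aux_part1 (R a b : ℝ) (hR : 0 < R) (hab : a < b)
    (g : V3 → Fin 3 → Fin 3 → ℝ) (v : V3 → V3) (q : V3 → ℝ)
    (hreg_g : ContDiffOn ℝ (⊤:ℕ∞) g (OmegaR a b R \ axis3))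
    (hreg_v : ContDiffOn ℝ (⊤:ℕ∞) v (OmegaR a b R \ axis3))
    (hreg_q : ContDiffOn ℝ (⊤:ℕ∞) q (OmegaR a b R \ axis3))
    (heq : ∀ x ∈ OmegaR a b R \ axis3,
      (∀ i, - lap3 (fun z => v z i) x + pd i q x = ∑ j, pd j (fun z => g z i j) x))
    (hdv1 : eLpNorm (fun x => fderiv ℝ v x) 1 (volume.restrict (OmegaR a b R)) ≠ ⊤)
    (hg1 : eLpNorm g 1 (volume.restrict (OmegaR a b R)) ≠ ⊤)
    (hfin : ∀ᶠ ε in 𝓝[>] (0:ℝ),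
      eLpNorm (fun x => fderiv ℝ v x) 2 (volume.restrict (OmegaR a b R \ OmegaR a b ε)) ≠ ⊤ ∧
      eLpNorm q 2 (volume.restrict (OmegaR a b R \ OmegaR a b ε)) ≠ ⊤ ∧
      eLpNorm g 2 (volume.restrict (OmegaR a b R \ OmegaR a b ε)) ≠ ⊤)
    (hsmall : Tendsto (fun ε =>
      ((eLpNorm (fun x => fderiv ℝ v x) 2
          (volume.restrict (OmegaR a b R \ OmegaR a b ε))).toReal
        + (eLpNorm q 2 (volume.restrict (OmegaR a b R \ OmegaR a b ε))).toReal
        + (eLpNorm g 2 (volume.restrict (OmegaR a b R \ OmegaR a b ε))).toReal)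
        / Real.sqrt |Real.log ε|) (𝓝[>] (0:ℝ)) (𝓝 0))
    (φ : V3 → V3) (hφ : ContDiff ℝ (⊤:ℕ∞) φ) (hφc : HasCompactSupport φ)
    (hφs : tsupport φ ⊆ OmegaR a b R) (hφd : ∀ x, ∑ j, pd j (fun z => φ z j) x = 0) :
      ∫ x in OmegaR a b R,
        (∑ i, ∑ j, (pd j (fun z => v z i) x + g x i j) * pd j (fun z => φ z i) x) = 0 := by
  have hO := aux_isOpen_Omega a b R
  have hU : IsOpen (OmegaR a b R \ axis3) := hO.sdiff aux_isClosed_axis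
  obtain ⟨C, hC0, hC⟩ := aux_grad a b R hR hab
  -- components of the test field
  have hφi : ∀ i, ContDiff ℝ (⊤:ℕ∞) (fun z => φ z i) := fun i =>
    (EuclideanSpace.proj (𝕜 := ℝ) i : V3 →L[ℝ] ℝ).contDiff.comp hφ
  have hφts : ∀ i, tsupport (fun z => φ z i) ⊆ tsupport φ := fun i => by
    refine closure_mono fun x hx => ?_
    intro h
    exact hx (by simp [h])
  have hφci : ∀ i, HasCompactSupport (fun z => φ z i) := fun i =>
    hφc.of_isClosed_subset (isClosed_tsupport _) (hφts i)
  have hφsi : ∀ i, tsupport (fun z => φ z i) ⊆ OmegaR a b R := fun i => (hφts i).trans hφs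
  obtain ⟨K, hK0, hK⟩ : ∃ K, 0 ≤ K ∧ ∀ i x, |φ x i| ≤ K := by
    obtain ⟨K, hK⟩ := hφ.continuous.bounded_above_of_compact_support hφc
    exact ⟨K, (norm_nonneg _).trans (hK 0), fun i x => (aux_coord i _).trans (hK x)⟩
  -- regularity
  have hvi : ∀ j, ContDiffOn ℝ (⊤:ℕ∞) (fun z => v z j) (OmegaR a b R \ axis3) := fun j =>
    (EuclideanSpace.proj (𝕜 := ℝ) j : V3 →L[ℝ] ℝ).contDiff.comp_contDiffOn hreg_v
  have hpv : ∀ i j, ContDiffOn ℝ (⊤:ℕ∞) (pd j (fun z => v z i)) (OmegaR a b R \ axis3) := fun i j =>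
    aux_pd_contDiffOn j _ hU _ (hvi i)
  have hgij : ∀ i j, ContDiffOn ℝ (⊤:ℕ∞) (fun z => g z i j) (OmegaR a b R \ axis3) := fun i j =>
    contDiffOn_pi.1 (contDiffOn_pi.1 hreg_g i) j
  have hdvc : ContinuousOn (fun x => fderiv ℝ v x) (OmegaR a b R \ axis3) :=
    hreg_v.continuousOn_fderiv_of_isOpen hU (by simp)
  have hdvm := aux_aesm a b R _ hdvc
  have hgm := aux_aesm a b R g hreg_g.continuousOn
  have hqm := aux_aesm a b R q hreg_q.continuousOn
  have hvd : ∀ x ∈ OmegaR a b R \ axis3, DifferentiableAt ℝ v x := fun x hx =>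
    ((hreg_v x hx).contDiffAt (hU.mem_nhds hx)).differentiableAt (by simp)
  have hdvi : Integrable (fun x => fderiv ℝ v x) (volume.restrict (OmegaR a b R)) :=
    memLp_one_iff_integrable.1 ⟨hdvm, lt_top_iff_ne_top.2 hdv1⟩
  have hgi : Integrable g (volume.restrict (OmegaR a b R)) :=
    memLp_one_iff_integrable.1 ⟨hgm, lt_top_iff_ne_top.2 hg1⟩
  have hgle : ∀ x i j, |g x i j| ≤ ‖g x‖ := fun x i j =>
    (norm_le_pi_norm (g x i) j).trans (norm_le_pi_norm (g x) i)
  have hFle : ∀ x ∈ OmegaR a b R \ axis3, ∀ i j,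
      |pd j (fun z => v z i) x + g x i j| ≤ ‖fderiv ℝ v x‖ + ‖g x‖ := fun x hx i j =>
    (abs_add_le _ _).trans (add_le_add (aux_pd_le j i v x (hvd x hx)) (hgle x i j))
  have hAint : IntegrableOn (fun x => ∑ i, ∑ j, (pd j (fun z => v z i) x + g x i j) * pd j (fun z => φ z i) x)
      (OmegaR a b R) := by
    refine integrable_finsetSum _ fun i _ => integrable_finsetSum _ fun j _ => ?_
    have hc := aux_pd_cont j _ (hφi i)
    obtain ⟨K', hK'0, hK'⟩ := aux_bdd (pd j (fun z => φ z i)) hc (aux_pd_supp j _ (hφci i))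
    refine Integrable.mono' ((hdvi.norm.add hgi.norm).mul_const K')
      ((aux_aesm a b R _ ((hpv i j).continuousOn.add (hgij i j).continuousOn)).mul hc.aestronglyMeasurable) ?_
    filter_upwards [aux_ae a b R] with x hx
    rw [norm_mul]
    exact mul_le_mul (hFle x hx i j) (hK' x) (norm_nonneg _) (add_nonneg (norm_nonneg _) (norm_nonneg _))
  -- the total stress
  let F : Fin 3 → Fin 3 → V3 → ℝ := fun i j x =>
    pd j (fun z => v z i) x + g x i j - (if i = j then (1:ℝ) else 0) * q x
  have hF : ∀ i j, ContDiffOn ℝ (⊤:ℕ∞) (F i j) (OmegaR a b R \ axis3) := fun i j =>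
    ((hpv i j).add (hgij i j)).sub (contDiffOn_const.mul hreg_q)
  have hFdiv : ∀ i, ∀ x ∈ OmegaR a b R \ axis3, ∑ j, pd j (F i j) x = 0 := fun i x hx => by
    have hd : ∀ f : V3 → ℝ, ContDiffOn ℝ (⊤:ℕ∞) f (OmegaR a b R \ axis3) → DifferentiableAt ℝ f x :=
      fun f hf => ((hf x hx).contDiffAt (hU.mem_nhds hx)).differentiableAt (by simp)
    have h1 : ∀ j, pd j (F i j) x = pd j (pd j (fun z => v z i)) x + pd j (fun z => g z i j) x
        - (if i = j then (1:ℝ) else 0) * pd j q x := fun j => by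
      have e := (((hd _ (hpv i j)).hasFDerivAt.add (hd _ (hgij i j)).hasFDerivAt).sub
        ((hd _ hreg_q).hasFDerivAt.const_mul (if i = j then (1:ℝ) else 0)))
      have e' : HasFDerivAt (F i j) _ x := e
      conv_lhs => unfold pd
      rw [e'.fderiv]
      simp [pd]
      split_ifs <;> simp
    have h2 := heq x hx i
    simp_rw [h1]
    rw [Finset.sum_sub_distrib, Finset.sum_add_distrib, ← h2]
    simp [lap3]
  have hFb : ∀ x ∈ OmegaR a b R \ axis3, ∀ i j,
      |F i j x| ≤ ‖fderiv ℝ v x‖ + ‖q x‖ + ‖g x‖ := fun x hx i j => by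
    have h1 := hFle x hx i j
    have h2 : |(if i = j then (1:ℝ) else 0) * q x| ≤ ‖q x‖ := by
      split_ifs <;> simp
    have := abs_sub (pd j (fun z => v z i) x + g x i j) ((if i = j then (1:ℝ) else 0) * q x)
    simp only [F]
    linarith
  refine aux_final _ _ (fun ε x => ∑ i, ∑ j, F i j x * (φ x i * pd j (auxEta ε) x))
    (fun ε => 9 * K * (((eLpNorm (fun x => fderiv ℝ v x) 2
          (volume.restrict (OmegaR a b R \ OmegaR a b ε))).toReal
        + (eLpNorm q 2 (volume.restrict (OmegaR a b R \ OmegaR a b ε))).toReal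
        + (eLpNorm g 2 (volume.restrict (OmegaR a b R \ OmegaR a b ε))).toReal) *
          Real.sqrt (C / (- Real.log ε))))
    hAint ?_ ?_ ?_
  · filter_upwards [aux_small, hfin] with ε hε hfinε
    obtain ⟨h0, h1⟩ := hε
    obtain ⟨P, hPc, hP0, hP, hPi⟩ := hC ε h0 h1
    have hle : volume.restrict (OmegaR a b R \ OmegaR a b ε) ≤ volume.restrict (OmegaR a b R) :=
      Measure.restrict_mono Set.sdiff_subset le_rfl
    have hPi' := (lintegral_mono' hle le_rfl).trans hPi
    have c1 := aux_CS _ _ P (hdvm.mono_measure hle) hfinε.1 hPc hP0 _ hPi'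
    have c2 := aux_CS _ _ P (hqm.mono_measure hle) hfinε.2.1 hPc hP0 _ hPi'
    have c3 := aux_CS _ _ P (hgm.mono_measure hle) hfinε.2.2 hPc hP0 _ hPi'
    refine aux_Bbound a b R ε (9 * K) _ (by positivity) _
      (fun x => ‖fderiv ℝ v x‖ * P x + ‖q x‖ * P x + ‖g x‖ * P x) ?_ ?_ ?_
      ((c1.1.add c2.1).add c3.1) ?_
    · refine Finset.aestronglyMeasurable_fun_sum _ fun i _ => Finset.aestronglyMeasurable_fun_sum _ fun j _ => ?_
      exact (aux_aesm a b R _ (hF i j).continuousOn).mul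
        ((hφi i).continuous.mul (aux_pd_cont j _ (auxEta_contDiff ε h0))).aestronglyMeasurable
    · intro x hx
      refine Finset.sum_eq_zero fun i _ => Finset.sum_eq_zero fun j _ => ?_
      rw [auxEta_pd_zero ε h0 h1 j x (aux_rho_lt a b ε h0 x hx)]; ring
    · filter_upwards [aux_ae a b R] with x hx
      have ht : ∀ i j, |F i j x * (φ x i * pd j (auxEta ε) x)|
          ≤ K * (‖fderiv ℝ v x‖ * P x + ‖q x‖ * P x + ‖g x‖ * P x) := fun i j => by
        rw [abs_mul, abs_mul]
        calc |F i j x| * (|φ x i| * |pd j (auxEta ε) x|)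
            ≤ (‖fderiv ℝ v x‖ + ‖q x‖ + ‖g x‖) * (K * P x) :=
              mul_le_mul (hFb x hx i j) (mul_le_mul (hK i x) (hP j x) (abs_nonneg _) hK0)
                (by positivity) (by positivity)
          _ = _ := by ring
      refine (Finset.abs_sum_le_sum_abs _ _).trans ((Finset.sum_le_sum fun i _ =>
        (Finset.abs_sum_le_sum_abs _ _).trans (Finset.sum_le_sum fun j _ => ht i j)).trans ?_)
      simp only [Finset.sum_const, Finset.card_univ, Fintype.card_fin, nsmul_eq_mul]
      push_cast; linarith
    · have e1 : ∫ x in OmegaR a b R \ OmegaR a b ε, (‖fderiv ℝ v x‖ * P x + ‖q x‖ * P x + ‖g x‖ * P x)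
          = (∫ x in OmegaR a b R \ OmegaR a b ε, ‖fderiv ℝ v x‖ * P x)
            + (∫ x in OmegaR a b R \ OmegaR a b ε, ‖q x‖ * P x)
            + ∫ x in OmegaR a b R \ OmegaR a b ε, ‖g x‖ * P x := by
        have c12 : Integrable (fun x => ‖fderiv ℝ v x‖ * P x + ‖q x‖ * P x)
            (volume.restrict (OmegaR a b R \ OmegaR a b ε)) := c1.1.add c2.1
        rw [integral_add c12 c3.1, integral_add c1.1 c2.1]
      rw [e1, add_mul, add_mul]
      exact add_le_add (add_le_add c1.2 c2.2) c3.2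
  · have h3 := (hsmall.const_mul (Real.sqrt C)).const_mul (9 * K)
    simp only [mul_zero] at h3
    refine h3.congr' ?_
    filter_upwards [aux_small] with ε hε
    have hneg : Real.log ε < 0 := Real.log_neg hε.1 (by linarith [hε.2])
    rw [abs_of_neg hneg, Real.sqrt_div hC0]
    ring
  · filter_upwards [aux_small] with ε hε
    obtain ⟨h0, h1⟩ := hε
    have W := fun i => aux_w a b R ε h0 h1 _ (hφi i) (hφci i) (hφsi i)
    have hw := fun i => aux_weak _ hU (F i) (hF i) (hFdiv i) _ (W i).1 (W i).2.1 (W i).2.2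
    have hw2 : ∫ x, ∑ i, ∑ j, F i j x * pd j (fun x => auxEta ε x * φ x i) x = 0 := by
      rw [integral_finsetSum _ fun i _ => (hw i).1]
      exact Finset.sum_eq_zero fun i _ => (hw i).2
    rw [← setIntegral_eq_integral_of_forall_compl_eq_zero (s := OmegaR a b R)] at hw2
    · rw [← hw2]
      congr 1; ext x
      have hm : ∀ i j, pd j (fun x => auxEta ε x * φ x i) x
          = auxEta ε x * pd j (fun z => φ z i) x + φ x i * pd j (auxEta ε) x := fun i j =>
        aux_pd_mul j _ _ x ((auxEta_contDiff ε h0).differentiable (by simp) x)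
          ((hφi i).differentiable (by simp) x)
      simp_rw [hm]
      have hd0 : ∑ i, ∑ j, (if i = j then (1:ℝ) else 0) * q x * (auxEta ε x * pd j (fun z => φ z i) x) = 0 := by
        have : ∀ i, ∑ j, (if i = j then (1:ℝ) else 0) * q x * (auxEta ε x * pd j (fun z => φ z i) x)
            = q x * auxEta ε x * pd i (fun z => φ z i) x := fun i => by
          simp [mul_assoc]
        simp_rw [this]
        rw [← Finset.mul_sum, hφd, mul_zero]
      rw [Finset.mul_sum, ← sub_zero (_ + _), ← hd0, ← Finset.sum_add_distrib, ← Finset.sum_sub_distrib]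
      refine Finset.sum_congr rfl fun i _ => ?_
      rw [Finset.mul_sum, ← Finset.sum_add_distrib, ← Finset.sum_sub_distrib]
      refine Finset.sum_congr rfl fun j _ => ?_
      simp only [F]
      ring
    · intro x hx
      refine Finset.sum_eq_zero fun i _ => Finset.sum_eq_zero fun j _ => ?_
      rw [aux_pd_zero j _ x (fun h => hx ((W i).2.2 h).1), mul_zero]



/-- the singular axis does not contribute to the weak formulation (Lemma 2.4). -/
theorem weak_formulation_across_axis (R a b : ℝ) (hR : 0 < R) (hab : a < b) (hab' : 0 < a * b)
    (g : V3 → Fin 3 → Fin 3 → ℝ) (v : V3 → V3) (q : V3 → ℝ)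
    (hreg_g : ContDiffOn ℝ (⊤:ℕ∞) g (OmegaR a b R \ axis3))
    (hreg_v : ContDiffOn ℝ (⊤:ℕ∞) v (OmegaR a b R \ axis3))
    (hreg_q : ContDiffOn ℝ (⊤:ℕ∞) q (OmegaR a b R \ axis3))
    (heq : ∀ x ∈ OmegaR a b R \ axis3,
      (∀ i, - lap3 (fun z => v z i) x + pd i q x = ∑ j, pd j (fun z => g z i j) x) ∧
      (∑ j, pd j (fun z => v z j) x) = 0)
    (hv2 : eLpNorm v 2 (volume.restrict (OmegaR a b R)) ≠ ⊤)
    (hdv1 : eLpNorm (fun x => fderiv ℝ v x) 1 (volume.restrict (OmegaR a b R)) ≠ ⊤)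
    (hg1 : eLpNorm g 1 (volume.restrict (OmegaR a b R)) ≠ ⊤)
    (hfin : ∀ᶠ ε in 𝓝[>] (0:ℝ),
      eLpNorm (fun x => fderiv ℝ v x) 2 (volume.restrict (OmegaR a b R \ OmegaR a b ε)) ≠ ⊤ ∧
      eLpNorm q 2 (volume.restrict (OmegaR a b R \ OmegaR a b ε)) ≠ ⊤ ∧
      eLpNorm g 2 (volume.restrict (OmegaR a b R \ OmegaR a b ε)) ≠ ⊤)
    (hsmall : Tendsto (fun ε =>
      ((eLpNorm (fun x => fderiv ℝ v x) 2
          (volume.restrict (OmegaR a b R \ OmegaR a b ε))).toReal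
        + (eLpNorm q 2 (volume.restrict (OmegaR a b R \ OmegaR a b ε))).toReal
        + (eLpNorm g 2 (volume.restrict (OmegaR a b R \ OmegaR a b ε))).toReal)
        / Real.sqrt |Real.log ε|) (𝓝[>] (0:ℝ)) (𝓝 0)) :
    (∀ φ : V3 → V3, ContDiff ℝ (⊤:ℕ∞) φ → HasCompactSupport φ →
      tsupport φ ⊆ OmegaR a b R → (∀ x, ∑ j, pd j (fun z => φ z j) x = 0) →
      ∫ x in OmegaR a b R,
        (∑ i, ∑ j, (pd j (fun z => v z i) x + g x i j) * pd j (fun z => φ z i) x) = 0) ∧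
    (∀ ψ : V3 → ℝ, ContDiff ℝ (⊤:ℕ∞) ψ → HasCompactSupport ψ →
      tsupport ψ ⊆ OmegaR a b R →
      ∫ x in OmegaR a b R, (∑ j, v x j * pd j ψ x) = 0) := by
  exact ⟨fun φ h1 h2 h3 h4 => aux_part1 R a b hR hab g v q hreg_g hreg_v hreg_q
      (fun x hx => (heq x hx).1) hdv1 hg1 hfin hsmall φ h1 h2 h3 h4,
    fun ψ h1 h2 h3 => aux_part2 R a b hR hab v hreg_v (fun x hx => (heq x hx).2) hv2 ψ h1 h2 h3⟩
end
end

section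
/- Let δ > 0 and let u ∈ C²(S² ∩ B_δ(S) \ {S}) be a (−1)-homogeneous axisymmetric solution of the stationary Navier–Stokes equations. Then the limit τ := lim_{x∈S², x→S} |x'| u_θ(x) exists and is finite, and limsup_{x∈S², x→S} |u(x)| · |x'|² (ln|x'|)² < ∞, i.e. |u| = O(1/(|x'| ln|x'|)²) near S on S². -/
noncomputable section

open Real Filter MeasureTheory Metric Topology
open scoped ENNReal InnerProductSpace

namespace TauProof

lemma bar {f f' B B' : ℝ → ℝ} {T : ℝ} (hf : ∀ t ≥ T, HasDerivAt f (f' t) t)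
    (hB : ∀ t ≥ T, HasDerivAt B (B' t) t) (h0 : f T ≤ B T)
    (h : ∀ t ≥ T, f t = B t → f' t < B' t) : ∀ t ≥ T, f t ≤ B t := by
  intro t ht
  refine image_le_of_deriv_right_lt_deriv_boundary' (a := T) (b := t) (f := f) (f' := f')
    (B := B) (B' := B') ?_ ?_ h0 ?_ ?_ ?_ ⟨ht, le_rfl⟩
  · exact fun s hs => (hf s hs.1).continuousAt.continuousWithinAt
  · exact fun s hs => (hf s hs.1).hasDerivWithinAt
  · exact fun s hs => (hB s hs.1).continuousAt.continuousWithinAt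
  · exact fun s hs => (hB s hs.1).hasDerivWithinAt
  · exact fun s hs => h s hs.1

lemma barc {f f' : ℝ → ℝ} {T b : ℝ} (hf : ∀ t ≥ T, HasDerivAt f (f' t) t) (h0 : f T ≤ b)
    (h : ∀ t ≥ T, f t = b → f' t < 0) : ∀ t ≥ T, f t ≤ b :=
  bar (B := fun _ => b) (B' := fun _ => 0) hf (fun t _ => hasDerivAt_const t b) h0 h

lemma barc' {f f' : ℝ → ℝ} {T b : ℝ} (hf : ∀ t ≥ T, HasDerivAt f (f' t) t) (h0 : b ≤ f T)
    (h : ∀ t ≥ T, f t = b → 0 < f' t) : ∀ t ≥ T, b ≤ f t := by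
  intro t ht
  have := barc (f := fun t => - f t) (f' := fun t => - f' t) (b := -b) (T := T)
    (fun t ht => (hf t ht).neg) (by simpa using h0)
    (fun t ht e => by have := h t ht (by simpa using e); linarith) t ht
  simpa using this

lemma mono {f f' : ℝ → ℝ} {T : ℝ} (hf : ∀ t ≥ T, HasDerivAt f (f' t) t)
    (h : ∀ t ≥ T, 0 ≤ f' t) : ∀ s t, T ≤ s → s ≤ t → f s ≤ f t := by
  intro s t hs hst
  have : MonotoneOn f (Set.Ici T) := by
    apply monotoneOn_of_deriv_nonneg (convex_Ici T)
    · exact fun s hs => (hf s hs).continuousAt.continuousWithinAt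
    · intro s hs; rw [interior_Ici] at hs
      exact (hf s (le_of_lt hs)).differentiableAt.differentiableWithinAt
    · intro s hs; rw [interior_Ici] at hs
      rw [(hf s (le_of_lt hs)).deriv]; exact h s (le_of_lt hs)
  exact this hs (le_trans hs hst) hst

lemma anti {f f' : ℝ → ℝ} {T : ℝ} (hf : ∀ t ≥ T, HasDerivAt f (f' t) t)
    (h : ∀ t ≥ T, f' t ≤ 0) : ∀ s t, T ≤ s → s ≤ t → f t ≤ f s := by
  intro s t hs hst
  have := mono (f := fun t => - f t) (f' := fun t => - f' t) (T := T)
    (fun t ht => (hf t ht).neg) (fun t ht => by have := h t ht; linarith) s t hs hst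
  simpa using this

lemma hexp (a c t : ℝ) : HasDerivAt (fun t => c * exp (a * t)) (c * a * exp (a * t)) t := by
  have := (((hasDerivAt_id t).const_mul a).exp).const_mul c
  refine this.congr_deriv ?_; simp; try ring

lemma growU {f f' : ℝ → ℝ} {T a C : ℝ} (hT : 0 ≤ T) (ha : 0 < a) (hC : 0 ≤ C)
    (hf : ∀ t ≥ T, HasDerivAt f (f' t) t)
    (h : ∀ t ≥ T, f' t ≤ C * exp (a * t)) :
    ∃ D, 0 ≤ D ∧ ∀ t ≥ T, f t ≤ D * exp (a * t) := by
  refine ⟨|f T| + C / a, by positivity, fun t ht => ?_⟩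
  have := anti (f := fun t => f t - C / a * exp (a * t))
    (f' := fun t => f' t - C / a * a * exp (a * t)) (T := T)
    (fun t ht => (hf t ht).sub (hexp a (C / a) t))
    (fun t ht => by have := h t ht; rw [div_mul_cancel₀ _ ha.ne']; linarith) T t le_rfl ht
  have h1 : 1 ≤ exp (a * t) := by
    apply Real.one_le_exp; nlinarith
  have h2 : 0 ≤ C / a * exp (a * T) := by positivity
  have h3 := le_abs_self (f T)
  have h4 : |f T| ≤ |f T| * exp (a * t) := by
    have := abs_nonneg (f T); nlinarith
  linarith

lemma growA {f f' : ℝ → ℝ} {T a C : ℝ} (hT : 0 ≤ T) (ha : 0 < a) (hC : 0 ≤ C)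
    (hf : ∀ t ≥ T, HasDerivAt f (f' t) t)
    (h : ∀ t ≥ T, |f' t| ≤ C * exp (a * t)) :
    ∃ D, 0 ≤ D ∧ ∀ t ≥ T, |f t| ≤ D * exp (a * t) := by
  obtain ⟨D1, h1, H1⟩ := growU hT ha hC hf (fun t ht => (abs_le.1 (h t ht)).2)
  obtain ⟨D2, h2, H2⟩ := growU (f := fun t => - f t) (f' := fun t => - f' t) hT ha hC
    (fun t ht => (hf t ht).neg) (fun t ht => by have := (abs_le.1 (h t ht)).1; linarith)
  refine ⟨D1 + D2, by positivity, fun t ht => ?_⟩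
  have e := exp_pos (a * t)
  have := H1 t ht
  have := H2 t ht
  rw [abs_le]; constructor <;> nlinarith

lemma growL {f f' : ℝ → ℝ} {T a c : ℝ} (ha : 0 < a) (hc : 0 < c)
    (hf : ∀ t ≥ T, HasDerivAt f (f' t) t)
    (h : ∀ t ≥ T, c * exp (a * t) ≤ f' t) :
    ∃ d, 0 < d ∧ ∃ T' ≥ T, ∀ t ≥ T', d * exp (a * t) ≤ f t := by
  refine ⟨c / a / 2, by positivity, ?_⟩
  have h1 : ∀ t ≥ T, f T - c / a * exp (a * T) ≤ f t - c / a * exp (a * t) := fun t ht => 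
    mono (f := fun t => f t - c / a * exp (a * t))
    (f' := fun t => f' t - c / a * a * exp (a * t)) (T := T)
    (fun t ht => (hf t ht).sub (hexp a (c / a) t))
    (fun t ht => by have := h t ht; rw [div_mul_cancel₀ _ ha.ne']; linarith) T t le_rfl ht
  have h2 : Tendsto (fun t => c / a / 2 * exp (a * t)) atTop atTop :=
    Tendsto.const_mul_atTop (by positivity)
      (tendsto_exp_atTop.comp (tendsto_id.const_mul_atTop ha))
  obtain ⟨T', hT'⟩ := Filter.eventually_atTop.1
    (h2.eventually_ge_atTop (-(f T - c / a * exp (a * T))))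
  refine ⟨max T T', le_max_left _ _, fun t ht => ?_⟩
  have h3 := hT' t (le_trans (le_max_right _ _) ht)
  have h4 := h1 t (le_trans (le_max_left _ _) ht)
  have : c / a * exp (a * t) = c / a / 2 * exp (a * t) + c / a / 2 * exp (a * t) := by ring
  linarith

lemma riccati {U U' : ℝ → ℝ} {T : ℝ} (hf : ∀ t ≥ T, HasDerivAt U (U' t) t)
    (h : ∀ t ≥ T, U t ^ 2 / 4 + 1 ≤ U' t) : False := by
  have h1 : ∀ t ≥ T, HasDerivAt (fun t => arctan (U t / 2) - t / 2)
      ((1 / (1 + (U t / 2) ^ 2)) * (U' t / 2) - 1 / 2) t := by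
    intro t ht
    exact (((hf t ht).div_const 2).arctan).sub ((hasDerivAt_id t).div_const 2)
  have h2 := mono h1 (fun t ht => by
    have := h t ht
    have : 1 ≤ (1 / (1 + (U t / 2) ^ 2)) * U' t := by
      rw [one_div, inv_mul_eq_div, le_div_iff₀ (by positivity)]; linarith
    linarith) T (T + 8) le_rfl (by linarith)
  have h3 := Real.arctan_lt_pi_div_two (U (T + 8) / 2)
  have h4 := Real.neg_pi_div_two_lt_arctan (U T / 2)
  have := Real.pi_le_four
  linarith

lemma mono_conv {f : ℝ → ℝ} {T M : ℝ} (hf : ∀ s t, T ≤ s → s ≤ t → f s ≤ f t)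
    (hM : ∀ t ≥ T, f t ≤ M) : ∃ l, Tendsto f atTop (𝓝 l) ∧ ∀ t ≥ T, f t ≤ l := by
  have hm : Monotone (fun t => f (max t T)) := fun s t hst =>
    hf _ _ (le_max_right _ _) (max_le_max_right _ hst)
  have hb : BddAbove (Set.range (fun t => f (max t T))) := 
    ⟨M, by rintro _ ⟨t, rfl⟩; exact hM _ (le_max_right _ _)⟩
  have := tendsto_atTop_ciSup hm hb
  refine ⟨_, this.congr' ?_, fun t ht => ?_⟩
  · filter_upwards [eventually_ge_atTop T] with t ht
    simp [max_eq_left ht]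
  · have := le_ciSup hb t
    simpa [max_eq_left ht] using this

lemma expdec_conv {f f' : ℝ → ℝ} {T κ C : ℝ} (hκ : 0 < κ)
    (hf : ∀ t ≥ T, HasDerivAt f (f' t) t)
    (h : ∀ t ≥ T, |f' t| ≤ C * exp (-κ * t)) :
    ∃ l, Tendsto f atTop (𝓝 l) ∧ ∀ t ≥ T, |f t - l| ≤ C / κ * exp (-κ * t) := by
  have e0 : Tendsto (fun t => C / κ * exp (-κ * t)) atTop (𝓝 0) := by
    have : Tendsto (fun t => exp (-κ * t)) atTop (𝓝 0) := 
      tendsto_exp_atBot.comp (tendsto_id.const_mul_atTop_of_neg (by linarith))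
    simpa using this.const_mul (C / κ)
  have hC : 0 ≤ C := by
    have h1 := (abs_nonneg _).trans (h T le_rfl)
    exact nonneg_of_mul_nonneg_left h1 (exp_pos _)
  have m1 := mono (f := fun t => f t - C / κ * exp (-κ * t))
    (f' := fun t => f' t - C / κ * (-κ) * exp (-κ * t)) (T := T)
    (fun t ht => (hf t ht).sub (hexp _ _ t))
    (fun t ht => by
      have := (abs_le.1 (h t ht)).1
      have e : C / κ * (-κ) = -C := by field_simp
      rw [e]; linarith)
  have m2 := mono (f := fun t => -(f t + C / κ * exp (-κ * t)))
    (f' := fun t => -(f' t + C / κ * (-κ) * exp (-κ * t))) (T := T)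
    (fun t ht => ((hf t ht).add (hexp _ _ t)).neg)
    (fun t ht => by
      have := (abs_le.1 (h t ht)).2
      have e : C / κ * (-κ) = -C := by field_simp
      rw [e]; linarith)
  have pos : ∀ t, 0 ≤ C / κ * exp (-κ * t) := fun t => by positivity
  obtain ⟨l, hl, hle⟩ := mono_conv m1 (M := f T + C / κ * exp (-κ * T)) (fun t ht => by
    have := m2 T t le_rfl ht
    have := pos t
    linarith)
  obtain ⟨l2, hl2, hle2⟩ := mono_conv m2 (M := -(f T - C / κ * exp (-κ * T))) (fun t ht => by
    have := m1 T t le_rfl ht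
    have := pos t
    linarith)
  have hlf : Tendsto f atTop (𝓝 l) := by
    have := hl.add e0
    simpa using this
  have hlf2 : Tendsto f atTop (𝓝 (-l2)) := by
    have := (hl2.neg).sub e0
    simpa using this
  have e := tendsto_nhds_unique hlf hlf2
  refine ⟨l, hlf, fun t ht => ?_⟩
  have := hle t ht
  have := hle2 t ht
  rw [abs_le]; constructor <;> linarith

lemma deriv_lim_zero {f f' : ℝ → ℝ} {T l c : ℝ} (hf : ∀ t ≥ T, HasDerivAt f (f' t) t)
    (hl : Tendsto f atTop (𝓝 l)) (hc : Tendsto f' atTop (𝓝 c)) : c = 0 := by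
  have key : ∀ (g g' : ℝ → ℝ) (l c : ℝ), (∀ t ≥ T, HasDerivAt g (g' t) t) → 
      Tendsto g atTop (𝓝 l) → Tendsto g' atTop (𝓝 c) → ¬ 0 < c := by
    intro g g' l c hg hl hc hpos
    obtain ⟨T1, h1⟩ := Filter.eventually_atTop.1 (hc.eventually_const_le (half_lt_self hpos))
    have hT : ∀ t ≥ max T T1, HasDerivAt (fun t => g t - c / 2 * t) (g' t - c / 2) t := by
      intro t ht
      have := (hg t (le_trans (le_max_left _ _) ht)).sub ((hasDerivAt_id t).const_mul (c / 2))
      refine this.congr_deriv ?_; simp; try ring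
    have m := mono hT (fun t ht => by
      have := h1 t (le_trans (le_max_right _ _) ht); linarith)
    have : Tendsto g atTop atTop := by
      have h2 : Tendsto (fun t => (g (max T T1) - c / 2 * max T T1) + c / 2 * t) atTop atTop :=
        tendsto_atTop_add_const_left _ _ (tendsto_id.const_mul_atTop (half_pos hpos))
      refine tendsto_atTop_mono' _ ?_ h2
      filter_upwards [eventually_ge_atTop (max T T1)] with t ht
      have := m _ t le_rfl ht
      linarith
    exact not_tendsto_nhds_of_tendsto_atTop this l hl
  rcases lt_trichotomy c 0 with h | h | h
  · exact absurd (by linarith) (key (fun t => - f t) (fun t => - f' t) (-l) (-c)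
      (fun t ht => (hf t ht).neg) hl.neg hc.neg)
  · exact h
  · exact absurd h (key f f' l c hf hl hc)

end TauProof
namespace TauProof

structure Sys (T : ℝ) (x μ U L K P W Z : ℝ → ℝ) : Prop where
  hT : 1 ≤ T
  x1 : ∀ t ≥ T, 0 < 1 + x t
  x2 : ∀ t ≥ T, 1 + x t ≤ 2 * exp (-2 * t)
  x3 : ∀ t ≥ T, x t ≤ 0
  μ1 : ∀ t ≥ T, exp (-2 * t) ≤ μ t
  μ2 : ∀ t ≥ T, μ t ≤ 4 * exp (-2 * t)
  hx : ∀ t ≥ T, HasDerivAt x (-μ t) t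
  hμ : ∀ t ≥ T, HasDerivAt μ (2 * x t * μ t) t
  hU : ∀ t ≥ T, HasDerivAt U (U t ^ 2 / 2 + 2 * x t * U t - L t) t
  hL : ∀ t ≥ T, HasDerivAt L (-(μ t * K t)) t
  hK : ∀ t ≥ T, HasDerivAt K (μ t * P t) t
  hP : ∀ t ≥ T, HasDerivAt P (-(2 * W t * Z t)) t
  hW : ∀ t ≥ T, HasDerivAt W (-(μ t * Z t)) t
  hZ : ∀ t ≥ T, HasDerivAt Z (U t * Z t) t

variable {T : ℝ} {x μ U L K P W Z : ℝ → ℝ}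

lemma Sys.res (h : Sys T x μ U L K P W Z) {T' : ℝ} (hT' : T ≤ T') : Sys T' x μ U L K P W Z where
  hT := h.hT.trans hT'
  x1 := fun t ht => h.x1 t (hT'.trans ht)
  x2 := fun t ht => h.x2 t (hT'.trans ht)
  x3 := fun t ht => h.x3 t (hT'.trans ht)
  μ1 := fun t ht => h.μ1 t (hT'.trans ht)
  μ2 := fun t ht => h.μ2 t (hT'.trans ht)
  hx := fun t ht => h.hx t (hT'.trans ht)
  hμ := fun t ht => h.hμ t (hT'.trans ht)
  hU := fun t ht => h.hU t (hT'.trans ht)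
  hL := fun t ht => h.hL t (hT'.trans ht)
  hK := fun t ht => h.hK t (hT'.trans ht)
  hP := fun t ht => h.hP t (hT'.trans ht)
  hW := fun t ht => h.hW t (hT'.trans ht)
  hZ := fun t ht => h.hZ t (hT'.trans ht)

lemma Sys.neg (h : Sys T x μ U L K P W Z) :
    Sys T x μ U L K P (fun t => - W t) (fun t => - Z t) :=
  { h with
    hP := fun t ht => (h.hP t ht).congr_deriv (by ring)
    hW := fun t ht => (h.hW t ht).neg.congr_deriv (by ring)
    hZ := fun t ht => (h.hZ t ht).neg.congr_deriv (by ring) }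

lemma Sys.mupos (h : Sys T x μ U L K P W Z) : ∀ t ≥ T, 0 < μ t :=
  fun t ht => (exp_pos _).trans_le (h.μ1 t ht)

lemma Sys.xlb (h : Sys T x μ U L K P W Z) : ∀ t ≥ T, -1 < x t :=
  fun t ht => by have := h.x1 t ht; linarith

/-- conclusion of the decay analysis -/
def Dec (T : ℝ) (μ K W : ℝ → ℝ) : Prop :=
  ∃ C κ, 0 < κ ∧ κ < 1 ∧ ∃ T' ≥ T, ∀ t ≥ T', |μ t * K t| ≤ C * exp (-κ * t) ∧
    |W t| ≤ C * exp ((1 - κ) * t)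

lemma Sys.caseA (h : Sys T x μ U L K P W Z) (hA : ∀ t ≥ T, 0 ≤ W t * Z t) :
    Dec T μ K W := by
  have hT := h.hT
  have hW2 : ∀ t ≥ T, HasDerivAt (fun t => W t ^ 2) (-(2 * μ t * (W t * Z t))) t := fun t ht =>
    ((h.hW t ht).pow 2).congr_deriv (by ring)
  have W2anti := anti hW2 (fun t ht => by
    have := mul_nonneg (h.mupos t ht).le (hA t ht); linarith)
  have Panti := anti h.hP (fun t ht => by have := hA t ht; linarith)
  have μanti := anti h.hμ (fun t ht => by
    have := mul_nonneg (h.mupos t ht).le (neg_nonneg.2 (h.x3 t ht)); linarith)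
  have hPlow : ∀ t ≥ T, -(4 * |P T| + W T ^ 2) ≤ μ t * P t := by
    intro t ht
    have ht0 := h.mupos t ht
    have hd : ∀ s ∈ Set.Icc T t, HasDerivAt (fun s => μ t * P s - W s ^ 2)
        (μ t * (-(2 * W s * Z s)) - (-(2 * μ s * (W s * Z s)))) s := fun s hs =>
      ((h.hP s hs.1).const_mul (μ t)).sub (hW2 s hs.1)
    have : MonotoneOn (fun s => μ t * P s - W s ^ 2) (Set.Icc T t) := by
      apply monotoneOn_of_deriv_nonneg (convex_Icc T t)
      · exact fun s hs => (hd s hs).continuousAt.continuousWithinAt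
      · intro s hs
        exact (hd s (interior_subset hs)).differentiableAt.differentiableWithinAt
      · intro s hs
        have hs := interior_subset hs
        rw [(hd s hs).deriv]
        have h1 := μanti s t hs.1 hs.2
        have h2 := hA s hs.1
        have h3 := mul_nonneg (sub_nonneg.2 h1) h2
        linarith
    have h1 := this ⟨le_rfl, ht⟩ ⟨ht, le_rfl⟩ ht
    simp only at h1
    have h2 : μ t ≤ 4 := by
      have := h.μ2 t ht
      have : exp (-2 * t) ≤ 1 := by
        rw [exp_le_one_iff]; linarith
      linarith
    have h3 : -(4 * |P T|) ≤ μ t * P T := by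
      have := neg_abs_le (P T)
      have := abs_nonneg (P T)
      nlinarith
    have := sq_nonneg (W t)
    linarith
  set C := 4 * |P T| + W T ^ 2 with hC
  have hC0 : 0 ≤ C := by positivity
  have hPabs : ∀ t ≥ T, |μ t * P t| ≤ C := by
    intro t ht
    rw [abs_le]
    refine ⟨hPlow t ht, ?_⟩
    have h1 := Panti T t le_rfl ht
    have h2 : μ t ≤ 4 := by
      have := h.μ2 t ht
      have : exp (-2 * t) ≤ 1 := by
        rw [exp_le_one_iff]; linarith
      linarith
    have h3 := le_abs_self (P T)
    have h4 := h.mupos t ht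
    have h5 : μ t * P t ≤ μ t * |P T| := mul_le_mul_of_nonneg_left (h1.trans h3) h4.le
    have := abs_nonneg (P T)
    have := sq_nonneg (W T)
    nlinarith
  obtain ⟨D, hD, HD⟩ := growA (a := 1) (by linarith) one_pos hC0 h.hK (fun t ht => by
    have := hPabs t ht
    have e : 1 ≤ exp (1 * t) := by apply Real.one_le_exp; linarith
    nlinarith)
  refine ⟨4 * D + |W T|, 1 / 2, by norm_num, by norm_num, T, le_rfl, fun t ht => ⟨?_, ?_⟩⟩
  · rw [abs_mul, abs_of_pos (h.mupos t ht)]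
    have h1 := HD t ht
    have h2 := h.μ2 t ht
    have h3 : μ t * |K t| ≤ (4 * exp (-2 * t)) * (D * exp (1 * t)) := by gcongr
    have h4 : (4 * exp (-2 * t)) * (D * exp (1 * t)) = 4 * D * exp (-t) := by
      have : exp (-t) = exp (-2 * t) * exp (1 * t) := by rw [← exp_add]; ring_nf
      rw [this]; ring
    have h5 : exp (-t) ≤ exp (-(1 / 2) * t) := by
      apply exp_le_exp.2; linarith
    have := abs_nonneg (W T)
    have := exp_pos (-t)
    have := exp_pos (-(1 / 2) * t)
    nlinarith
  · have h1 := W2anti T t le_rfl ht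
    have h2 : |W t| ≤ |W T| := sq_le_sq.1 h1
    have e : 1 ≤ exp ((1 - 1 / 2) * t) := by apply Real.one_le_exp; linarith
    have := abs_nonneg (W T)
    nlinarith

/-- limit of `U` once `L` converges -/
lemma Sys.Uconv (h : Sys T x μ U L K P W Z) {lam : ℝ} (hl : Tendsto L atTop (𝓝 lam)) :
    ∃ τ, Tendsto U atTop (𝓝 τ) := by
  have hx0 : Tendsto x atTop (𝓝 (-1)) := by
    have e0 : Tendsto (fun t : ℝ => 2 * exp (-2 * t)) atTop (𝓝 0) := by
      have : Tendsto (fun t : ℝ => exp (-2 * t)) atTop (𝓝 0) := 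
        tendsto_exp_atBot.comp (tendsto_id.const_mul_atTop_of_neg (by norm_num))
      simpa using this.const_mul 2
    have : Tendsto (fun t => 1 + x t) atTop (𝓝 0) := by
      refine squeeze_zero' ?_ ?_ e0
      · filter_upwards [eventually_ge_atTop T] with t ht using (h.x1 t ht).le
      · filter_upwards [eventually_ge_atTop T] with t ht using h.x2 t ht
    have := this.sub_const 1
    simpa using this
  -- generic level
  have lev : ∀ c, c ^ 2 / 2 - 2 * c - lam ≠ 0 → (∀ᶠ t in atTop, c ≤ U t) ∨ (∀ᶠ t in atTop, U t ≤ c) := by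
    intro c hc
    have hg : Tendsto (fun t => c ^ 2 / 2 + 2 * x t * c - L t) atTop (𝓝 (c ^ 2 / 2 - 2 * c - lam)) := by
      have := ((tendsto_const_nhds (x := c ^ 2 / 2)).add ((hx0.const_mul 2).mul_const c)).sub hl
      convert this using 2; ring
    rcases lt_or_gt_of_ne hc with hc | hc
    · obtain ⟨T1, h1⟩ := eventually_atTop.1 (hg.eventually_lt_const hc)
      by_cases hex : ∃ t1 ≥ max T T1, U t1 ≤ c
      · obtain ⟨t1, ht1, hc1⟩ := hex
        right
        filter_upwards [eventually_ge_atTop t1] with t ht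
        refine barc (T := t1) (fun t ht => h.hU t (le_trans (le_max_left _ _) (ht1.trans ht))) hc1 ?_ t ht
        intro t ht e
        rw [e]; exact h1 t (le_trans (le_max_right _ _) (ht1.trans ht))
      · push Not at hex
        left
        filter_upwards [eventually_ge_atTop (max T T1)] with t ht using (hex t ht).le
    · obtain ⟨T1, h1⟩ := eventually_atTop.1 (hg.eventually_const_lt hc)
      by_cases hex : ∃ t1 ≥ max T T1, c ≤ U t1
      · obtain ⟨t1, ht1, hc1⟩ := hex
        left
        filter_upwards [eventually_ge_atTop t1] with t ht
        refine barc' (T := t1) (fun t ht => h.hU t (le_trans (le_max_left _ _) (ht1.trans ht))) hc1 ?_ t ht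
        intro t ht e
        rw [e]; exact h1 t (le_trans (le_max_right _ _) (ht1.trans ht))
      · push Not at hex
        right
        filter_upwards [eventually_ge_atTop (max T T1)] with t ht using (hex t ht).le
  obtain ⟨T0, hT0⟩ := eventually_atTop.1 (hl.eventually_le_const (lt_add_one lam))
  set M := 10 + |lam| with hM
  have hM1 : lam ≤ |lam| := le_abs_self _
  have hM0 : 0 ≤ |lam| := abs_nonneg _
  set T1 := max T T0
  have hd : ∀ t ≥ T1, HasDerivAt U (U t ^ 2 / 2 + 2 * x t * U t - L t) t := fun t ht =>
    h.hU t (le_trans (le_max_left _ _) ht)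
  have hbig : ∀ t ≥ T1, M ≤ |U t| → U t ^ 2 / 4 + 1 ≤ U t ^ 2 / 2 + 2 * x t * U t - L t := by
    intro t ht hU
    have h1 := hT0 t (le_trans (le_max_right _ _) ht)
    have hxa : |x t| ≤ 1 := abs_le.2 ⟨(h.xlb t (le_trans (le_max_left _ _) ht)).le,
      (h.x3 t (le_trans (le_max_left _ _) ht)).trans zero_le_one⟩
    have h2 : -|U t| ≤ x t * U t := by
      have : |x t * U t| ≤ |U t| := by
        rw [abs_mul]; have := abs_nonneg (U t); nlinarith
      have := neg_abs_le (x t * U t)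
      linarith
    have h3 : U t ^ 2 = |U t| ^ 2 := (sq_abs _).symm
    have h4 : 10 * |U t| ≤ |U t| ^ 2 := by nlinarith
    have h5 : |U t| ≥ 10 + |lam| := hU
    nlinarith
  have ub : ∀ᶠ t in atTop, U t ≤ M := by
    by_cases hex : ∃ t1 ≥ T1, M ≤ U t1
    · exfalso
      obtain ⟨t1, ht1, hc1⟩ := hex
      have hst : ∀ t ≥ t1, M ≤ U t := barc' (T := t1) (fun t ht => hd t (ht1.trans ht)) hc1 (by
        intro t ht e
        have := hbig t (ht1.trans ht) (by rw [e]; exact le_abs_self _)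
        have := sq_nonneg (U t)
        linarith)
      exact riccati (fun t ht => hd t (ht1.trans ht)) (fun t ht =>
        hbig t (ht1.trans ht) ((hst t ht).trans (le_abs_self _)))
    · push Not at hex
      filter_upwards [eventually_ge_atTop T1] with t ht using (hex t ht).le
  have lb : ∀ t ≥ T1, min (U T1) (-M) ≤ U t := barc' hd (min_le_left _ _) (by
    intro t ht e
    have h1 : U t ≤ -M := e ▸ min_le_right _ _
    have := hbig t ht (by have := neg_le_abs (U t); linarith)
    have := sq_nonneg (U t)
    linarith)
  have dense : Dense {c : ℝ | c ^ 2 / 2 - 2 * c - lam ≠ 0} := by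
    have : {c : ℝ | c ^ 2 / 2 - 2 * c - lam ≠ 0} = ({2 + √(4 + 2 * lam), 2 - √(4 + 2 * lam)} ∩ {c : ℝ | c ^ 2 / 2 - 2 * c - lam = 0} : Set ℝ)ᶜ := by
      ext c
      simp only [Set.mem_ofPred_eq, Set.mem_compl_iff, Set.mem_inter_iff, not_and', ne_eq,
        Set.mem_insert_iff, Set.mem_singleton_iff]
      constructor
      · intro h1 h2; exact absurd h2 h1
      · intro h1 h2
        apply h1 h2
        have h3 : 0 ≤ 4 + 2 * lam := by nlinarith [sq_nonneg (c - 2)]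
        have h4 : (c - 2 - √(4 + 2 * lam)) * (c - 2 + √(4 + 2 * lam)) = 0 := by
          have := Real.sq_sqrt h3
          nlinarith
        rcases mul_eq_zero.1 h4 with h | h
        · left; linarith
        · right; linarith
    rw [this]
    apply Set.Countable.dense_compl ℝ
    apply Set.Finite.countable
    apply Set.Finite.inter_of_left
    simp
  refine tendsto_of_no_upcrossings dense ?_ ⟨M, ub⟩ ⟨min (U T1) (-M), ?_⟩
  · rintro a ha b hb hab ⟨f1, f2⟩
    rcases lev a ha with h1 | h1
    · exact f1 (h1.mono fun t ht => not_lt.2 ht)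
    · exact f2 (h1.mono fun t ht => not_lt.2 (ht.trans hab.le))
  · exact eventually_map.2 ((eventually_ge_atTop T1).mono lb)

lemma Sys.xlim (h : Sys T x μ U L K P W Z) : Tendsto x atTop (𝓝 (-1)) := by
    have e0 : Tendsto (fun t : ℝ => 2 * exp (-2 * t)) atTop (𝓝 0) := by
      have : Tendsto (fun t : ℝ => exp (-2 * t)) atTop (𝓝 0) := 
        tendsto_exp_atBot.comp (tendsto_id.const_mul_atTop_of_neg (by norm_num))
      simpa using this.const_mul 2
    have : Tendsto (fun t => 1 + x t) atTop (𝓝 0) := by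
      refine squeeze_zero' ?_ ?_ e0
      · filter_upwards [eventually_ge_atTop T] with t ht using (h.x1 t ht).le
      · filter_upwards [eventually_ge_atTop T] with t ht using h.x2 t ht
    have := this.sub_const 1
    simpa using this

lemma Sys.gzero (h : Sys T x μ U L K P W Z) {lam τ : ℝ} (hl : Tendsto L atTop (𝓝 lam))
    (hτ : Tendsto U atTop (𝓝 τ)) : lam = τ ^ 2 / 2 - 2 * τ := by
  have := deriv_lim_zero h.hU hτ
    (((hτ.pow 2).div_const 2).add ((h.xlim.const_mul 2).mul hτ) |>.sub hl)
  linarith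

end TauProof
namespace TauProof

variable {T : ℝ} {x μ U L K P W Z : ℝ → ℝ}

lemma Sys.Zform (h : Sys T x μ U L K P W Z) :
    ∃ (I : ℝ → ℝ) (z : ℝ), ∀ t ≥ T, HasDerivAt I (U t) t ∧ Z t = z * exp (I t) := by
  have hc : Continuous (fun t => U (max t T)) := by
    rw [continuous_iff_continuousAt]
    intro t
    exact ContinuousAt.comp (f := fun t => max t T) (g := U) (h.hU _ (le_max_right _ _)).continuousAt
      (continuous_id.max continuous_const).continuousAt
  set I := fun t => ∫ s in T..t, U (max s T) with hI
  have hd : ∀ t ≥ T, HasDerivAt I (U t) t := by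
    intro t ht
    have := intervalIntegral.integral_hasDerivAt_right (hc.intervalIntegrable T t)
      hc.aestronglyMeasurable.stronglyMeasurableAtFilter hc.continuousAt
    simpa [max_eq_left ht] using this
  have hq : ∀ t ≥ T, HasDerivAt (fun t => Z t * exp (-I t)) 0 t := fun t ht =>
    ((h.hZ t ht).mul (hd t ht).neg.exp).congr_deriv (by ring)
  refine ⟨I, Z T * exp (-I T), fun t ht => ⟨hd t ht, ?_⟩⟩
  have h1 := mono hq (fun t ht => le_rfl) T t le_rfl ht
  have h2 := anti hq (fun t ht => le_rfl) T t le_rfl ht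
  have h3 : Z T * exp (-I T) = Z t * exp (-I t) := le_antisymm h1 h2
  rw [h3, mul_assoc, ← exp_add]; simp

lemma Sys.LconvB (h : Sys T x μ U L K P W Z) (hB : ∀ t ≥ T, W t * Z t ≤ 0) :
    ∃ lam C, 0 ≤ C ∧ Tendsto L atTop (𝓝 lam) ∧ ∀ t ≥ T, lam - C * exp (-2 * t) ≤ L t := by
  have Pm := mono h.hP (fun t ht => by have := hB t ht; linarith) T
  have Km := mono (f := fun t => K t - |P T| * x t)
    (f' := fun t => μ t * P t - |P T| * (-μ t))
    (fun t ht => (h.hK t ht).sub ((h.hx t ht).const_mul |P T|)) (fun t ht => by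
      have h1 := Pm t le_rfl ht
      have h2 := neg_abs_le (P T)
      have h3 := h.mupos t ht
      nlinarith) T
  set C := |K T| + |P T| with hC
  have hC0 : 0 ≤ C := by positivity
  have hK : ∀ t ≥ T, -C ≤ K t := by
    intro t ht
    have h1 := Km t le_rfl ht
    have h2 := neg_abs_le (K T)
    have h3 := h.xlb t ht
    have h4 := h.x3 T le_rfl
    have h5 := abs_nonneg (P T)
    nlinarith
  have La := anti (f := fun t => L t + C * x t)
    (f' := fun t => -(μ t * K t) + C * (-μ t))
    (fun t ht => (h.hL t ht).add ((h.hx t ht).const_mul C)) (fun t ht => by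
      have h1 := hK t ht
      have h3 := h.mupos t ht
      nlinarith)
  have hbd : ∃ m, ∀ t ≥ T, m ≤ L t + C * x t := by
    by_contra hcon
    push Not at hcon
    obtain ⟨t1, ht1, h1⟩ := hcon (-5 - C)
    refine riccati (T := t1) (fun t ht => h.hU t (ht1.trans ht)) (fun t ht => ?_)
    have h2 := La t1 t ht1 ht
    have h3 := h.xlb t (ht1.trans ht)
    have h4 := h.x3 t (ht1.trans ht)
    have h5 : L t ≤ -5 := by nlinarith
    nlinarith [sq_nonneg (U t / 2 + 2 * x t)]
  obtain ⟨m, hm⟩ := hbd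
  obtain ⟨l, hl, hle⟩ := mono_conv (f := fun t => -(L t + C * x t)) (T := T) (M := -m)
    (fun s t hs hst => neg_le_neg (La s t hs hst)) (fun t ht => neg_le_neg (hm t ht))
  refine ⟨-l + C, 2 * C, by positivity, ?_, fun t ht => ?_⟩
  · have := hl.neg.sub (h.xlim.const_mul C)
    simpa using this
  · have h1 := hle t ht
    have h2 := h.x2 t ht
    nlinarith

lemma Sys.tau_lt (h : Sys T x μ U L K P W Z) {I : ℝ → ℝ} {z : ℝ} (hz : 0 < z)
    (hI : ∀ t ≥ T, HasDerivAt I (U t) t) (hZ : ∀ t ≥ T, Z t = z * exp (I t))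
    {lam τ C : ℝ} (hC : 0 ≤ C) (hl : Tendsto L atTop (𝓝 lam))
    (hlow : ∀ t ≥ T, lam - C * exp (-2 * t) ≤ L t)
    (hτ : Tendsto U atTop (𝓝 τ)) : τ < 3 := by
  by_contra hcon
  push Not at hcon
  -- lower bound for U
  have hUlow : ∃ D, 0 ≤ D ∧ ∃ T1 ≥ T, ∀ t ≥ T1, 3 - D * exp (-2 * t) ≤ U t := by
    rcases hcon.lt_or_eq with h3 | h3
    · obtain ⟨T1, hT1⟩ := eventually_atTop.1 (hτ.eventually_const_le h3)
      refine ⟨0, le_rfl, max T T1, le_max_left _ _, fun t ht => ?_⟩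
      have := hT1 t (le_trans (le_max_right _ _) ht)
      simpa using this
    · subst h3
      have hlam := h.gzero hl hτ
      obtain ⟨T0, hT0⟩ := eventually_atTop.1
        ((hτ.eventually_const_le (show (2:ℝ) < 3 by norm_num)).and
          (hτ.eventually_le_const (show (3:ℝ) < 4 by norm_num)))
      refine ⟨2 * (C + 16) + 1, by positivity, max T T0, le_max_left _ _, fun t1 ht1 => ?_⟩
      by_contra hc
      push Not at hc
      have hTt : T ≤ t1 := le_trans (le_max_left _ _) ht1
      have hst := barc (T := t1) (b := U t1) (fun t ht => h.hU t (hTt.trans ht)) le_rfl (by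
        intro t ht e
        obtain ⟨h1, h2⟩ := hT0 t (le_trans (le_max_right _ _) (ht1.trans ht))
        have h3 := hlow t (hTt.trans ht)
        have h4 := h.x2 t (hTt.trans ht)
        have h5 := h.x1 t (hTt.trans ht)
        have h6 : exp (-2 * t) ≤ exp (-2 * t1) := exp_le_exp.2 (by linarith)
        have h7 := exp_pos (-2 * t)
        have h8 : U t < 3 - (2 * (C + 16) + 1) * exp (-2 * t) := by
          rw [e]; nlinarith
        have h9 : 2 * x t * U t ≤ -2 * U t + 16 * exp (-2 * t) := by nlinarith
        have h10 : U t ^ 2 / 2 - 2 * U t - lam ≤ (U t - 3) / 2 := by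
          have h11 : U t < 3 := by nlinarith
          rw [hlam]; nlinarith [mul_nonneg (sub_nonneg.2 h11.le) (sub_nonneg.2 h1)]
        nlinarith)
      have hlt : U t1 < 3 := by
        have := exp_pos (-2 * t1)
        nlinarith
      have := le_of_tendsto hτ ((eventually_ge_atTop t1).mono hst)
      linarith
  obtain ⟨D, hD, T1, hT1, hU⟩ := hUlow
  have h := h.res hT1
  have hI1 := mono (T := T1) (f := fun t => I t - 3 * t - D / 2 * exp (-2 * t))
    (f' := fun t => U t - 3 - D / 2 * (-2) * exp (-2 * t)) (fun t ht => by
      have h3 := ((hI t (hT1.trans ht)).sub ((hasDerivAt_id t).const_mul 3)).sub (hexp (-2) (D / 2) t)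
      exact h3.congr_deriv (by simp)) (fun t ht => by
      have := hU t ht; linarith) T1
  set c0 := I T1 - 3 * T1 - D / 2 * exp (-2 * T1) with hc0
  have hZ1 : ∀ t ≥ T1, z * exp c0 * exp (3 * t) ≤ Z t := by
    intro t ht
    rw [hZ t (hT1.trans ht), mul_assoc, ← exp_add]
    have := hI1 t le_rfl ht
    have h2 := exp_pos (-2 * t)
    gcongr
    nlinarith
  set c1 := z * exp c0 with hc1
  have hc1p : 0 < c1 := by positivity
  obtain ⟨d2, hd2, T2, hT2, hW⟩ := growL (T := T1) (a := 1) (c := c1) (f := fun t => -W t)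
    (f' := fun t => μ t * Z t) one_pos hc1p
    (fun t ht => (h.hW t ht).neg.congr_deriv (by ring)) (fun t ht => by
      have h1 := h.μ1 t ht
      have h2 := hZ1 t ht
      have h3 := exp_pos (-2 * t)
      have h0 := (h.mupos t ht).le
      have e : exp (1 * t) = exp (-2 * t) * exp (3 * t) := by rw [← exp_add]; ring_nf
      calc c1 * exp (1 * t) = exp (-2 * t) * (c1 * exp (3 * t)) := by rw [e]; ring
        _ ≤ μ t * Z t := by gcongr)
  have h := h.res hT2
  obtain ⟨d3, hd3, T3, hT3, hP⟩ := growL (T := T2) (a := 4) (c := 2 * d2 * c1) (f := P)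
    (by norm_num) (by positivity) h.hP (fun t ht => by
      have h1 := hW t ht
      have h2 := hZ1 t (hT2.trans ht)
      have e : exp (4 * t) = exp (1 * t) * exp (3 * t) := by rw [← exp_add]; ring_nf
      calc 2 * d2 * c1 * exp (4 * t) = 2 * ((d2 * exp (1 * t)) * (c1 * exp (3 * t))) := by
            rw [e]; ring
        _ ≤ 2 * ((- W t) * Z t) := by
            have : 0 < -W t := lt_of_lt_of_le (by positivity) h1
            gcongr
        _ = _ := by ring)
  have h := h.res hT3
  obtain ⟨d4, hd4, T4, hT4, hK⟩ := growL (T := T3) (a := 2) (c := d3) (f := K)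
    (by norm_num) hd3 h.hK (fun t ht => by
      have h1 := hP t ht
      have h2 := h.μ1 t ht
      have h3 := exp_pos (-2 * t)
      have h0 := (h.mupos t ht).le
      have e : exp (2 * t) = exp (-2 * t) * exp (4 * t) := by rw [← exp_add]; ring_nf
      calc d3 * exp (2 * t) = exp (-2 * t) * (d3 * exp (4 * t)) := by rw [e]; ring
        _ ≤ μ t * P t := by gcongr)
  have h := h.res hT4
  have hLa := anti (T := T4) (f := fun t => L t + d4 * t) (f' := fun t => -(μ t * K t) + d4)
    (fun t ht => ((h.hL t ht).add ((hasDerivAt_id t).const_mul d4)).congr_deriv (by simp))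
    (fun t ht => by
      have h1 := hK t ht
      have h2 := h.μ1 t ht
      have h3 := exp_pos (-2 * t)
      have h0 := (h.mupos t ht).le
      have e : exp (-2 * t) * exp (2 * t) = 1 := by rw [← exp_add]; simp
      have e1 : d4 = exp (-2 * t) * (d4 * exp (2 * t)) := by
        rw [mul_left_comm, e, mul_one]
      have e2 : exp (-2 * t) * (d4 * exp (2 * t)) ≤ μ t * K t := by gcongr
      rw [← e1] at e2
      linarith) T4
  have hbot : Tendsto L atTop atBot := by
    have h2 : Tendsto (fun t => (L T4 + d4 * T4) + (-d4) * t) atTop atBot :=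
      tendsto_atBot_add_const_left _ _ (tendsto_id.const_mul_atTop_of_neg (by linarith))
    refine tendsto_atBot_mono' _ ?_ h2
    filter_upwards [eventually_ge_atTop T4] with t ht
    have := hLa t le_rfl ht
    linarith
  exact not_tendsto_nhds_of_tendsto_atBot hbot _ hl

lemma Sys.decB (h : Sys T x μ U L K P W Z) {I : ℝ → ℝ} {z : ℝ} (hz : 0 < z)
    (hI : ∀ t ≥ T, HasDerivAt I (U t) t) (hZ : ∀ t ≥ T, Z t = z * exp (I t))
    {τ : ℝ} (hτ : Tendsto U atTop (𝓝 τ)) (h3 : τ < 3) : Dec T μ K W := by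
  obtain ⟨a, ha1, ha2⟩ := exists_between (max_lt h3 (show (2:ℝ) < 3 by norm_num))
  have ha3 : τ < a := (le_max_left _ _).trans_lt ha1
  have ha4 : 2 < a := (le_max_right _ _).trans_lt ha1
  obtain ⟨T0, hT0⟩ := eventually_atTop.1 (hτ.eventually_le_const ha3)
  set T1 := max T T0
  have hT1 : T ≤ T1 := le_max_left _ _
  have h := h.res hT1
  have hTp : 0 ≤ T1 := by have := h.hT; linarith
  have hI1 := anti (T := T1) (f := fun t => I t - a * t)
    (f' := fun t => U t - a) (fun t ht => by
      have h3 := ((hI t (hT1.trans ht)).sub ((hasDerivAt_id t).const_mul a))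
      exact h3.congr_deriv (by simp)) (fun t ht => by
      have := hT0 t ((le_max_right _ _).trans ht); linarith) T1
  set c1 := z * exp (I T1 - a * T1)
  have hc1 : 0 < c1 := by positivity
  have hZ1 : ∀ t ≥ T1, |Z t| ≤ c1 * exp (a * t) := by
    intro t ht
    rw [hZ t (hT1.trans ht), abs_of_pos (by positivity), mul_assoc, ← exp_add]
    have := hI1 t le_rfl ht
    gcongr
    linarith
  have hμ : ∀ t ≥ T1, |μ t| ≤ 4 * exp (-2 * t) := fun t ht => by
    rw [abs_of_pos (h.mupos t ht)]; exact h.μ2 t ht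
  obtain ⟨D2, hD2, hW⟩ := growA (T := T1) (a := a - 2) (C := 4 * c1) hTp (by linarith) (by positivity)
    h.hW (fun t ht => by
      have h1 := hμ t ht
      have h2 := hZ1 t ht
      have e : exp ((a - 2) * t) = exp (-2 * t) * exp (a * t) := by rw [← exp_add]; ring_nf
      rw [abs_neg, abs_mul]
      calc |μ t| * |Z t| ≤ (4 * exp (-2 * t)) * (c1 * exp (a * t)) := by gcongr
        _ = _ := by rw [e]; ring)
  obtain ⟨D3, hD3, hP⟩ := growA (T := T1) (a := 2 * a - 2) (C := 2 * D2 * c1) hTp (by linarith)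
    (by positivity) h.hP (fun t ht => by
      have h1 := hW t ht
      have h2 := hZ1 t ht
      have e : exp ((2 * a - 2) * t) = exp ((a - 2) * t) * exp (a * t) := by
        rw [← exp_add]; ring_nf
      rw [abs_neg, abs_mul, abs_mul, abs_two]
      calc 2 * |W t| * |Z t| ≤ 2 * (D2 * exp ((a - 2) * t)) * (c1 * exp (a * t)) := by gcongr
        _ = _ := by rw [e]; ring)
  obtain ⟨D4, hD4, hK⟩ := growA (T := T1) (a := 2 * a - 4) (C := 4 * D3) hTp (by linarith)
    (by positivity) h.hK (fun t ht => by
      have h1 := hμ t ht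
      have h2 := hP t ht
      have e : exp ((2 * a - 4) * t) = exp (-2 * t) * exp ((2 * a - 2) * t) := by
        rw [← exp_add]; ring_nf
      rw [abs_mul]
      calc |μ t| * |P t| ≤ (4 * exp (-2 * t)) * (D3 * exp ((2 * a - 2) * t)) := by gcongr
        _ = _ := by rw [e]; ring)
  refine ⟨4 * D4 + D2, 3 - a, by linarith, by linarith, T1, hT1, fun t ht => ⟨?_, ?_⟩⟩
  · have h1 := hμ t ht
    have h2 := hK t ht
    have h0 : 0 ≤ t := hTp.trans ht
    have e : exp ((2 * a - 6) * t) = exp (-2 * t) * exp ((2 * a - 4) * t) := by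
        rw [← exp_add]; ring_nf
    rw [abs_mul]
    calc |μ t| * |K t| ≤ (4 * exp (-2 * t)) * (D4 * exp ((2 * a - 4) * t)) := by gcongr
      _ = 4 * D4 * exp ((2 * a - 6) * t) := by rw [e]; ring
      _ ≤ (4 * D4 + D2) * exp (-(3 - a) * t) := by
        gcongr
        · linarith
        · linarith
  · have h1 := hW t ht
    have e : (1 - (3 - a)) = a - 2 := by ring
    rw [e]
    refine h1.trans ?_
    gcongr
    linarith

lemma Sys.dec_of_pos (h : Sys T x μ U L K P W Z) {I : ℝ → ℝ} {z : ℝ} (hz : 0 < z)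
    (hI : ∀ t ≥ T, HasDerivAt I (U t) t) (hZ : ∀ t ≥ T, Z t = z * exp (I t)) : Dec T μ K W := by
  have hZp : ∀ t ≥ T, 0 < Z t := fun t ht => by rw [hZ t ht]; positivity
  by_cases hex : ∃ t1 ≥ T, W t1 < 0
  · obtain ⟨t1, ht1, hW1⟩ := hex
    have Wa := anti h.hW (fun t ht => by
      have := mul_pos (h.mupos t ht) (hZp t ht); linarith) t1
    have h' := h.res ht1
    have hB : ∀ t ≥ t1, W t * Z t ≤ 0 := fun t ht => by
      have h1 := Wa t ht1 ht
      have h2 := hZp t (ht1.trans ht)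
      nlinarith
    obtain ⟨lam, C, hC, hl, hlow⟩ := h'.LconvB hB
    obtain ⟨τ, hτ⟩ := h'.Uconv hl
    have h3 := h'.tau_lt hz (fun t ht => hI t (ht1.trans ht)) (fun t ht => hZ t (ht1.trans ht))
      hC hl hlow hτ
    exact h.decB hz hI hZ hτ h3
  · push Not at hex
    exact h.caseA (fun t ht => mul_nonneg (hex t ht) (hZp t ht).le)

lemma Sys.dec (h : Sys T x μ U L K P W Z) : Dec T μ K W := by
  obtain ⟨I, z, hI⟩ := h.Zform
  rcases lt_trichotomy z 0 with hz | hz | hz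
  · obtain ⟨C, κ, h1, h2, T', hT', H⟩ := h.neg.dec_of_pos (I := I) (z := -z) (by linarith)
      (fun t ht => (hI t ht).1) (fun t ht => by rw [(hI t ht).2]; ring)
    exact ⟨C, κ, h1, h2, T', hT', fun t ht => ⟨(H t ht).1, by simpa using (H t ht).2⟩⟩
  · exact h.caseA (fun t ht => by rw [(hI t ht).2, hz]; simp)
  · exact h.dec_of_pos hz (fun t ht => (hI t ht).1) (fun t ht => (hI t ht).2)

end TauProof
namespace TauProof

lemma inv_sq_anti {D s t : ℝ} (hD : 0 ≤ D) (hs : 0 < s) (hst : s ≤ t) : D / t ^ 2 ≤ D / s ^ 2 := by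
  gcongr

lemma rate_pos {V F : ℝ → ℝ} {T m C : ℝ} (hT : 1 ≤ T) (hm : 0 < m) (hC : 0 ≤ C)
    (hV : ∀ t ≥ T, HasDerivAt V (F t) t)
    (hF : ∀ t ≥ T, |F t - m * V t| ≤ m / 2 * |V t| + C / t ^ 2)
    (h0 : Tendsto V atTop (𝓝 0)) : ∀ t ≥ T, V t ≤ (2 * C / m + 1) / t ^ 2 := by
  intro t1 ht1
  by_contra hc
  push Not at hc
  have hp1 : 0 < t1 := by linarith
  set D := 2 * C / m + 1 with hD
  have hDp : 0 < D := by positivity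
  have hb : 0 < V t1 := lt_of_le_of_lt (by positivity) hc
  have hst := barc' (T := t1) (b := V t1) (fun t ht => hV t (ht1.trans ht)) le_rfl (by
    intro t ht e
    have h1 := (abs_le.1 (hF t (ht1.trans ht))).1
    rw [e, abs_of_pos hb] at h1
    have h2 := inv_sq_anti hDp.le hp1 ht
    have h3 : C / t ^ 2 < m / 2 * (D / t ^ 2) := by
      have : m / 2 * (D / t ^ 2) = (m / 2 * D) / t ^ 2 := by ring
      rw [this]
      have : 0 < t := by linarith
      gcongr
      rw [hD]; field_simp; linarith
    nlinarith)
  have := ge_of_tendsto h0 ((eventually_ge_atTop t1).mono hst)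
  linarith

lemma rate_neg {V F : ℝ → ℝ} {T n C : ℝ} (hT : 1 ≤ T) (hn : 0 < n) (hC : 0 ≤ C) (hT' : 8 ≤ n * T)
    (hV : ∀ t ≥ T, HasDerivAt V (F t) t)
    (hF : ∀ t ≥ T, |F t + n * V t| ≤ n / 2 * |V t| + C / t ^ 2) :
    ∀ t ≥ T, V t ≤ (4 * C / n + 1 + T ^ 2 * |V T|) / t ^ 2 := by
  set D := 4 * C / n + 1 + T ^ 2 * |V T| with hD
  have hDp : 0 < D := by positivity
  refine bar (B' := fun t => - (2 * D / t ^ 3)) hV (fun t ht => ?_) ?_ (fun t ht e => ?_)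
  · have htp : t ≠ 0 := by intro h; linarith
    have := ((hasDerivAt_const t D).div ((hasDerivAt_id t).pow 2) (by simpa using htp))
    refine this.congr_deriv ?_
    simp; field_simp
  · rw [le_div_iff₀ (by positivity)]
    have := le_abs_self (V T)
    have : 0 ≤ 4 * C / n := by positivity
    nlinarith [sq_nonneg T]
  · have htp : 0 < t := by linarith
    have hb : 0 < V t := by rw [e]; positivity
    have h1 := (abs_le.1 (hF t ht)).2
    rw [abs_of_pos hb, e] at h1
    have h2 : 2 * D / t ^ 3 ≤ n / 4 * (D / t ^ 2) := by
      rw [div_le_iff₀ (by positivity)]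
      have : n / 4 * (D / t ^ 2) * t ^ 3 = n / 4 * D * t := by field_simp
      rw [this]
      have : 8 ≤ n * t := by nlinarith
      nlinarith
    have h3 : C / t ^ 2 < n / 4 * (D / t ^ 2) := by
      have : n / 4 * (D / t ^ 2) = (n / 4 * D) / t ^ 2 := by ring
      rw [this]
      gcongr
      rw [hD]
      have h5 : n / 4 * (4 * C / n) = C := by field_simp
      have : 0 ≤ T ^ 2 * |V T| := by positivity
      nlinarith
    have : n * (D / t ^ 2) = n / 2 * (D / t ^ 2) + n / 4 * (D / t ^ 2) + n / 4 * (D / t ^ 2) := by ring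
    linarith

lemma rate_zero {V F : ℝ → ℝ} {T C : ℝ} (hT : 1 ≤ T) (hC : 0 ≤ C)
    (hV : ∀ t ≥ T, HasDerivAt V (F t) t)
    (hF : ∀ t ≥ T, |F t - V t ^ 2 / 2| ≤ C / t ^ 2)
    (h0 : Tendsto V atTop (𝓝 0)) : ∃ D, 0 ≤ D ∧ ∀ t ≥ T, |V t| ≤ D / t := by
  set D := 4 + C + T * |V T| with hD
  have hDp : 4 + C ≤ D := by
    have : 0 ≤ T * |V T| := by positivity
    linarith
  have hD2 : D + C < D ^ 2 / 2 := by nlinarith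
  refine ⟨D, by linarith, ?_⟩
  have lo : ∀ t ≥ T, -V t ≤ D / t := by
    refine bar (B' := fun t => - (D / t ^ 2)) (fun t ht => (hV t ht).neg) (fun t ht => ?_) ?_
      (fun t ht e => ?_)
    · have htp : t ≠ 0 := by intro h; linarith
      have := ((hasDerivAt_const t D).div (hasDerivAt_id t) (by simpa using htp))
      refine this.congr_deriv ?_
      simp; field_simp
    · rw [le_div_iff₀ (by positivity)]
      have := neg_le_abs (V T)
      nlinarith
    · have htp : 0 < t := by linarith
      have h1 := (abs_le.1 (hF t ht)).1
      have h2 : V t ^ 2 = D ^ 2 / t ^ 2 := by rw [← neg_sq, e]; ring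
      rw [h2] at h1
      have h3 : (D + C) / t ^ 2 < (D ^ 2 / 2) / t ^ 2 := by gcongr
      have h4 : (D + C) / t ^ 2 = D / t ^ 2 + C / t ^ 2 := by ring
      have h5 : (D ^ 2 / 2) / t ^ 2 = D ^ 2 / t ^ 2 / 2 := by ring
      linarith
  intro t1 ht1
  rw [abs_le]
  refine ⟨by have := lo t1 ht1; linarith, ?_⟩
  by_contra hc
  push Not at hc
  have hp1 : 0 < t1 := by linarith
  have hb : 0 < V t1 := lt_of_le_of_lt (div_nonneg (by linarith) hp1.le) hc
  have hst := barc' (T := t1) (b := V t1) (fun t ht => hV t (ht1.trans ht)) le_rfl (by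
    intro t ht e
    have htp : 0 < t := by linarith
    have h1 := (abs_le.1 (hF t (ht1.trans ht))).1
    have h2 : D / t < V t := by
      rw [e]; refine lt_of_le_of_lt ?_ hc
      have : 0 ≤ D := by linarith
      gcongr
    have h3 : (D / t) ^ 2 ≤ V t ^ 2 := by
      have : 0 ≤ D / t := div_nonneg (by linarith) htp.le
      gcongr
    have h4 : C / t ^ 2 < (D ^ 2 / 2) / t ^ 2 := by gcongr; linarith
    have h5 : (D ^ 2 / 2) / t ^ 2 = (D / t) ^ 2 / 2 := by ring
    linarith)
  have := ge_of_tendsto h0 ((eventually_ge_atTop t1).mono hst)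
  linarith

lemma rate {V F : ℝ → ℝ} {T m C : ℝ} (hT : 1 ≤ T) (hC : 0 ≤ C)
    (hV : ∀ t ≥ T, HasDerivAt V (F t) t)
    (hF : ∀ t ≥ T, |F t - (m * V t + V t ^ 2 / 2)| ≤ C / t ^ 2)
    (h0 : Tendsto V atTop (𝓝 0)) : ∃ D, ∃ T' ≥ T, ∀ t ≥ T', |F t| ≤ D / t ^ 2 := by
  by_cases hm : m = 0
  · subst hm
    have hF : ∀ t ≥ T, |F t - V t ^ 2 / 2| ≤ C / t ^ 2 := fun t ht => by simpa using hF t ht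
    obtain ⟨D, hD, H⟩ := rate_zero hT hC hV hF h0
    refine ⟨D ^ 2 / 2 + C, T, le_rfl, fun t ht => ?_⟩
    have h1 := hF t ht
    have h2 := H t ht
    have h3 : V t ^ 2 / 2 ≤ (D / t) ^ 2 / 2 := by
      rw [← sq_abs]; gcongr
    have h4 : |F t| ≤ |F t - V t ^ 2 / 2| + |V t ^ 2 / 2| := by
      have := abs_add_le (F t - V t ^ 2 / 2) (V t ^ 2 / 2); simpa using this
    rw [abs_of_nonneg (show 0 ≤ V t ^ 2 / 2 by positivity)] at h4
    have : (D ^ 2 / 2 + C) / t ^ 2 = C / t ^ 2 + (D / t) ^ 2 / 2 := by ring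
    linarith
  · have hmp : 0 < |m| := abs_pos.2 hm
    have hev : ∀ᶠ t in atTop, |V t| ≤ |m| := by
      have := (h0.abs).eventually_le_const (u := |m|) (by rw [abs_zero]; exact hmp)
      exact this
    obtain ⟨T1, hT1⟩ := eventually_atTop.1 hev
    set T2 := max (max T T1) (8 / |m|)
    have hT2 : T ≤ T2 := (le_max_left _ _).trans (le_max_left _ _)
    have hT21 : T1 ≤ T2 := (le_max_right _ _).trans (le_max_left _ _)
    have hT28 : 8 ≤ |m| * T2 := by
      have := le_max_right (max T T1) (8 / |m|)
      rw [div_le_iff₀ hmp] at this; linarith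
    have hF2 : ∀ t ≥ T2, |F t - m * V t| ≤ |m| / 2 * |V t| + C / t ^ 2 := by
      intro t ht
      have h1 := hF t (hT2.trans ht)
      have h2 := hT1 t (hT21.trans ht)
      have h3 : |F t - m * V t| ≤ |F t - (m * V t + V t ^ 2 / 2)| + |V t ^ 2 / 2| := by
        have e : F t - m * V t = (F t - (m * V t + V t ^ 2 / 2)) + V t ^ 2 / 2 := by ring
        rw [e]; exact abs_add_le _ _
      rw [abs_of_nonneg (show 0 ≤ V t ^ 2 / 2 by positivity)] at h3
      have hs : V t ^ 2 = |V t| ^ 2 := (sq_abs _).symm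
      rw [hs] at h3 h1
      have := abs_nonneg (V t)
      nlinarith
    have hVb : ∃ D, ∀ t ≥ T2, |V t| ≤ D / t ^ 2 := by
      rcases lt_or_gt_of_ne hm with hm | hm
      · rw [abs_of_neg hm] at hF2 hT28
        have a1 := rate_neg (n := -m) (hT.trans hT2) (by linarith) hC hT28
          (fun t ht => hV t (hT2.trans ht)) (fun t ht => by
            have := hF2 t ht
            have e : F t - -(-m) * V t = F t - m * V t := by ring
            first | rw [e]; exact this | (convert this using 2; ring))
        have a2 := rate_neg (V := fun t => - V t) (F := fun t => - F t) (n := -m) (hT.trans hT2)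
          (by linarith) hC hT28
          (fun t ht => (hV t (hT2.trans ht)).neg) (fun t ht => by
            have := hF2 t ht; rw [← abs_neg, abs_neg (V t)]; convert this using 2; ring)
        simp only [abs_neg] at a2
        exact ⟨_, fun t ht => abs_le.2 ⟨by have := a2 t ht; linarith, a1 t ht⟩⟩
      · rw [abs_of_pos hm] at hF2
        have a1 := rate_pos (hT.trans hT2) hm hC (fun t ht => hV t (hT2.trans ht)) hF2 h0
        have a2 := rate_pos (V := fun t => - V t) (F := fun t => - F t) (hT.trans hT2) hm hC
          (fun t ht => (hV t (hT2.trans ht)).neg) (fun t ht => by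
            have := hF2 t ht; rw [← abs_neg, abs_neg (V t)]; convert this using 2; ring)
          (by simpa using h0.neg)
        exact ⟨_, fun t ht => abs_le.2 ⟨by have := a2 t ht; linarith, a1 t ht⟩⟩
    obtain ⟨D, hD⟩ := hVb
    refine ⟨3 / 2 * |m| * D + C, T2, hT2, fun t ht => ?_⟩
    have h1 := hD t ht
    have h2 := hF2 t ht
    have h4 : |F t| ≤ |F t - m * V t| + |m * V t| := by
      have := abs_add_le (F t - m * V t) (m * V t); simpa using this
    rw [abs_mul] at h4
    have : (3 / 2 * |m| * D + C) / t ^ 2 = 3 / 2 * |m| * (D / t ^ 2) + C / t ^ 2 := by ring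
    rw [this]
    nlinarith

lemma exp_sq_bound {κ : ℝ} (hκ : 0 < κ) : ∃ C, 0 ≤ C ∧ ∀ t, 0 < t → exp (-κ * t) ≤ C / t ^ 2 := by
  refine ⟨2 / κ ^ 2, by positivity, fun t ht => ?_⟩
  have h1 := Real.quadratic_le_exp_of_nonneg (x := κ * t) (by positivity)
  rw [le_div_iff₀ (by positivity), neg_mul, exp_neg, inv_mul_le_iff₀ (exp_pos _)]
  have : exp (κ * t) * (2 / κ ^ 2) ≥ (1 + κ * t + (κ * t) ^ 2 / 2) * (2 / κ ^ 2) := by gcongr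
  have e : (1 + κ * t + (κ * t) ^ 2 / 2) * (2 / κ ^ 2) = (1 + κ * t) * (2 / κ ^ 2) + t ^ 2 := by
    field_simp
  have : 0 ≤ (1 + κ * t) * (2 / κ ^ 2) := by positivity
  linarith

variable {T : ℝ} {x μ U L K P W Z : ℝ → ℝ}

theorem Sys.main (h : Sys T x μ U L K P W Z) :
    ∃ τ, Tendsto U atTop (𝓝 τ) ∧ ∃ C, 0 ≤ C ∧ ∃ T' ≥ T, ∀ t ≥ T',
      |U t ^ 2 / 2 + 2 * x t * U t - L t| * t ^ 2 ≤ C ∧ |W t| * exp (-t) * t ^ 2 ≤ C ∧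
      |U t| * exp (-t) * t ^ 2 ≤ C := by
  obtain ⟨C, κ, hκ, hκ1, T1, hT1, H⟩ := h.dec
  have h := h.res hT1
  have hC : 0 ≤ C := by
    have h1 := (abs_nonneg _).trans (H T1 le_rfl).1
    exact nonneg_of_mul_nonneg_left h1 (exp_pos _)
  obtain ⟨lam, hl, hL⟩ := expdec_conv hκ h.hL (fun t ht => by rw [abs_neg]; exact (H t ht).1)
  obtain ⟨τ, hτ⟩ := h.Uconv hl
  have hlam := h.gzero hl hτ
  obtain ⟨E, hE0, hE⟩ := exp_sq_bound hκ
  obtain ⟨E1, hE10, hE1⟩ := exp_sq_bound (show (0:ℝ) < 1 by norm_num)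
  obtain ⟨E2, hE20, hE2⟩ := exp_sq_bound (show (0:ℝ) < 2 by norm_num)
  have hUb : ∀ᶠ t in atTop, |U t| ≤ |τ| + 1 := hτ.abs.eventually_le_const (lt_add_one _)
  obtain ⟨T2, hT2⟩ := eventually_atTop.1 hUb
  set T3 := max T1 T2
  have hT31 : T1 ≤ T3 := le_max_left _ _
  have h := h.res hT31
  have hT3 := h.hT
  set C1 := C / κ * E + 4 * (|τ| + 1) * E2
  have hC1 : 0 ≤ C1 := by positivity
  have h0 : Tendsto (fun t => U t - τ) atTop (𝓝 0) := by
    have := hτ.sub_const τ; simpa using this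
  obtain ⟨D, T4, hT4, hD⟩ := rate (V := fun t => U t - τ) (m := τ - 2) hT3 hC1
    (fun t ht => (h.hU t ht).sub_const τ) (fun t ht => by
      have htp : 0 < t := by linarith
      have h1 := hL t (hT31.trans ht)
      have h2 := hT2 t ((le_max_right _ _).trans ht)
      have h3 := hE t htp
      have h4 := hE2 t htp
      have h5 := h.x1 t ht
      have h6 := h.x2 t ht
      have e : U t ^ 2 / 2 + 2 * x t * U t - L t - ((τ - 2) * (U t - τ) + (U t - τ) ^ 2 / 2)
          = - (L t - lam) + 2 * (1 + x t) * U t := by rw [hlam]; ring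
      rw [e]
      have h7 : |2 * (1 + x t) * U t| ≤ 2 * (2 * exp (-2 * t)) * (|τ| + 1) := by
        rw [abs_mul, abs_of_pos (by positivity)]
        gcongr
      have h8 := abs_add_le (- (L t - lam)) (2 * (1 + x t) * U t)
      rw [abs_neg] at h8
      have h9 : C / κ * exp (-κ * t) ≤ C / κ * (E / t ^ 2) := by gcongr
      have h10 : 2 * (2 * exp (-2 * t)) * (|τ| + 1) ≤ 2 * (2 * (E2 / t ^ 2)) * (|τ| + 1) := by
        gcongr
      have e2 : C1 / t ^ 2 = C / κ * (E / t ^ 2) + 2 * (2 * (E2 / t ^ 2)) * (|τ| + 1) := by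
        simp only [C1]; ring
      linarith) h0
  refine ⟨τ, hτ, |D| + C * E + (|τ| + 1) * E1, by positivity, T4, hT1.trans (hT31.trans hT4), fun t ht => ?_⟩
  have htp : 0 < t := by linarith
  have htp2 : 0 < t ^ 2 := by positivity
  have a1 : 0 ≤ C * E := by positivity
  have a2 : 0 ≤ (|τ| + 1) * E1 := by positivity
  have a3 := abs_nonneg D
  refine ⟨?_, ?_, ?_⟩
  · have h1 := hD t ht
    rw [le_div_iff₀ htp2] at h1
    have := le_abs_self D
    linarith
  · have h1 := (H t (hT31.trans (hT4.le.trans ht))).2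
    have h3 := hE t htp
    rw [le_div_iff₀ htp2] at h3
    have : |W t| * exp (-t) ≤ C * exp (-κ * t) := by
      calc |W t| * exp (-t) ≤ C * exp ((1 - κ) * t) * exp (-t) := by gcongr
        _ = C * exp (-κ * t) := by rw [mul_assoc, ← exp_add]; ring_nf
    have : |W t| * exp (-t) * t ^ 2 ≤ C * exp (-κ * t) * t ^ 2 := by gcongr
    nlinarith
  · have h1 := hT2 t ((le_max_right _ _).trans (hT4.le.trans ht))
    have h3 := hE1 t htp
    rw [le_div_iff₀ htp2] at h3
    have e : exp (-t) = exp (-1 * t) := by ring_nf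
    have : |U t| * exp (-t) * t ^ 2 ≤ (|τ| + 1) * exp (-t) * t ^ 2 := by gcongr
    rw [e] at this ⊢
    have h5 : (|τ| + 1) * (exp (-1 * t) * t ^ 2) ≤ (|τ| + 1) * E1 := by gcongr
    linarith

end TauProof
namespace TauProof

structure Red (ε : ℝ) (a a1 a2 b b1 b2 c c1 c2 q q1 : ℝ → ℝ) : Prop where
  ha : ∀ s, 0 < s → s < ε → HasDerivAt a (a1 s) s
  ha1 : ∀ s, 0 < s → s < ε → HasDerivAt a1 (a2 s) s
  hb : ∀ s, 0 < s → s < ε → HasDerivAt b (b1 s) s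
  hb1 : ∀ s, 0 < s → s < ε → HasDerivAt b1 (b2 s) s
  hc : ∀ s, 0 < s → s < ε → HasDerivAt c (c1 s) s
  hc1 : ∀ s, 0 < s → s < ε → HasDerivAt c1 (c2 s) s
  hq : ∀ s, 0 < s → s < ε → HasDerivAt q (q1 s) s
  dv : ∀ s, 0 < s → s < ε → 2 * a s + 2 * s * a1 s + c s + 2 * s * c1 s = 0
  m1 : ∀ s, 0 < s → s < ε → -(4 * s * a2 s + 8 * a1 s + 6 * a s + 14 * s * a1 s + 4 * s ^ 2 * a2 s)
    + a s * (a s + 2 * s * a1 s) - b s ^ 2 + c s * (2 * a s + 2 * s * a1 s) + 2 * q1 s = 0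
  m2 : ∀ s, 0 < s → s < ε → -(4 * s * b2 s + 8 * b1 s + 6 * b s + 14 * s * b1 s + 4 * s ^ 2 * b2 s)
    + a s * (b s + 2 * s * b1 s) + a s * b s + c s * (2 * b s + 2 * s * b1 s) = 0
  m3 : ∀ s, 0 < s → s < ε → -(4 * s * c2 s + 4 * c1 s + 2 * c s + 10 * s * c1 s + 4 * s ^ 2 * c2 s)
    + 2 * s * a s * c1 s + c s * (c s + 2 * s * c1 s) + (2 * q s + 2 * s * q1 s) = 0

variable {ε : ℝ} {a a1 a2 b b1 b2 c c1 c2 q q1 : ℝ → ℝ}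

lemma Red.dv' (h : Red ε a a1 a2 b b1 b2 c c1 c2 q q1) {s : ℝ} (h0 : 0 < s) (h1 : s < ε) :
    4 * a1 s + 2 * s * a2 s + 3 * c1 s + 2 * s * c2 s = 0 := by
  have d1 : HasDerivAt (fun s => 2 * a s + 2 * s * a1 s + c s + 2 * s * c1 s)
      (2 * a1 s + (2 * 1 * a1 s + 2 * s * a2 s) + c1 s + (2 * 1 * c1 s + 2 * s * c2 s)) s :=
    ((((h.ha s h0 h1).const_mul 2).add ((((hasDerivAt_id s).const_mul 2).mul (h.ha1 s h0 h1)))).add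
      (h.hc s h0 h1)).add (((hasDerivAt_id s).const_mul 2).mul (h.hc1 s h0 h1))
  have d2 : HasDerivAt (fun s => 2 * a s + 2 * s * a1 s + c s + 2 * s * c1 s) 0 s := by
    refine (hasDerivAt_const s (0:ℝ)).congr_of_eventuallyEq ?_
    filter_upwards [Ioo_mem_nhds h0 h1] with r hr using h.dv r hr.1 hr.2
  have := d1.unique d2
  linarith

noncomputable def sg (x : ℝ) : ℝ := 1 / x ^ 2 - 1

lemma sg_der {f : ℝ → ℝ} {f' x : ℝ} (hx : x ≠ 0) (hf : HasDerivAt f f' (sg x)) :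
    HasDerivAt (fun x => f (sg x)) (f' * (-2 / x ^ 3)) x := by
  refine hf.comp x ?_
  have := ((hasDerivAt_const x (1:ℝ)).div (hasDerivAt_pow 2 x) (by positivity)).sub_const 1
  refine this.congr_deriv ?_
  simp; field_simp

noncomputable def Ux (a c : ℝ → ℝ) (x : ℝ) : ℝ := (1 - x ^ 2) / x * (a (sg x) + c (sg x))
noncomputable def vx (a c : ℝ → ℝ) (x : ℝ) : ℝ := sg x * a (sg x) - c (sg x)
noncomputable def v1x (a a1 c1 : ℝ → ℝ) (x : ℝ) : ℝ := (a (sg x) + sg x * a1 (sg x) - c1 (sg x)) * (-2 / x ^ 3)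
noncomputable def Wx (b : ℝ → ℝ) (x : ℝ) : ℝ := sg x * b (sg x)
noncomputable def Zx (b b1 : ℝ → ℝ) (x : ℝ) : ℝ := (b (sg x) + sg x * b1 (sg x)) * (-2 / x ^ 3)
noncomputable def Lx (a c : ℝ → ℝ) (x : ℝ) : ℝ := (1 - x ^ 2) * vx a c x + 2 * x * Ux a c x + Ux a c x ^ 2 / 2
noncomputable def Kx (a a1 c c1 : ℝ → ℝ) (x : ℝ) : ℝ :=
  (1 - x ^ 2) * v1x a a1 c1 x + 2 * Ux a c x + Ux a c x * vx a c x
noncomputable def Px (a b c q : ℝ → ℝ) (x : ℝ) : ℝ :=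
  2 * q (sg x) / x ^ 2 + Ux a c x ^ 2 / (1 - x ^ 2) + Wx b x ^ 2 / (1 - x ^ 2) - 2 * vx a c x

lemma sg_pos {x : ℝ} (hx : x < 0) (hx1 : -1 < x) : 0 < sg x := by
  unfold sg
  have h2 : 0 < x ^ 2 := by nlinarith
  rw [sub_pos, lt_div_iff₀ h2]; nlinarith

lemma Red.dU (h : Red ε a a1 a2 b b1 b2 c c1 c2 q q1) {x : ℝ} (hx : x < 0) (hx1 : -1 < x)
    (h1 : sg x < ε) : HasDerivAt (Ux a c) (vx a c x) x := by
  have h0 := sg_pos hx hx1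
  have hx0 : x ≠ 0 := hx.ne
  have e1 : HasDerivAt (fun x : ℝ => (1 - x ^ 2) / x) ((-(2 * x) * x - (1 - x ^ 2)) / x ^ 2) x := by
    have := ((hasDerivAt_pow 2 x).const_sub 1).div (hasDerivAt_id x) hx0
    refine this.congr_deriv ?_
    simp
  have := e1.mul ((sg_der hx0 (h.ha _ h0 h1)).add (sg_der hx0 (h.hc _ h0 h1)))
  refine this.congr_deriv ?_
  have hd := h.dv _ h0 h1
  have hs : sg x = 1 / x ^ 2 - 1 := rfl
  simp only [vx, Pi.add_apply]
  generalize a (sg x) = A at *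
  generalize a1 (sg x) = A1 at *
  generalize c (sg x) = C at *
  generalize c1 (sg x) = C1 at *
  rw [hs] at hd ⊢
  field_simp at hd ⊢
  linear_combination (-1) * hd

lemma Red.dv1 (h : Red ε a a1 a2 b b1 b2 c c1 c2 q q1) {x : ℝ} (hx : x < 0) (hx1 : -1 < x)
    (h1 : sg x < ε) : HasDerivAt (vx a c) (v1x a a1 c1 x) x := by
  have h0 := sg_pos hx hx1
  have hx0 : x ≠ 0 := hx.ne
  have := ((sg_der hx0 (hasDerivAt_id _)).mul (sg_der hx0 (h.ha _ h0 h1))).sub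
    (sg_der hx0 (h.hc _ h0 h1))
  refine this.congr_deriv ?_
  simp [v1x]; ring

lemma Red.dW (h : Red ε a a1 a2 b b1 b2 c c1 c2 q q1) {x : ℝ} (hx : x < 0) (hx1 : -1 < x)
    (h1 : sg x < ε) : HasDerivAt (Wx b) (Zx b b1 x) x := by
  have h0 := sg_pos hx hx1
  have hx0 : x ≠ 0 := hx.ne
  have := ((sg_der hx0 (hasDerivAt_id _)).mul (sg_der hx0 (h.hb _ h0 h1)))
  refine this.congr_deriv ?_
  simp [Zx]; ring

lemma d3 {x : ℝ} (hx0 : x ≠ 0) : HasDerivAt (fun x : ℝ => -2 / x ^ 3) (6 / x ^ 4) x := by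
  have := (hasDerivAt_const x (-2:ℝ)).div (hasDerivAt_pow 3 x) (by positivity)
  refine this.congr_deriv ?_
  simp; field_simp; try norm_num

lemma Red.dZ (h : Red ε a a1 a2 b b1 b2 c c1 c2 q q1) {x : ℝ} (hx : x < 0) (hx1 : -1 < x)
    (h1 : sg x < ε) : HasDerivAt (Zx b b1) (- (Ux a c x * Zx b b1 x) / (1 - x ^ 2)) x := by
  have h0 := sg_pos hx hx1
  have hx0 : x ≠ 0 := hx.ne
  have hm : 1 - x ^ 2 ≠ 0 := by nlinarith
  have := ((sg_der hx0 (h.hb _ h0 h1)).add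
    ((sg_der hx0 (hasDerivAt_id _)).mul (sg_der hx0 (h.hb1 _ h0 h1)))).mul (d3 hx0)
  refine this.congr_deriv ?_
  have hd := h.m2 _ h0 h1
  have hs : sg x = 1 / x ^ 2 - 1 := rfl
  simp only [Zx, Ux, Pi.add_apply, Pi.mul_apply, id]
  generalize a (sg x) = A at *
  generalize b (sg x) = B at *
  generalize b1 (sg x) = B1 at *
  generalize b2 (sg x) = B2 at *
  generalize c (sg x) = C at *
  rw [hs] at hd ⊢
  field_simp at hd ⊢
  linear_combination (-1) * hd

lemma Red.dL (h : Red ε a a1 a2 b b1 b2 c c1 c2 q q1) {x : ℝ} (hx : x < 0) (hx1 : -1 < x)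
    (h1 : sg x < ε) : HasDerivAt (Lx a c) (Kx a a1 c c1 x) x := by
  have hU := h.dU hx hx1 h1
  have := ((((hasDerivAt_pow 2 x).const_sub 1).mul (h.dv1 hx hx1 h1)).add
    (((hasDerivAt_id x).const_mul 2).mul hU)).add ((hU.pow 2).div_const 2)
  refine this.congr_deriv ?_
  simp [Kx]; ring

lemma Red.dK (h : Red ε a a1 a2 b b1 b2 c c1 c2 q q1) {x : ℝ} (hx : x < 0) (hx1 : -1 < x)
    (h1 : sg x < ε) : HasDerivAt (Kx a a1 c c1) (- Px a b c q x) x := by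
  have h0 := sg_pos hx hx1
  have hx0 : x ≠ 0 := hx.ne
  have hm : 1 - x ^ 2 ≠ 0 := by nlinarith
  have hU := h.dU hx hx1 h1
  have hv := h.dv1 hx hx1 h1
  have hv1 := (((sg_der hx0 (h.ha _ h0 h1)).add
    ((sg_der hx0 (hasDerivAt_id _)).mul (sg_der hx0 (h.ha1 _ h0 h1)))).sub
      (sg_der hx0 (h.hc1 _ h0 h1))).mul (d3 hx0)
  have := ((((hasDerivAt_pow 2 x).const_sub 1).mul hv1).add
    (hU.const_mul 2)).add (hU.mul hv)
  refine this.congr_deriv ?_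
  have hd := h.dv _ h0 h1
  have hd' := h.dv' h0 h1
  have e1 := h.m1 _ h0 h1
  have e3 := h.m3 _ h0 h1
  have hs : sg x = 1 / x ^ 2 - 1 := rfl
  simp only [Px, Ux, vx, v1x, Wx, Pi.add_apply, Pi.mul_apply, Pi.sub_apply, id]
  generalize a (sg x) = A at *
  generalize a1 (sg x) = A1 at *
  generalize a2 (sg x) = A2 at *
  generalize b (sg x) = B at *
  generalize c (sg x) = C at *
  generalize c1 (sg x) = C1 at *
  generalize c2 (sg x) = C2 at *
  generalize q (sg x) = Q at *
  generalize q1 (sg x) = Q1 at *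
  rw [hs] at hd hd' e1 e3 ⊢
  have ec : C1 = -(2 * A + 2 * (1 / x ^ 2 - 1) * A1 + C) * x ^ 2 / (2 * (1 - x ^ 2)) := by
    field_simp at hd ⊢; linear_combination hd
  have ec2 : C2 = -(4 * A1 + 2 * (1 / x ^ 2 - 1) * A2 + 3 * C1) * x ^ 2 / (2 * (1 - x ^ 2)) := by
    field_simp at hd' ⊢; linear_combination hd'
  refine sub_eq_zero.1 (Eq.trans (?_ : _ = -(1 / x ^ 2) * ((1 / x ^ 2 - 1) *
    (-(4 * (1 / x ^ 2 - 1) * A2 + 8 * A1 + 6 * A + 14 * (1 / x ^ 2 - 1) * A1 + 4 * (1 / x ^ 2 - 1) ^ 2 * A2) +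
            A * (A + 2 * (1 / x ^ 2 - 1) * A1) - B ^ 2 + C * (2 * A + 2 * (1 / x ^ 2 - 1) * A1) + 2 * Q1) -
    (-(4 * (1 / x ^ 2 - 1) * C2 + 4 * C1 + 2 * C + 10 * (1 / x ^ 2 - 1) * C1 + 4 * (1 / x ^ 2 - 1) ^ 2 * C2) +
          2 * (1 / x ^ 2 - 1) * A * C1 + C * (C + 2 * (1 / x ^ 2 - 1) * C1) +
      (2 * Q + 2 * (1 / x ^ 2 - 1) * Q1)))) (by rw [e1, e3]; ring))
  rw [ec2, ec]
  clear e1 e3 hd hd' ec ec2 hv1 hU hv this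
  push_cast
  field_simp
  ring

lemma Red.dP (h : Red ε a a1 a2 b b1 b2 c c1 c2 q q1) {x : ℝ} (hx : x < 0) (hx1 : -1 < x)
    (h1 : sg x < ε) : HasDerivAt (Px a b c q) (2 * Wx b x * Zx b b1 x / (1 - x ^ 2)) x := by
  have h0 := sg_pos hx hx1
  have hx0 : x ≠ 0 := hx.ne
  have hm : 1 - x ^ 2 ≠ 0 := by nlinarith
  have hU := h.dU hx hx1 h1
  have hv := h.dv1 hx hx1 h1
  have hW := h.dW hx hx1 h1
  have hmd := ((hasDerivAt_pow 2 x).const_sub 1)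
  have := (((((sg_der hx0 (h.hq _ h0 h1)).const_mul 2).div (hasDerivAt_pow 2 x) (by positivity)).add
    ((hU.pow 2).div hmd hm)).add ((hW.pow 2).div hmd hm)).sub (hv.const_mul 2)
  refine this.congr_deriv ?_
  have hd := h.dv _ h0 h1
  have hd' := h.dv' h0 h1
  have e1 := h.m1 _ h0 h1
  have e3 := h.m3 _ h0 h1
  have hs : sg x = 1 / x ^ 2 - 1 := rfl
  simp only [Zx, Ux, vx, v1x, Wx, Pi.add_apply, Pi.mul_apply, Pi.sub_apply, id, Pi.pow_apply]
  generalize a (sg x) = A at *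
  generalize a1 (sg x) = A1 at *
  generalize a2 (sg x) = A2 at *
  generalize b (sg x) = B at *
  generalize b1 (sg x) = B1 at *
  generalize c (sg x) = C at *
  generalize c1 (sg x) = C1 at *
  generalize c2 (sg x) = C2 at *
  generalize q (sg x) = Q at *
  generalize q1 (sg x) = Q1 at *
  rw [hs] at hd hd' e1 e3 ⊢
  have ec : C1 = -(2 * A + 2 * (1 / x ^ 2 - 1) * A1 + C) * x ^ 2 / (2 * (1 - x ^ 2)) := by
    field_simp at hd ⊢; linear_combination hd
  have ec2 : C2 = -(4 * A1 + 2 * (1 / x ^ 2 - 1) * A2 + 3 * C1) * x ^ 2 / (2 * (1 - x ^ 2)) := by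
    field_simp at hd' ⊢; linear_combination hd'
  refine sub_eq_zero.1 (Eq.trans (?_ : _ = -(2 / x ^ 3) * (
    (-(4 * (1 / x ^ 2 - 1) * A2 + 8 * A1 + 6 * A + 14 * (1 / x ^ 2 - 1) * A1 + 4 * (1 / x ^ 2 - 1) ^ 2 * A2) +
            A * (A + 2 * (1 / x ^ 2 - 1) * A1) - B ^ 2 + C * (2 * A + 2 * (1 / x ^ 2 - 1) * A1) + 2 * Q1) +
    (-(4 * (1 / x ^ 2 - 1) * C2 + 4 * C1 + 2 * C + 10 * (1 / x ^ 2 - 1) * C1 + 4 * (1 / x ^ 2 - 1) ^ 2 * C2) +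
          2 * (1 / x ^ 2 - 1) * A * C1 + C * (C + 2 * (1 / x ^ 2 - 1) * C1) +
      (2 * Q + 2 * (1 / x ^ 2 - 1) * Q1)))) (by rw [e1, e3]; ring))
  rw [ec2, ec]
  clear e1 e3 hd hd' ec ec2 hU hv hW hmd this
  push_cast
  field_simp
  ring

end TauProof
namespace TauProof

lemma tanh_E (t : ℝ) : Real.tanh t = (1 - exp (-2 * t)) / (1 + exp (-2 * t)) := by
  rw [Real.tanh_eq_sinh_div_cosh, Real.sinh_eq, Real.cosh_eq]
  have h1 : exp t * exp (-t) = 1 := by rw [← Real.exp_add]; simp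
  have h2 : exp (-2 * t) = exp (-t) * exp (-t) := by rw [← Real.exp_add]; ring_nf
  have h3 := exp_pos t
  have h4 := exp_pos (-t)
  rw [h2, div_eq_div_iff (by positivity) (by positivity)]
  linear_combination (exp (-t)) * h1

lemma th_der (t : ℝ) : HasDerivAt (fun t => - Real.tanh t) (-(1 - (-Real.tanh t) ^ 2)) t := by
  have h := (Real.hasDerivAt_sinh t).div (Real.hasDerivAt_cosh t) (Real.cosh_pos t).ne'
  have e : Real.tanh = fun t => Real.sinh t / Real.cosh t := by
    ext t; exact Real.tanh_eq_sinh_div_cosh t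
  have h' : HasDerivAt Real.tanh ((Real.cosh t * Real.cosh t - Real.sinh t * Real.sinh t) / Real.cosh t ^ 2) t := by rw [e]; exact h
  refine h'.neg.congr_deriv ?_
  rw [Real.tanh_eq_sinh_div_cosh]
  have := (Real.cosh_pos t).ne'
  field_simp

lemma E_small {t : ℝ} (ht : 1 ≤ t) : exp (-2 * t) ≤ 1 / 3 ∧ exp (-2 * t) * t ≤ 1 := by
  have h1 := Real.add_one_le_exp (2 * t)
  have h2 : exp (-2 * t) * exp (2 * t) = 1 := by rw [← Real.exp_add]; simp
  have h3 := exp_pos (-2 * t)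
  constructor <;> nlinarith

lemma th_bd {t : ℝ} (ht : 1 ≤ t) : 0 < 1 + -Real.tanh t ∧ 1 + -Real.tanh t ≤ 2 * exp (-2 * t) ∧
    -Real.tanh t ≤ -1/2 ∧ exp (-2 * t) ≤ 1 - (-Real.tanh t) ^ 2 ∧
    1 - (-Real.tanh t) ^ 2 ≤ 4 * exp (-2 * t) := by
  have h3 := exp_pos (-2 * t)
  obtain ⟨h1, -⟩ := E_small ht
  rw [tanh_E]
  set E := exp (-2 * t)
  have e1 : 1 + -((1 - E) / (1 + E)) = 2 * E / (1 + E) := by field_simp; ring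
  have e2 : 1 - (-((1 - E) / (1 + E))) ^ 2 = 4 * E / (1 + E) ^ 2 := by field_simp; ring
  rw [e1, e2]
  refine ⟨by positivity, ?_, ?_, ?_, ?_⟩
  · rw [div_le_iff₀ (by positivity)]; nlinarith
  · rw [neg_div, neg_le_neg_iff, div_le_div_iff₀ (by positivity) (by positivity)]; nlinarith
  · rw [le_div_iff₀ (by positivity)]
    have : (1 + E) ^ 2 ≤ 4 := by nlinarith
    nlinarith
  · rw [div_le_iff₀ (by positivity)]
    have : 1 ≤ (1 + E) ^ 2 := by nlinarith
    nlinarith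

lemma sg_small {t ε : ℝ} (ht : 1 ≤ t) (hε : 0 < ε) (ht2 : 16 / ε < t) : sg (-Real.tanh t) < ε := by
  obtain ⟨h1, h2, h3, h4, h5⟩ := th_bd ht
  obtain ⟨h6, h7⟩ := E_small ht
  set x := -Real.tanh t
  rw [div_lt_iff₀ hε] at ht2
  have hx2 : 1 / 4 ≤ x ^ 2 := by nlinarith
  unfold sg
  have h8 : 16 * exp (-2 * t) < ε := by
    have := exp_pos (-2 * t)
    have : exp (-2 * t) * 16 < exp (-2 * t) * (t * ε) := by gcongr
    nlinarith
  rw [sub_lt_iff_lt_add, div_lt_iff₀ (by positivity)]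
  nlinarith

variable {ε : ℝ} {a a1 a2 b b1 b2 c c1 c2 q q1 : ℝ → ℝ}

lemma Red.sys (h : Red ε a a1 a2 b b1 b2 c c1 c2 q q1) (hε : 0 < ε) :
    Sys (max 1 (16 / ε + 1)) (fun t => -Real.tanh t) (fun t => 1 - (-Real.tanh t) ^ 2)
      (fun t => Ux a c (-Real.tanh t)) (fun t => Lx a c (-Real.tanh t))
      (fun t => Kx a a1 c c1 (-Real.tanh t)) (fun t => Px a b c q (-Real.tanh t))
      (fun t => Wx b (-Real.tanh t)) (fun t => Zx b b1 (-Real.tanh t)) := by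
  have k1 : ∀ t, max 1 (16 / ε + 1) ≤ t → 1 ≤ t := fun t ht => (le_max_left _ _).trans ht
  have k2 : ∀ t, max 1 (16 / ε + 1) ≤ t → 16 / ε < t := fun t ht => by
    have := (le_max_right _ _).trans ht; linarith
  have kk : ∀ t, max 1 (16 / ε + 1) ≤ t → (-Real.tanh t < 0 ∧ -1 < -Real.tanh t ∧
      sg (-Real.tanh t) < ε ∧ 1 - (-Real.tanh t) ^ 2 ≠ 0) := fun t ht => by
    obtain ⟨h1, h2, h3, h4, h5⟩ := th_bd (k1 t ht)
    have := exp_pos (-2 * t)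
    exact ⟨by linarith, by linarith, sg_small (k1 t ht) hε (k2 t ht), by linarith⟩
  refine ⟨le_max_left _ _, fun t ht => (th_bd (k1 t ht)).1, fun t ht => (th_bd (k1 t ht)).2.1,
    fun t ht => ?_, fun t ht => (th_bd (k1 t ht)).2.2.2.1, fun t ht => (th_bd (k1 t ht)).2.2.2.2,
    fun t ht => th_der t, fun t ht => ?_, fun t ht => ?_, fun t ht => ?_, fun t ht => ?_,
    fun t ht => ?_, fun t ht => ?_, fun t ht => ?_⟩
  · have := (th_bd (k1 t ht)).2.2.1; linarith
  · refine (((th_der t).pow 2).const_sub 1).congr_deriv ?_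
    simp; ring
  all_goals obtain ⟨i1, i2, i3, i4⟩ := kk t ht
  · refine ((h.dU i1 i2 i3).comp t (th_der t)).congr_deriv ?_
    simp only [Lx]; ring
  · refine ((h.dL i1 i2 i3).comp t (th_der t)).congr_deriv ?_
    ring
  · refine ((h.dK i1 i2 i3).comp t (th_der t)).congr_deriv ?_
    ring
  · refine ((h.dP i1 i2 i3).comp t (th_der t)).congr_deriv ?_
    generalize -Real.tanh t = x at *
    field_simp
  · refine ((h.dW i1 i2 i3).comp t (th_der t)).congr_deriv ?_
    ring
  · refine ((h.dZ i1 i2 i3).comp t (th_der t)).congr_deriv ?_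
    generalize -Real.tanh t = x at *
    field_simp

end TauProof
namespace TauProof

def pt (x y z : ℝ) : V3 := !₂[x, y, z]

@[simp] lemma pt0 (x y z : ℝ) : pt x y z 0 = x := by simp [pt]
@[simp] lemma pt1 (x y z : ℝ) : pt x y z 1 = y := by simp [pt]
@[simp] lemma pt2 (x y z : ℝ) : pt x y z 2 = z := by simp [pt]

lemma pt_eta (X : V3) : pt (X 0) (X 1) (X 2) = X := by
  ext i; fin_cases i <;> simp

lemma smul_pt (l x y z : ℝ) : l • pt x y z = pt (l * x) (l * y) (l * z) := by
  ext i; fin_cases i <;> simp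

lemma hd_pt {f g h : ℝ → ℝ} {f' g' h' s : ℝ} (hf : HasDerivAt f f' s) (hg : HasDerivAt g g' s)
    (hh : HasDerivAt h h' s) : HasDerivAt (fun s => pt (f s) (g s) (h s)) (pt f' g' h') s := by
  have e : ∀ x y z : ℝ, pt x y z = x • e3 0 + y • e3 1 + z • e3 2 := by
    intro x y z; ext i; fin_cases i <;> simp [e3]
  simp only [e]
  exact ((hf.smul_const _).add (hg.smul_const _)).add (hh.smul_const _)

lemma e3_0 : e3 0 = pt 1 0 0 := by ext i; fin_cases i <;> simp [e3]
lemma e3_1 : e3 1 = pt 0 1 0 := by ext i; fin_cases i <;> simp [e3]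
lemma e3_2 : e3 2 = pt 0 0 1 := by ext i; fin_cases i <;> simp [e3]

lemma hd0 (y z s : ℝ) : HasDerivAt (fun s => pt s y z) (e3 0) s := by
  rw [e3_0]; exact hd_pt (hasDerivAt_id s) (hasDerivAt_const s y) (hasDerivAt_const s z)
lemma hd1 (x z s : ℝ) : HasDerivAt (fun s => pt x s z) (e3 1) s := by
  rw [e3_1]; exact hd_pt (hasDerivAt_const s x) (hasDerivAt_id s) (hasDerivAt_const s z)
lemma hd2 (x y s : ℝ) : HasDerivAt (fun s => pt x y s) (e3 2) s := by
  rw [e3_2]; exact hd_pt (hasDerivAt_const s x) (hasDerivAt_const s y) (hasDerivAt_id s)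

lemma pd_slice {f : V3 → ℝ} {cv : ℝ → V3} {j : Fin 3} {s d : ℝ} (hf : DifferentiableAt ℝ f (cv s))
    (hc : HasDerivAt cv (e3 j) s) (hd : HasDerivAt (fun s => f (cv s)) d s) :
    pd j f (cv s) = d :=
  (hf.hasFDerivAt.comp_hasDerivAt s hc).unique hd

lemma pd2_slice {f : V3 → ℝ} {cv : ℝ → V3} {j : Fin 3} {s g2 : ℝ} {g g1 : ℝ → ℝ}
    (hf : ContDiffAt ℝ 2 f (cv s)) (hc : ∀ s, HasDerivAt cv (e3 j) s)
    (he : ∀ᶠ r in 𝓝 s, f (cv r) = g r)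
    (hg : ∀ᶠ r in 𝓝 s, HasDerivAt g (g1 r) r) (hg1 : HasDerivAt g1 g2 s) :
    pd j f (cv s) = g1 s ∧ pd j (fun y => pd j f y) (cv s) = g2 := by
  have hev : ∀ᶠ X in 𝓝 (cv s), DifferentiableAt ℝ f X := by
    have := hf.eventually (by simp)
    filter_upwards [this] with X hX using hX.differentiableAt (by simp)
  have hev' : ∀ᶠ r in 𝓝 s, DifferentiableAt ℝ f (cv r) := (hc s).continuousAt hev
  have h1 : ∀ᶠ r in 𝓝 s, pd j f (cv r) = g1 r := by
    filter_upwards [hev', hg, he.eventually_nhds] with r hr hr2 hr3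
    exact pd_slice hr (hc r) (hr2.congr_of_eventuallyEq hr3)
  refine ⟨h1.self_of_nhds, ?_⟩
  refine pd_slice ?_ (hc s) (hg1.congr_of_eventuallyEq h1)
  have : ContDiffAt ℝ 1 (fderiv ℝ f) (cv s) := hf.fderiv_right (by norm_num)
  exact (this.differentiableAt (by simp)).clm_apply (differentiableAt_const _)

def Om (ε : ℝ) : Set V3 := {X | X 2 < 0 ∧ 0 < X 0 ^ 2 + X 1 ^ 2 ∧ X 0 ^ 2 + X 1 ^ 2 < ε * X 2 ^ 2}

lemma Om_open (ε : ℝ) : IsOpen (Om ε) := by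
  have c0 : ∀ i : Fin 3, Continuous (fun X : V3 => X i) := fun i => by fun_prop
  have i1 : IsOpen {X : V3 | X 2 < 0} := isOpen_lt (c0 2) continuous_const
  have i2 : IsOpen {X : V3 | 0 < X 0 ^ 2 + X 1 ^ 2} := isOpen_lt continuous_const (by fun_prop)
  have i3 : IsOpen {X : V3 | X 0 ^ 2 + X 1 ^ 2 < ε * X 2 ^ 2} :=
    isOpen_lt (by fun_prop) (by fun_prop)
  exact i1.inter (i2.inter i3)

lemma Om_sub {δ : ℝ} (hδ : 0 < δ) : Om (δ ^ 2) ⊆ cone3 (NSCap δ) := by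
  intro X hX
  obtain ⟨h1, h2, h3⟩ := hX
  have hX0 : X ≠ 0 := by rintro rfl; simp at h1
  have hr : 0 < ‖X‖ := norm_pos_iff.2 hX0
  have hn : ‖X‖ ^ 2 = X 0 ^ 2 + X 1 ^ 2 + X 2 ^ 2 := by
    rw [EuclideanSpace.norm_sq_eq, Fin.sum_univ_three]; simp
  have hS : S3 = pt 0 0 (-1) := by ext i; fin_cases i <;> simp [S3]
  set r := ‖X‖
  refine ⟨hX0, ⟨?_, ?_⟩, ?_⟩
  · simp only [sphere2, mem_sphere_zero_iff_norm, norm_smul, norm_inv, norm_norm]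
    exact inv_mul_cancel₀ hr.ne'
  · rw [mem_ball, dist_eq_norm]
    refine lt_of_pow_lt_pow_left₀ 2 hδ.le ?_
    rw [EuclideanSpace.norm_sq_eq, Fin.sum_univ_three, hS]
    simp only [PiLp.sub_apply, PiLp.smul_apply, pt0, pt1, pt2, smul_eq_mul, Real.norm_eq_abs, sq_abs]
    have e : (r⁻¹ * X 0 - 0) ^ 2 + (r⁻¹ * X 1 - 0) ^ 2 + (r⁻¹ * X 2 - -1) ^ 2 = 2 + 2 * X 2 / r := by
      have : r⁻¹ ^ 2 * r ^ 2 = 1 := by field_simp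
      linear_combination this - r⁻¹ ^ 2 * hn
    rw [e]
    have hrk : - X 2 ≤ r := by nlinarith
    have : (2 + 2 * X 2 / r) * X 2 ^ 2 ≤ X 0 ^ 2 + X 1 ^ 2 := by
      have e2 : (2 + 2 * X 2 / r) = 2 * (r + X 2) / r := by field_simp
      rw [e2, div_mul_eq_mul_div, div_le_iff₀ hr]
      have : X 0 ^ 2 + X 1 ^ 2 = (r + X 2) * (r - X 2) := by linear_combination -hn
      rw [this]
      have : 0 ≤ (r + X 2) * (r * (r - X 2) - 2 * X 2 ^ 2) := by
        apply mul_nonneg (by linarith); nlinarith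
      nlinarith
    have h5 : (2 + 2 * X 2 / r) * X 2 ^ 2 < δ ^ 2 * X 2 ^ 2 := lt_of_le_of_lt this h3
    exact lt_of_mul_lt_mul_right h5 (sq_nonneg _)
  · rw [Set.mem_singleton_iff, hS]
    intro h
    have i0 := congrArg (fun Y : V3 => Y 0) h
    have i1 := congrArg (fun Y : V3 => Y 1) h
    simp [hX0] at i0 i1
    rw [i0, i1] at h2; simp at h2

variable {ε : ℝ} {a a1 a2 b b1 b2 c c1 c2 q q1 : ℝ → ℝ}

lemma hd_sq {f : ℝ → ℝ} {f' s k : ℝ} (h : HasDerivAt f f' (s ^ 2 + k)) :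
    HasDerivAt (fun s => f (s ^ 2 + k)) (f' * (2 * s)) s := by
  refine (h.comp s ((hasDerivAt_pow 2 s).add_const k)).congr_deriv ?_
  simp

lemma hd_sq' {f : ℝ → ℝ} {f' s k : ℝ} (h : HasDerivAt f f' (k + s ^ 2)) :
    HasDerivAt (fun s => f (k + s ^ 2)) (f' * (2 * s)) s := by
  refine (h.comp s ((hasDerivAt_pow 2 s).const_add k)).congr_deriv ?_
  simp

lemma hd_dv {f : ℝ → ℝ} {f' s k : ℝ} (hs : s ≠ 0) (h : HasDerivAt f f' (k / s ^ 2)) :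
    HasDerivAt (fun s => f (k / s ^ 2)) (f' * (-2 * k / s ^ 3)) s := by
  refine (h.comp s ((hasDerivAt_const s k).div (hasDerivAt_pow 2 s) (by positivity))).congr_deriv ?_
  simp; field_simp; simp

end TauProof
namespace TauProof

structure D2 (ε : ℝ) (a a1 a2 : ℝ → ℝ) : Prop where
  d1 : ∀ s, 0 < s → s < ε → HasDerivAt a (a1 s) s
  d2 : ∀ s, 0 < s → s < ε → HasDerivAt a1 (a2 s) s

lemma D2.neg {ε : ℝ} {a a1 a2 : ℝ → ℝ} (h : D2 ε a a1 a2) :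
    D2 ε (fun s => - a s) (fun s => - a1 s) (fun s => - a2 s) :=
  ⟨fun s h0 h1 => (h.d1 s h0 h1).neg, fun s h0 h1 => (h.d2 s h0 h1).neg⟩

variable {ε : ℝ} {a a1 a2 b b1 b2 c c1 c2 q q1 : ℝ → ℝ} {f : V3 → ℝ}

lemma ev_dom {x y : ℝ} (h0 : 0 < x ^ 2 + y ^ 2) (h1 : x ^ 2 + y ^ 2 < ε) :
    (∀ᶠ r in 𝓝 x, 0 < r ^ 2 + y ^ 2 ∧ r ^ 2 + y ^ 2 < ε) ∧
    (∀ᶠ r in 𝓝 y, 0 < x ^ 2 + r ^ 2 ∧ x ^ 2 + r ^ 2 < ε) ∧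
    (∀ᶠ r in 𝓝 (-1 : ℝ), r < 0 ∧ x ^ 2 + y ^ 2 < ε * r ^ 2 ∧ 0 < (x ^ 2 + y ^ 2) / r ^ 2 ∧
      (x ^ 2 + y ^ 2) / r ^ 2 < ε) := by
  refine ⟨?_, ?_, ?_⟩
  · have c1 : ContinuousAt (fun r : ℝ => r ^ 2 + y ^ 2) x := by fun_prop
    exact c1.eventually (Ioo_mem_nhds h0 h1)
  · have c1 : ContinuousAt (fun r : ℝ => x ^ 2 + r ^ 2) y := by fun_prop
    exact c1.eventually (Ioo_mem_nhds h0 h1)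
  · have c1 : ContinuousAt (fun r : ℝ => ε * r ^ 2) (-1) := by fun_prop
    have := c1.eventually_const_lt (u := x ^ 2 + y ^ 2) (by simpa using h1)
    filter_upwards [this, Iio_mem_nhds (show (-1:ℝ) < 0 by norm_num)] with r hr hr2
    have hr2 : r < 0 := hr2
    have hp : 0 < r ^ 2 := by nlinarith
    exact ⟨hr2, hr, by positivity, by rw [div_lt_iff₀ hp]; exact hr⟩

lemma pt_mem {x y z : ℝ} (hz : z < 0) (h0 : 0 < x ^ 2 + y ^ 2) (h1 : x ^ 2 + y ^ 2 < ε * z ^ 2) :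
    pt x y z ∈ Om ε := by simpa [Om] using ⟨hz, h0, h1⟩

lemma lap_eq (X : V3) : lap3 f X = pd 0 (fun y => pd 0 f y) X + pd 1 (fun y => pd 1 f y) X +
    pd 2 (fun y => pd 2 f y) X := by rw [lap3, Fin.sum_univ_three]

lemma ab_derivs (ha : D2 ε a a1 a2) (hb : D2 ε b b1 b2)
    (hf : ∀ x y z, z < 0 → 0 < x ^ 2 + y ^ 2 → x ^ 2 + y ^ 2 < ε * z ^ 2 →
      f (pt x y z) = (z ^ 2)⁻¹ * (x * a ((x ^ 2 + y ^ 2) / z ^ 2) - y * b ((x ^ 2 + y ^ 2) / z ^ 2)))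
    (hC : ContDiffOn ℝ 2 f (Om ε)) {x y s : ℝ} (hs : x ^ 2 + y ^ 2 = s) (h0 : 0 < s) (h1 : s < ε) :
    pd 0 f (pt x y (-1)) = a s + 2 * x * (x * a1 s - y * b1 s) ∧
    pd 1 f (pt x y (-1)) = - b s + 2 * y * (x * a1 s - y * b1 s) ∧
    pd 2 f (pt x y (-1)) = 2 * (x * a s - y * b s) + 2 * s * (x * a1 s - y * b1 s) ∧
    lap3 f (pt x y (-1)) =
      x * (4 * s * a2 s + 8 * a1 s + 6 * a s + 14 * s * a1 s + 4 * s ^ 2 * a2 s) -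
      y * (4 * s * b2 s + 8 * b1 s + 6 * b s + 14 * s * b1 s + 4 * s ^ 2 * b2 s) := by
  subst hs
  have hX : pt x y (-1) ∈ Om ε := pt_mem (by norm_num) h0 (by simpa using h1)
  have hCX : ContDiffAt ℝ 2 f (pt x y (-1)) := hC.contDiffAt ((Om_open ε).mem_nhds hX)
  obtain ⟨v0, v1, v2⟩ := ev_dom h0 h1
  have k0 := pd2_slice (f := f) (cv := fun s => pt s y (-1)) (j := 0) (s := x)
    (g := fun r => r * a (r ^ 2 + y ^ 2) - y * b (r ^ 2 + y ^ 2))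
    (g1 := fun r => (1 * a (r ^ 2 + y ^ 2) + r * (a1 (r ^ 2 + y ^ 2) * (2 * r)))
      - y * (b1 (r ^ 2 + y ^ 2) * (2 * r)))
    hCX (hd0 y (-1)) (by
      filter_upwards [v0] with r hr
      rw [hf r y (-1) (by norm_num) hr.1 (by simpa using hr.2)]; norm_num) (by
      filter_upwards [v0] with r hr
      exact ((hasDerivAt_id r).mul (hd_sq (ha.d1 _ hr.1 hr.2))).sub
        ((hd_sq (hb.d1 _ hr.1 hr.2)).const_mul y))
      ((((hd_sq (ha.d1 _ h0 h1)).const_mul 1).add ((hasDerivAt_id x).mul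
        ((hd_sq (ha.d2 _ h0 h1)).mul ((hasDerivAt_id x).const_mul 2)))).sub
        (((hd_sq (hb.d2 _ h0 h1)).mul ((hasDerivAt_id x).const_mul 2)).const_mul y))
  have k1 := pd2_slice (f := f) (cv := fun s => pt x s (-1)) (j := 1) (s := y)
    (g := fun r => x * a (x ^ 2 + r ^ 2) - r * b (x ^ 2 + r ^ 2))
    (g1 := fun r => x * (a1 (x ^ 2 + r ^ 2) * (2 * r)) -
      (1 * b (x ^ 2 + r ^ 2) + r * (b1 (x ^ 2 + r ^ 2) * (2 * r))))
    hCX (hd1 x (-1)) (by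
      filter_upwards [v1] with r hr
      rw [hf x r (-1) (by norm_num) hr.1 (by simpa using hr.2)]; norm_num) (by
      filter_upwards [v1] with r hr
      exact ((hd_sq' (ha.d1 _ hr.1 hr.2)).const_mul x).sub
       ((hasDerivAt_id r).mul (hd_sq' (hb.d1 _ hr.1 hr.2))))
      ((((hd_sq' (ha.d2 _ h0 h1)).mul ((hasDerivAt_id y).const_mul 2)).const_mul x).sub
      (((hd_sq' (hb.d1 _ h0 h1)).const_mul 1).add ((hasDerivAt_id y).mul
        ((hd_sq' (hb.d2 _ h0 h1)).mul ((hasDerivAt_id y).const_mul 2)))))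
  have hsn : (x ^ 2 + y ^ 2) / (-1) ^ 2 = x ^ 2 + y ^ 2 := by norm_num
  have hz : (-1 : ℝ) ≠ 0 := by norm_num
  have p2 : ∀ r : ℝ, r ≠ 0 → HasDerivAt (fun r : ℝ => (r ^ 2)⁻¹) (-2 / r ^ 3) r := by
    intro r hr
    refine ((hasDerivAt_pow 2 r).inv (by positivity)).congr_deriv ?_
    simp; field_simp
  have p4 : HasDerivAt (fun r : ℝ => -2 * (x ^ 2 + y ^ 2) / r ^ 3) (6 * (x ^ 2 + y ^ 2)) (-1) := by
    refine ((hasDerivAt_const (-1 : ℝ) (-2 * (x ^ 2 + y ^ 2))).div (hasDerivAt_pow 3 (-1)) (by norm_num)).congr_deriv ?_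
    norm_num; ring
  have k2 := pd2_slice (f := f) (cv := fun s => pt x y s) (j := 2) (s := -1)
    (g := fun r => (r ^ 2)⁻¹ * (x * a ((x ^ 2 + y ^ 2) / r ^ 2) - y * b ((x ^ 2 + y ^ 2) / r ^ 2)))
    (g1 := fun r => (-2 / r ^ 3) * (x * a ((x ^ 2 + y ^ 2) / r ^ 2) - y * b ((x ^ 2 + y ^ 2) / r ^ 2))
      + (r ^ 2)⁻¹ * (x * (a1 ((x ^ 2 + y ^ 2) / r ^ 2) * (-2 * (x ^ 2 + y ^ 2) / r ^ 3)) -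
        y * (b1 ((x ^ 2 + y ^ 2) / r ^ 2) * (-2 * (x ^ 2 + y ^ 2) / r ^ 3))))
    hCX (hd2 x y) (by
      filter_upwards [v2] with r hr
      rw [hf x y r hr.1 h0 hr.2.1]) (by
      filter_upwards [v2] with r hr
      exact (p2 r hr.1.ne).mul (((hd_dv hr.1.ne (ha.d1 _ hr.2.2.1 hr.2.2.2)).const_mul x).sub
        ((hd_dv hr.1.ne (hb.d1 _ hr.2.2.1 hr.2.2.2)).const_mul y)))
      (((d3 hz).mul (((hd_dv hz (by rw [hsn]; exact ha.d1 _ h0 h1)).const_mul x).sub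
        ((hd_dv hz (by rw [hsn]; exact hb.d1 _ h0 h1)).const_mul y))).add
       ((p2 _ hz).mul ((((hd_dv hz (by rw [hsn]; exact ha.d2 _ h0 h1)).mul p4).const_mul x).sub
        (((hd_dv hz (by rw [hsn]; exact hb.d2 _ h0 h1)).mul p4).const_mul y))))
  refine ⟨k0.1.trans ?_, k1.1.trans ?_, k2.1.trans ?_, ?_⟩
  · ring
  · ring
  · rw [hsn]; ring
  · rw [lap_eq]
    have q0 := k0.2; have q1 := k1.2; have q2 := k2.2
    beta_reduce at q0 q1 q2
    rw [q0, q1, q2]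
    simp only [id, Pi.mul_apply, Pi.sub_apply, hsn]
    ring

lemma c_derivs (ha : D2 ε c c1 c2)
    (hf : ∀ x y z, z < 0 → 0 < x ^ 2 + y ^ 2 → x ^ 2 + y ^ 2 < ε * z ^ 2 →
      f (pt x y z) = -z⁻¹ * c ((x ^ 2 + y ^ 2) / z ^ 2))
    (hC : ContDiffOn ℝ 2 f (Om ε)) {x y s : ℝ} (hs : x ^ 2 + y ^ 2 = s) (h0 : 0 < s) (h1 : s < ε) :
    pd 0 f (pt x y (-1)) = 2 * x * c1 s ∧
    pd 1 f (pt x y (-1)) = 2 * y * c1 s ∧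
    pd 2 f (pt x y (-1)) = c s + 2 * s * c1 s ∧
    lap3 f (pt x y (-1)) = 4 * s * c2 s + 4 * c1 s + 2 * c s + 10 * s * c1 s + 4 * s ^ 2 * c2 s := by
  subst hs
  have hX : pt x y (-1) ∈ Om ε := pt_mem (by norm_num) h0 (by simpa using h1)
  have hCX : ContDiffAt ℝ 2 f (pt x y (-1)) := hC.contDiffAt ((Om_open ε).mem_nhds hX)
  obtain ⟨v0, v1, v2⟩ := ev_dom h0 h1
  have k0 := pd2_slice (f := f) (cv := fun s => pt s y (-1)) (j := 0) (s := x)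
    (g := fun r => c (r ^ 2 + y ^ 2))
    (g1 := fun r => c1 (r ^ 2 + y ^ 2) * (2 * r))
    hCX (hd0 y (-1)) (by
      filter_upwards [v0] with r hr
      rw [hf r y (-1) (by norm_num) hr.1 (by simpa using hr.2)]; norm_num) (by
      filter_upwards [v0] with r hr
      exact (hd_sq (ha.d1 _ hr.1 hr.2)))
      ((hd_sq (ha.d2 _ h0 h1)).mul ((hasDerivAt_id x).const_mul 2))
  have k1 := pd2_slice (f := f) (cv := fun s => pt x s (-1)) (j := 1) (s := y)
    (g := fun r => c (x ^ 2 + r ^ 2))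
    (g1 := fun r => c1 (x ^ 2 + r ^ 2) * (2 * r))
    hCX (hd1 x (-1)) (by
      filter_upwards [v1] with r hr
      rw [hf x r (-1) (by norm_num) hr.1 (by simpa using hr.2)]; norm_num) (by
      filter_upwards [v1] with r hr
      exact (hd_sq' (ha.d1 _ hr.1 hr.2)))
      ((hd_sq' (ha.d2 _ h0 h1)).mul ((hasDerivAt_id y).const_mul 2))
  have hsn : (x ^ 2 + y ^ 2) / (-1) ^ 2 = x ^ 2 + y ^ 2 := by norm_num
  have hz : (-1 : ℝ) ≠ 0 := by norm_num
  have p1 : ∀ r : ℝ, r ≠ 0 → HasDerivAt (fun r : ℝ => -r⁻¹) ((r ^ 2)⁻¹) r := by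
    intro r hr
    refine ((hasDerivAt_id r).inv hr).neg.congr_deriv ?_
    simp; try field_simp
  have p2 : ∀ r : ℝ, r ≠ 0 → HasDerivAt (fun r : ℝ => (r ^ 2)⁻¹) (-2 / r ^ 3) r := by
    intro r hr
    refine ((hasDerivAt_pow 2 r).inv (by positivity)).congr_deriv ?_
    simp; field_simp
  have p4 : HasDerivAt (fun r : ℝ => -2 * (x ^ 2 + y ^ 2) / r ^ 3) (6 * (x ^ 2 + y ^ 2)) (-1) := by
    refine ((hasDerivAt_const (-1 : ℝ) (-2 * (x ^ 2 + y ^ 2))).div (hasDerivAt_pow 3 (-1)) (by norm_num)).congr_deriv ?_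
    norm_num; ring
  have k2 := pd2_slice (f := f) (cv := fun s => pt x y s) (j := 2) (s := -1)
    (g := fun r => -r⁻¹ * c ((x ^ 2 + y ^ 2) / r ^ 2))
    (g1 := fun r => (r ^ 2)⁻¹ * c ((x ^ 2 + y ^ 2) / r ^ 2)
      + -r⁻¹ * (c1 ((x ^ 2 + y ^ 2) / r ^ 2) * (-2 * (x ^ 2 + y ^ 2) / r ^ 3)))
    hCX (hd2 x y) (by
      filter_upwards [v2] with r hr
      rw [hf x y r hr.1 h0 hr.2.1]) (by
      filter_upwards [v2] with r hr
      exact (p1 r hr.1.ne).mul ((hd_dv hr.1.ne (ha.d1 _ hr.2.2.1 hr.2.2.2))))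
      (((p2 _ hz).mul ((hd_dv hz (by rw [hsn]; exact ha.d1 _ h0 h1)))).add
       ((p1 _ hz).mul ((hd_dv hz (by rw [hsn]; exact ha.d2 _ h0 h1)).mul p4)))
  refine ⟨k0.1.trans ?_, k1.1.trans ?_, k2.1.trans ?_, ?_⟩
  · ring
  · ring
  · rw [hsn]; ring
  · rw [lap_eq]
    have q0 := k0.2; have q1 := k1.2; have q2 := k2.2
    beta_reduce at q0 q1 q2
    rw [q0, q1, q2]
    simp only [id, Pi.mul_apply, Pi.sub_apply, hsn]
    ring

lemma q_derivs (ha : ∀ s, 0 < s → s < ε → HasDerivAt q (q1 s) s)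
    (hf : ∀ x z, 0 < x → z < 0 → x ^ 2 < ε * z ^ 2 →
      f (pt x 0 z) = (z ^ 2)⁻¹ * q (x ^ 2 / z ^ 2))
    (hC : ContDiffOn ℝ 1 f (Om ε)) {x s : ℝ} (hx : 0 < x) (hs : x ^ 2 = s) (h1 : s < ε) :
    pd 0 f (pt x 0 (-1)) = 2 * x * q1 s ∧
    pd 2 f (pt x 0 (-1)) = 2 * q s + 2 * s * q1 s := by
  subst hs
  have h0 : 0 < x ^ 2 := by positivity
  have hX : pt x 0 (-1) ∈ Om ε := pt_mem (by norm_num) (by simpa using h0) (by simpa using h1)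
  have hCX : DifferentiableAt ℝ f (pt x 0 (-1)) :=
    (hC.contDiffAt ((Om_open ε).mem_nhds hX)).differentiableAt (by simp)
  obtain ⟨v0, v1, v2⟩ := ev_dom (ε := ε) (x := x) (y := 0) (by simpa using h0) (by simpa using h1)
  have hsn : x ^ 2 / (-1) ^ 2 = x ^ 2 := by norm_num
  have hz : (-1 : ℝ) ≠ 0 := by norm_num
  have p2 : ∀ r : ℝ, r ≠ 0 → HasDerivAt (fun r : ℝ => (r ^ 2)⁻¹) (-2 / r ^ 3) r := by
    intro r hr
    refine ((hasDerivAt_pow 2 r).inv (by positivity)).congr_deriv ?_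
    simp; field_simp
  constructor
  · refine pd_slice (cv := fun s => pt s 0 (-1)) hCX (hd0 _ _ _) ?_
    have := hd_sq (s := x) (k := 0) (by simpa using ha _ h0 h1)
    refine (this.congr_of_eventuallyEq ?_).congr_deriv (by ring)
    filter_upwards [v0, Ioi_mem_nhds hx] with r hr hr2
    rw [hf r (-1) hr2 (by norm_num) (by simpa using hr.2)]; norm_num
  · refine pd_slice (cv := fun s => pt x 0 s) hCX (hd2 _ _ _) ?_
    have := (p2 _ hz).mul (hd_dv hz (by rw [hsn]; exact ha _ h0 h1))
    refine (this.congr_of_eventuallyEq ?_).congr_deriv ?_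
    · filter_upwards [v2] with r hr
      rw [hf x r hx hr.1 (by simpa using hr.2.1)]; rfl
    · rw [hsn]; ring

end TauProof
namespace TauProof

structure Hyp (δ : ℝ) (u : V3 → V3) (p : V3 → ℝ) : Prop where
  hδ : 0 < δ
  hu_hom : ∀ x ∈ cone3 (NSCap δ), ∀ lam : ℝ, 0 < lam → u (lam • x) = lam⁻¹ • u x
  hp_hom : ∀ x ∈ cone3 (NSCap δ), ∀ lam : ℝ, 0 < lam → p (lam • x) = (lam ^ 2)⁻¹ * p x
  hu_reg : ContDiffOn ℝ 2 u (cone3 (NSCap δ))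
  hp_reg : ContDiffOn ℝ 1 p (cone3 (NSCap δ))
  haxi : AxisymOn u (cone3 (NSCap δ))
  hNS : ∀ x ∈ cone3 (NSCap δ), NSEq u p x

def fa (u : V3 → V3) (s : ℝ) : ℝ := u (pt (√s) 0 (-1)) 0 / √s
def fb (u : V3 → V3) (s : ℝ) : ℝ := u (pt (√s) 0 (-1)) 1 / √s
def fc (u : V3 → V3) (s : ℝ) : ℝ := u (pt (√s) 0 (-1)) 2
def fq (p : V3 → ℝ) (s : ℝ) : ℝ := p (pt (√s) 0 (-1))

variable {δ : ℝ} {u : V3 → V3} {p : V3 → ℝ}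

lemma norm_pt (x y z : ℝ) : ‖pt x y z‖ = √(x ^ 2 + y ^ 2 + z ^ 2) := by
  rw [EuclideanSpace.norm_eq, Fin.sum_univ_three]; simp

lemma mem_sub (hδ : 0 < δ) {x y z : ℝ} (hz : z < 0) (h0 : 0 < x ^ 2 + y ^ 2)
    (h1 : x ^ 2 + y ^ 2 < δ ^ 2 * z ^ 2) : pt x y z ∈ cone3 (NSCap δ) :=
  Om_sub hδ (pt_mem hz h0 h1)

lemma Hyp.rep1 (h : Hyp δ u p) {x y s : ℝ} (hs : x ^ 2 + y ^ 2 = s) (h0 : 0 < s) (h1 : s < δ ^ 2) :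
    u (pt x y (-1)) 0 = x * fa u s - y * fb u s ∧ u (pt x y (-1)) 1 = y * fa u s + x * fb u s ∧
    u (pt x y (-1)) 2 = fc u s := by
  have hq : √s ^ 2 = s := Real.sq_sqrt h0.le
  have hq0 : 0 < √s := Real.sqrt_pos.2 h0
  have m1 : pt x y (-1) ∈ cone3 (NSCap δ) :=
    mem_sub h.hδ (by norm_num) (by rw [hs]; exact h0) (by rw [hs]; simpa using h1)
  have m2 : pt (√s) 0 (-1) ∈ cone3 (NSCap δ) :=
    mem_sub h.hδ (by norm_num) (by rw [hq]; simpa using h0) (by rw [hq]; simpa using h1)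
  have n1 : ‖pt x y (-1)‖ = √(s + 1) := by rw [norm_pt, hs]; norm_num
  have n2 : ‖pt (√s) 0 (-1)‖ = √(s + 1) := by rw [norm_pt, hq]; norm_num
  have r1 : rho (pt x y (-1)) = √s := by simp [rho, hs]
  have r2 : rho (pt (√s) 0 (-1)) = √s := by simp [rho, hq]
  obtain ⟨e1, e2, e3⟩ := h.haxi _ m1 _ m2 (by rw [n1, n2]) (by simp)
  simp only [uRc, uTc, uPc, n1, n2, r1, r2, pt0, pt1, pt2] at e1 e2 e3
  have hR : 0 < √(s + 1) := Real.sqrt_pos.2 (by linarith)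
  simp only [fa, fb, fc]
  generalize √(s + 1) = R at *
  generalize √s = ρ at *
  generalize u (pt x y (-1)) 0 = u0 at *
  generalize u (pt x y (-1)) 1 = u1 at *
  generalize u (pt x y (-1)) 2 = u2 at *
  generalize u (pt ρ 0 (-1)) 0 = w0 at *
  generalize u (pt ρ 0 (-1)) 1 = w1 at *
  generalize u (pt ρ 0 (-1)) 2 = w2 at *
  field_simp at e1 e2 e3
  have hc : u2 = w2 := by
    have : (1 + s) * (u2 - w2) = 0 := by rw [← hq]; linear_combination (-e1 - e2)
    rcases mul_eq_zero.1 this with h | h <;> linarith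
  subst hc
  have hA : u0 * x + u1 * y = w0 * ρ := by linear_combination e1
  have hF : -(u0 * y) + u1 * x = w1 * ρ := by linear_combination e3
  subst hs
  refine ⟨?_, ?_, rfl⟩
  · have : ρ ^ 2 * u0 = ρ * (x * w0 - y * w1) := by
      rw [hq]; linear_combination x * hA - y * hF
    field_simp
    have h3 : ρ * (ρ * u0) = ρ * (x * w0 - y * w1) := by linear_combination this
    linear_combination mul_left_cancel₀ hq0.ne' h3
  · have : ρ ^ 2 * u1 = ρ * (y * w0 + x * w1) := by
      rw [hq]; linear_combination y * hA + x * hF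
    field_simp
    have h3 : ρ * (ρ * u1) = ρ * (y * w0 + x * w1) := by linear_combination this
    linear_combination mul_left_cancel₀ hq0.ne' h3

lemma pt_scale {x y z : ℝ} (hz : z < 0) : pt x y z = (-z) • pt (x / (-z)) (y / (-z)) (-1) := by
  rw [smul_pt]
  have : z ≠ 0 := hz.ne
  congr 1 <;> field_simp

lemma Hyp.rep (h : Hyp δ u p) {x y z : ℝ} (hz : z < 0) (h0 : 0 < x ^ 2 + y ^ 2)
    (h1 : x ^ 2 + y ^ 2 < δ ^ 2 * z ^ 2) :
    u (pt x y z) 0 = (z ^ 2)⁻¹ * (x * fa u ((x ^ 2 + y ^ 2) / z ^ 2) - y * fb u ((x ^ 2 + y ^ 2) / z ^ 2)) ∧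
    u (pt x y z) 1 = (z ^ 2)⁻¹ * (y * fa u ((x ^ 2 + y ^ 2) / z ^ 2) + x * fb u ((x ^ 2 + y ^ 2) / z ^ 2)) ∧
    u (pt x y z) 2 = -z⁻¹ * fc u ((x ^ 2 + y ^ 2) / z ^ 2) := by
  have hp : 0 < z ^ 2 := by nlinarith
  have hs : (x / (-z)) ^ 2 + (y / (-z)) ^ 2 = (x ^ 2 + y ^ 2) / z ^ 2 := by
    field_simp
  have k0 : 0 < (x ^ 2 + y ^ 2) / z ^ 2 := by positivity
  have k1 : (x ^ 2 + y ^ 2) / z ^ 2 < δ ^ 2 := by rw [div_lt_iff₀ hp]; exact h1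
  obtain ⟨i0, i1, i2⟩ := h.rep1 hs k0 k1
  have hh := h.hu_hom (pt (x / (-z)) (y / (-z)) (-1))
    (mem_sub h.hδ (by norm_num) (by rw [hs]; exact k0) (by rw [hs]; simpa using k1)) (-z) (by linarith)
  rw [← pt_scale hz] at hh
  rw [hh]
  simp only [PiLp.smul_apply, smul_eq_mul, i0, i1, i2]
  have hzn : z ≠ 0 := hz.ne
  generalize fa u ((x ^ 2 + y ^ 2) / z ^ 2) = A
  generalize fb u ((x ^ 2 + y ^ 2) / z ^ 2) = B
  generalize fc u ((x ^ 2 + y ^ 2) / z ^ 2) = C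
  refine ⟨?_, ?_, ?_⟩
  · field_simp; ring
  · field_simp; ring
  · field_simp

lemma Hyp.repq (h : Hyp δ u p) {x z : ℝ} (hx : 0 < x) (hz : z < 0)
    (h1 : x ^ 2 < δ ^ 2 * z ^ 2) : p (pt x 0 z) = (z ^ 2)⁻¹ * fq p (x ^ 2 / z ^ 2) := by
  have hp : 0 < z ^ 2 := by nlinarith
  have hs : √(x ^ 2 / z ^ 2) = x / (-z) := by
    rw [← neg_sq z, ← div_pow, Real.sqrt_sq]
    exact div_nonneg hx.le (by linarith)
  have k0 : 0 < x ^ 2 / z ^ 2 := by positivity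
  have k1 : x ^ 2 / z ^ 2 < δ ^ 2 := by rw [div_lt_iff₀ hp]; exact h1
  have e : (x / (-z)) ^ 2 = x ^ 2 / z ^ 2 := by field_simp
  have hh := h.hp_hom (pt (x / (-z)) 0 (-1))
    (mem_sub h.hδ (by norm_num) (by rw [e]; simpa using k0) (by rw [e]; simpa using k1)) (-z) (by linarith)
  have := pt_scale (x := x) (y := 0) hz
  rw [zero_div] at this
  rw [← this] at hh
  rw [hh, fq, hs, neg_sq]

lemma D2_of {f : ℝ → ℝ} {ε : ℝ} (hf : ContDiffOn ℝ 2 f (Set.Ioo 0 ε)) :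
    D2 ε f (deriv f) (deriv (deriv f)) := by
  constructor
  · intro s h0 h1
    have := hf.contDiffAt (Ioo_mem_nhds h0 h1)
    exact (this.differentiableAt (by simp)).hasDerivAt
  · intro s h0 h1
    have := hf.deriv_of_isOpen (m := 1) isOpen_Ioo (by norm_num)
    exact ((this.contDiffAt (Ioo_mem_nhds h0 h1)).differentiableAt (by simp)).hasDerivAt

lemma cv_cd (ε : ℝ) (n : WithTop ℕ∞) :
    ContDiffOn ℝ n (fun s : ℝ => pt (√s) 0 (-1)) (Set.Ioo 0 ε) := by
  rw [contDiffOn_euclidean]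
  intro i
  have : ContDiffOn ℝ n (fun s : ℝ => √s) (Set.Ioo 0 ε) :=
    contDiffOn_id.sqrt (fun s hs => hs.1.ne')
  fin_cases i
  · simpa using this
  · simpa using contDiffOn_const
  · simpa using contDiffOn_const

lemma cv_maps (hδ : 0 < δ) :
    Set.MapsTo (fun s : ℝ => pt (√s) 0 (-1)) (Set.Ioo 0 (δ ^ 2)) (cone3 (NSCap δ)) := by
  intro s hs
  have hq : √s ^ 2 = s := Real.sq_sqrt hs.1.le
  exact mem_sub hδ (by norm_num) (by rw [hq]; simpa using hs.1) (by rw [hq]; simpa using hs.2)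

lemma Hyp.cd (h : Hyp δ u p) (i : Fin 3) :
    ContDiffOn ℝ 2 (fun s : ℝ => u (pt (√s) 0 (-1)) i) (Set.Ioo 0 (δ ^ 2)) :=
  (contDiffOn_euclidean.1 h.hu_reg i).comp (cv_cd _ _) (cv_maps h.hδ)

lemma Hyp.cda (h : Hyp δ u p) (i : Fin 3) :
    ContDiffOn ℝ 2 (fun s : ℝ => u (pt (√s) 0 (-1)) i / √s) (Set.Ioo 0 (δ ^ 2)) := by
  have : ContDiffOn ℝ 2 (fun s : ℝ => √s) (Set.Ioo 0 (δ ^ 2)) :=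
    contDiffOn_id.sqrt (fun s hs => hs.1.ne')
  exact (h.cd i).div this (fun s hs => (Real.sqrt_pos.2 hs.1).ne')

lemma Hyp.rolle (h : Hyp δ u p) {s : ℝ} (h0 : 0 < s) (h1 : s < δ ^ 2) :
    ∃ x y : ℝ, x ^ 2 + y ^ 2 = s ∧ x * pd 1 p (pt x y (-1)) - y * pd 0 p (pt x y (-1)) = 0 := by
  have hq : √s ^ 2 = s := Real.sq_sqrt h0.le
  have hsum : ∀ φ : ℝ, (√s * Real.cos φ) ^ 2 + (√s * Real.sin φ) ^ 2 = s := fun φ => by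
    have := Real.sin_sq_add_cos_sq φ
    rw [mul_pow, mul_pow, hq]; linear_combination s * this
  have hd : ∀ φ : ℝ, HasDerivAt (fun φ => p (pt (√s * Real.cos φ) (√s * Real.sin φ) (-1)))
      (√s * Real.cos φ * pd 1 p (pt (√s * Real.cos φ) (√s * Real.sin φ) (-1)) -
      √s * Real.sin φ * pd 0 p (pt (√s * Real.cos φ) (√s * Real.sin φ) (-1))) φ := by
    intro φ
    have hX : pt (√s * Real.cos φ) (√s * Real.sin φ) (-1) ∈ Om (δ ^ 2) :=
      pt_mem (by norm_num) (by rw [hsum]; exact h0) (by rw [hsum]; simpa using h1)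
    have hdf : DifferentiableAt ℝ p (pt (√s * Real.cos φ) (√s * Real.sin φ) (-1)) :=
      ((h.hp_reg.mono (Om_sub h.hδ)).contDiffAt ((Om_open _).mem_nhds hX)).differentiableAt (by simp)
    have hc := hd_pt ((Real.hasDerivAt_cos φ).const_mul (√s)) ((Real.hasDerivAt_sin φ).const_mul (√s))
      (hasDerivAt_const φ (-1 : ℝ))
    refine (hdf.hasFDerivAt.comp_hasDerivAt φ hc).congr_deriv ?_
    have e : pt (√s * -Real.sin φ) (√s * Real.cos φ) 0 =
        (√s * -Real.sin φ) • e3 0 + (√s * Real.cos φ) • e3 1 := by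
      ext i; fin_cases i <;> simp [e3]
    rw [e, map_add, map_smul, map_smul]
    simp only [pd, smul_eq_mul]; ring
  obtain ⟨φ, -, hφ⟩ := exists_hasDerivAt_eq_zero (a := 0) (b := 2 * π) (by positivity)
    (fun φ _ => (hd φ).continuousAt.continuousWithinAt) (by simp) (fun φ _ => hd φ)
  exact ⟨_, _, hsum φ, hφ⟩

lemma Hyp.red (h : Hyp δ u p) : ∃ a1 a2 b1 b2 c1 c2 q1,
    Red (δ ^ 2) (fa u) a1 a2 (fb u) b1 b2 (fc u) c1 c2 (fq p) q1 := by
  have ha := D2_of (h.cda 0)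
  have hb := D2_of (h.cda 1)
  have hc := D2_of (h.cd 2)
  have hq : ∀ s, 0 < s → s < δ ^ 2 → HasDerivAt (fq p) (deriv (fq p) s) s := by
    intro s h0 h1
    have : ContDiffOn ℝ 1 (fq p) (Set.Ioo 0 (δ ^ 2)) :=
      h.hp_reg.comp (cv_cd _ _) (cv_maps h.hδ)
    exact ((this.contDiffAt (Ioo_mem_nhds h0 h1)).differentiableAt (by simp)).hasDerivAt
  change D2 (δ ^ 2) (fa u) (deriv (fa u)) (deriv (deriv (fa u))) at ha
  change D2 (δ ^ 2) (fb u) (deriv (fb u)) (deriv (deriv (fb u))) at hb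
  change D2 (δ ^ 2) (fc u) (deriv (fc u)) (deriv (deriv (fc u))) at hc
  generalize deriv (deriv (fa u)) = a2 at *
  generalize deriv (deriv (fb u)) = b2 at *
  generalize deriv (deriv (fc u)) = c2 at *
  generalize deriv (fa u) = a1 at *
  generalize deriv (fb u) = b1 at *
  generalize deriv (fc u) = c1 at *
  generalize deriv (fq p) = q1 at *
  have hC : ∀ i, ContDiffOn ℝ 2 (fun X => u X i) (Om (δ ^ 2)) := fun i =>
    contDiffOn_euclidean.1 (h.hu_reg.mono (Om_sub h.hδ)) i
  have hCp := h.hp_reg.mono (Om_sub h.hδ)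
  have U0 := fun x y s hs h0 h1 => ab_derivs (x := x) (y := y) (s := s) (f := fun X => u X 0) ha hb
    (fun x y z hz h0 h1 => (h.rep hz h0 h1).1) (hC 0) hs h0 h1
  have U1 := fun x y s hs h0 h1 => ab_derivs (x := x) (y := y) (s := s) (f := fun X => u X 1) hb ha.neg
    (fun x y z hz h0 h1 => by rw [(h.rep hz h0 h1).2.1]; ring) (hC 1) hs h0 h1
  have U2 := fun x y s hs h0 h1 => c_derivs (x := x) (y := y) (s := s) (f := fun X => u X 2) hc
    (fun x y z hz h0 h1 => (h.rep hz h0 h1).2.2) (hC 2) hs h0 h1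
  have Q := fun x s hx hs h1 => q_derivs (x := x) (s := s) (f := p) hq
    (fun x z hx hz h1 => h.repq hx hz h1) hCp hx hs h1
  have NS : ∀ x y s, x ^ 2 + y ^ 2 = s → 0 < s → s < δ ^ 2 → NSEq u p (pt x y (-1)) :=
    fun x y s hs h0 h1 => h.hNS _ (mem_sub h.hδ (by norm_num) (by rw [hs]; exact h0)
      (by rw [hs]; simpa using h1))
  have base : ∀ s, 0 < s → s < δ ^ 2 →
      (2 * fa u s + 2 * s * a1 s + fc u s + 2 * s * c1 s = 0) ∧
      (-(4 * s * a2 s + 8 * a1 s + 6 * fa u s + 14 * s * a1 s + 4 * s ^ 2 * a2 s)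
    + fa u s * (fa u s + 2 * s * a1 s) - fb u s ^ 2 + fc u s * (2 * fa u s + 2 * s * a1 s) + 2 * q1 s = 0) ∧
      (-(4 * s * c2 s + 4 * c1 s + 2 * fc u s + 10 * s * c1 s + 4 * s ^ 2 * c2 s)
    + 2 * s * fa u s * c1 s + fc u s * (fc u s + 2 * s * c1 s) + (2 * fq p s + 2 * s * q1 s) = 0) := by
    intro s h0 h1
    have hq : √s ^ 2 = s := Real.sq_sqrt h0.le
    have hq' : √s ^ 2 + 0 ^ 2 = s := by rw [hq]; ring
    have hq0 : 0 < √s := Real.sqrt_pos.2 h0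
    obtain ⟨x00, x01, x02, x0l⟩ := U0 _ _ _ hq' h0 h1
    obtain ⟨x10, x11, x12, x1l⟩ := U1 _ _ _ hq' h0 h1
    obtain ⟨x20, x21, x22, x2l⟩ := U2 _ _ _ hq' h0 h1
    obtain ⟨p0, p2⟩ := Q _ _ hq0 hq h1
    obtain ⟨E, D⟩ := NS _ _ _ hq' h0 h1
    obtain ⟨r0, r1, r2⟩ := h.rep1 hq' h0 h1
    have E0 := E 0
    have E2 := E 2
    rw [Fin.sum_univ_three] at E0 E2 D
    rw [x0l, x00, x01, x02, r0, r1, r2, p0] at E0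
    rw [x2l, x20, x21, x22, r0, r1, r2, p2] at E2
    rw [x00, x11, x22] at D
    generalize fa u s = A at *
    generalize fb u s = B at *
    generalize fc u s = C at *
    refine ⟨?_, ?_, ?_⟩
    · linear_combination D - 2 * a1 s * hq
    · refine mul_left_cancel₀ hq0.ne' ?_
      rw [mul_zero]
      linear_combination E0 - 2 * √s * A * a1 s * hq
    · linear_combination E2 - 2 * A * c1 s * hq
  refine ⟨a1, a2, b1, b2, c1, c2, q1, ha.d1, ha.d2, hb.d1, hb.d2, hc.d1, hc.d2, hq,
    fun s h0 h1 => (base s h0 h1).1, fun s h0 h1 => (base s h0 h1).2.1, ?_,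
    fun s h0 h1 => (base s h0 h1).2.2⟩
  intro s h0 h1
  obtain ⟨x, y, hs, hp⟩ := h.rolle h0 h1
  obtain ⟨x00, x01, x02, x0l⟩ := U0 _ _ _ hs h0 h1
  obtain ⟨x10, x11, x12, x1l⟩ := U1 _ _ _ hs h0 h1
  obtain ⟨E, D⟩ := NS _ _ _ hs h0 h1
  obtain ⟨r0, r1, r2⟩ := h.rep1 hs h0 h1
  have E0 := E 0
  have E1 := E 1
  rw [Fin.sum_univ_three] at E0 E1
  rw [x0l, x00, x01, x02, r0, r1, r2] at E0
  rw [x1l, x10, x11, x12, r0, r1, r2] at E1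
  refine mul_left_cancel₀ h0.ne' ?_
  rw [mul_zero]
  clear x00 x01 x02 x0l x10 x11 x12 x1l E D r0 r1 r2 U0 U1 U2 Q NS base
  generalize fa u s = A at *
  generalize fb u s = B at *
  generalize fc u s = C at *
  generalize a1 s = A1 at *
  generalize b1 s = B1 at *
  generalize a2 s = A2 at *
  generalize b2 s = B2 at *
  subst hs
  linear_combination x * E1 - y * E0 - hp

end TauProof
namespace TauProof

variable {δ : ℝ} {u : V3 → V3} {p : V3 → ℝ}

lemma sph_sq {y : V3} (hy : y ∈ sphere2) : y 0 ^ 2 + y 1 ^ 2 + y 2 ^ 2 = 1 := by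
  have h1 : ‖y‖ = 1 := by simpa [sphere2] using hy
  have hn : ‖y‖ ^ 2 = y 0 ^ 2 + y 1 ^ 2 + y 2 ^ 2 := by
    rw [EuclideanSpace.norm_sq_eq, Fin.sum_univ_three]; simp
  rw [← hn, h1]; norm_num

lemma S3_pt : S3 = pt 0 0 (-1) := by ext i; fin_cases i <;> simp [S3]

lemma sph_lt {y : V3} (hy : y ∈ sphere2) (hS : y ≠ S3) : -1 < y 2 := by
  have h := sph_sq hy
  by_contra hc
  push Not at hc
  have h2 : y 2 = -1 := by nlinarith [sq_nonneg (y 0), sq_nonneg (y 1)]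
  have h0 : y 0 = 0 := by nlinarith [sq_nonneg (y 0), sq_nonneg (y 1)]
  have h1 : y 1 = 0 := by nlinarith [sq_nonneg (y 0), sq_nonneg (y 1)]
  exact hS (by rw [S3_pt, ← pt_eta y, h0, h1, h2])

lemma t_tendsto : Tendsto (fun y : V3 => Real.artanh (-(y 2))) (𝓝[sphere2 \ {S3}] S3) atTop := by
  rw [Filter.tendsto_atTop]
  intro M
  have hc : Tendsto (fun y : V3 => -(y 2)) (𝓝[sphere2 \ {S3}] S3) (𝓝 1) := by
    have : Continuous (fun y : V3 => -(y 2)) := by fun_prop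
    have h := this.tendsto S3
    simp only [S3_pt, pt2, neg_neg] at h
    rw [S3_pt]
    exact h.mono_left nhdsWithin_le_nhds
  have hM : Real.tanh M < 1 := Real.tanh_lt_one M
  filter_upwards [hc.eventually_const_lt hM, self_mem_nhdsWithin] with y hy hy2
  have := sph_lt hy2.1 hy2.2
  rw [← Real.artanh_tanh M]
  exact Real.artanh_le_artanh (Real.neg_one_lt_tanh M) (by linarith) hy.le

lemma Hyp.pointwise (h : Hyp δ u p) {y : V3} (hy : y ∈ sphere2) (hS : y ≠ S3) {t : ℝ}
    (ht : t = Real.artanh (-(y 2))) (ht1 : 1 ≤ t) (ht2 : 16 / δ ^ 2 < t) :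
    -Real.tanh t = y 2 ∧ rho y * uTc u y = Ux (fa u) (fc u) (y 2) ∧
    0 ≤ rho y ∧ rho y ^ 2 = 1 - (y 2) ^ 2 ∧
    ‖u y‖ * rho y ≤ |vx (fa u) (fc u) (y 2)| * rho y + |Ux (fa u) (fc u) (y 2)| + |Wx (fb u) (y 2)| := by
  have hsq := sph_sq hy
  have hlt := sph_lt hy hS
  have hnorm : ‖y‖ = 1 := by simpa [sphere2] using hy
  have hz : y 2 < 0 := by
    by_contra hc
    push Not at hc
    have := Real.artanh_nonpos (x := -(y 2)) (by linarith)
    linarith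
  have e1 : -Real.tanh t = y 2 := by
    rw [ht, Real.tanh_artanh ⟨by linarith, by linarith⟩, neg_neg]
  have hsg := sg_small ht1 (by have := h.hδ; positivity) ht2
  rw [e1] at hsg
  have hz2 : 0 < y 2 ^ 2 := by nlinarith
  have hrsq : rho y ^ 2 = y 0 ^ 2 + y 1 ^ 2 := Real.sq_sqrt (by positivity)
  have hr0 : 0 ≤ rho y := Real.sqrt_nonneg _
  have hrsq2 : rho y ^ 2 = 1 - y 2 ^ 2 := by rw [hrsq]; linarith
  have hrp : 0 < rho y ^ 2 := by rw [hrsq2]; nlinarith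
  have hrp0 : 0 < rho y := by
    rcases hr0.lt_or_eq with h | h
    · exact h
    · rw [← h] at hrp; norm_num at hrp
  have hsgv : (y 0 ^ 2 + y 1 ^ 2) / y 2 ^ 2 = sg (y 2) := by
    rw [← hrsq, hrsq2, sg, sub_div, div_self hz2.ne']
  obtain ⟨r0, r1, r2⟩ := h.rep (x := y 0) (y := y 1) (z := y 2) hz (by rw [← hrsq]; exact hrp) (by
    rw [← div_lt_iff₀ hz2, hsgv]; exact hsg)
  rw [pt_eta, hsgv] at r0 r1 r2
  refine ⟨e1, ?_, hr0, hrsq2, ?_⟩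
  · rw [uTc, hnorm, Ux]
    have hzn := hz.ne
    have : rho y * ((u y 0 * y 0 * y 2 + u y 1 * y 1 * y 2) / (1 * rho y) - u y 2 * rho y / 1) =
        y 2 * (u y 0 * y 0 + u y 1 * y 1) - u y 2 * rho y ^ 2 := by
      field_simp
    rw [this, r0, r1, r2, ← hrsq2]
    generalize fa u (sg (y 2)) = A
    generalize fb u (sg (y 2)) = B
    generalize fc u (sg (y 2)) = C
    rw [hrsq]
    field_simp
    ring
  · have hnu : ‖u y‖ ^ 2 = u y 0 ^ 2 + u y 1 ^ 2 + u y 2 ^ 2 := by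
      rw [EuclideanSpace.norm_sq_eq, Fin.sum_univ_three]; simp
    have key : (‖u y‖ * rho y) ^ 2 = (vx (fa u) (fc u) (y 2) * rho y) ^ 2 +
        Ux (fa u) (fc u) (y 2) ^ 2 + Wx (fb u) (y 2) ^ 2 := by
      rw [mul_pow, mul_pow, hnu, r0, r1, r2, Ux, vx, Wx, ← hsgv, hsgv]
      generalize fa u (sg (y 2)) = A
      generalize fb u (sg (y 2)) = B
      generalize fc u (sg (y 2)) = C
      rw [sg, hrsq2]
      have hy1 : y 1 ^ 2 = 1 - y 2 ^ 2 - y 0 ^ 2 := by linarith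
      have hzn := hz.ne
      have : ((y 2 ^ 2)⁻¹ * (y 0 * A - y 1 * B)) ^ 2 + ((y 2 ^ 2)⁻¹ * (y 1 * A + y 0 * B)) ^ 2 =
        ((y 2 ^ 2)⁻¹) ^ 2 * (1 - y 2 ^ 2) * (A ^ 2 + B ^ 2) := by
        linear_combination ((y 2 ^ 2)⁻¹) ^ 2 * (A ^ 2 + B ^ 2) * hsq
      rw [this]
      field_simp
      ring
    have hv := abs_nonneg (vx (fa u) (fc u) (y 2))
    have hU := abs_nonneg (Ux (fa u) (fc u) (y 2))
    have hW := abs_nonneg (Wx (fb u) (y 2))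
    rw [← pow_le_pow_iff_left₀ (by positivity) (by positivity) two_ne_zero, key,
      ← sq_abs (Ux (fa u) (fc u) (y 2)), ← sq_abs (Wx (fb u) (y 2)), mul_pow,
      ← sq_abs (vx (fa u) (fc u) (y 2)), ← mul_pow]
    have hvr : 0 ≤ |vx (fa u) (fc u) (y 2)| * rho y := by positivity
    nlinarith [mul_nonneg hvr hU, mul_nonneg hvr hW, mul_nonneg hU hW]

theorem Hyp.final (h : Hyp δ u p) : ∃ τ : ℝ,
      Tendsto (fun x => rho x * uTc u x) (𝓝[sphere2 \ {S3}] S3) (𝓝 τ) ∧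
      ∃ C : ℝ, ∀ᶠ x in 𝓝[sphere2 \ {S3}] S3,
        ‖u x‖ * (rho x) ^ 2 * (Real.log (rho x)) ^ 2 ≤ C := by
  obtain ⟨a1, a2, b1, b2, c1, c2, q1, hred⟩ := h.red
  have hδ := h.hδ
  obtain ⟨τ, hτ, C, hC, T', hT', B⟩ := (hred.sys (by positivity)).main
  have hev : ∀ᶠ y : V3 in 𝓝[sphere2 \ {S3}] S3, T' ≤ Real.artanh (-(y 2)) :=
    t_tendsto.eventually_ge_atTop T'
  have k1 : 1 ≤ T' := (le_max_left _ _).trans hT'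
  have k2 : 16 / δ ^ 2 < T' := by
    have := (le_max_right _ _).trans hT'; linarith
  refine ⟨τ, (hτ.comp t_tendsto).congr' ?_, C + 4 * C, ?_⟩
  · filter_upwards [hev, self_mem_nhdsWithin] with y hy hy2
    obtain ⟨i1, i2, -⟩ := h.pointwise hy2.1 hy2.2 rfl (k1.trans hy) (k2.trans_le hy)
    simp only [Function.comp]
    rw [i1, i2]
  · filter_upwards [hev, self_mem_nhdsWithin] with y hy hy2
    obtain ⟨i1, -, i3, i4, i5⟩ := h.pointwise hy2.1 hy2.2 rfl (k1.trans hy) (k2.trans_le hy)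
    obtain ⟨B1, B2, B3⟩ := B _ hy
    obtain ⟨-, -, -, g4, g5⟩ := th_bd (k1.trans hy)
    have ht1 : 1 ≤ Real.artanh (-(y 2)) := k1.trans hy
    generalize Real.artanh (-(y 2)) = t at *
    rw [i1] at B1 B2 B3 g4 g5
    rw [← i4] at g4 g5
    generalize rho y = ρ at *
    have he : exp (-2 * t) = exp (-t) ^ 2 := by rw [← Real.exp_nat_mul]; ring_nf
    rw [he] at g4 g5
    have hep := exp_pos (-t)
    have hρ1 : exp (-t) ≤ ρ := (pow_le_pow_iff_left₀ hep.le i3 two_ne_zero).1 g4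
    have hρ2 : ρ ≤ 2 * exp (-t) :=
      (pow_le_pow_iff_left₀ i3 (by positivity) two_ne_zero).1 (by rw [mul_pow]; linarith)
    have hρp : 0 < ρ := hep.trans_le hρ1
    have hρ3 : ρ ≤ 1 := by nlinarith [sq_nonneg (y 2)]
    have hl1 : -t ≤ Real.log ρ := (Real.le_log_iff_exp_le hρp).2 hρ1
    have hl2 : Real.log ρ ≤ 0 := Real.log_nonpos i3 hρ3
    have hl : Real.log ρ ^ 2 ≤ t ^ 2 := by nlinarith
    have hvv : Ux (fa u) (fc u) (y 2) ^ 2 / 2 + 2 * y 2 * Ux (fa u) (fc u) (y 2) -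
        Lx (fa u) (fc u) (y 2) = -(vx (fa u) (fc u) (y 2) * ρ ^ 2) := by
      rw [Lx, i4]; ring
    rw [hvv, abs_neg, abs_mul, abs_of_nonneg (sq_nonneg ρ)] at B1
    generalize |vx (fa u) (fc u) (y 2)| = v at *
    have hU := abs_nonneg (Ux (fa u) (fc u) (y 2))
    have hW := abs_nonneg (Wx (fb u) (y 2))
    generalize |Ux (fa u) (fc u) (y 2)| = U at *
    generalize |Wx (fb u) (y 2)| = W at *
    calc ‖u y‖ * ρ ^ 2 * Real.log ρ ^ 2 ≤ ‖u y‖ * ρ ^ 2 * t ^ 2 := by gcongr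
      _ = (‖u y‖ * ρ) * (ρ * t ^ 2) := by ring
      _ ≤ (v * ρ + U + W) * (ρ * t ^ 2) := by gcongr
      _ = v * ρ ^ 2 * t ^ 2 + (U + W) * t ^ 2 * ρ := by ring
      _ ≤ v * ρ ^ 2 * t ^ 2 + (U + W) * t ^ 2 * (2 * exp (-t)) := by gcongr
      _ = v * ρ ^ 2 * t ^ 2 + 2 * (U * exp (-t) * t ^ 2) + 2 * (W * exp (-t) * t ^ 2) := by ring
      _ ≤ C + 4 * C := by linarith

end TauProof

/-- existence of `τ = lim |x'| u_θ` and the bound `|u| = O(1/(|x'| ln|x'|)²)`. -/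
theorem tau_exists_and_universal_bound (δ : ℝ) (hδ : 0 < δ) (u : V3 → V3) (p : V3 → ℝ)
    (hu_hom : ∀ x ∈ cone3 (NSCap δ), ∀ lam : ℝ, 0 < lam → u (lam • x) = lam⁻¹ • u x)
    (hp_hom : ∀ x ∈ cone3 (NSCap δ), ∀ lam : ℝ, 0 < lam → p (lam • x) = (lam ^ 2)⁻¹ * p x)
    (hu_reg : ContDiffOn ℝ 2 u (cone3 (NSCap δ)))
    (hp_reg : ContDiffOn ℝ 1 p (cone3 (NSCap δ)))
    (haxi : AxisymOn u (cone3 (NSCap δ)))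
    (hNS : ∀ x ∈ cone3 (NSCap δ), NSEq u p x) :
    ∃ τ : ℝ,
      Tendsto (fun x => rho x * uTc u x) (𝓝[sphere2 \ {S3}] S3) (𝓝 τ) ∧
      ∃ C : ℝ, ∀ᶠ x in 𝓝[sphere2 \ {S3}] S3,
        ‖u x‖ * (rho x) ^ 2 * (Real.log (rho x)) ^ 2 ≤ C := by
  exact TauProof.Hyp.final ⟨hδ, hu_hom, hp_hom, hu_reg, hp_reg, haxi, hNS⟩
end
end
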